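/- arXiv:2511.02273 — 3 statements merged into one kernel-verified Lean document; each statement's English description precedes it below -/
import Mathlib

section
/- Assume 0 ≤ γ ≤ 2, (H1), and (H2). Let f be a conservative mild solution of the Boltzmann–Fermi–Dirac equation with initial datum f₀, and assume S(f₀) > 0. Then for each t > 0 there exist constants C₁(t) > 0 and C₂(t) < ∞ such that, for almost every v ∈ ℝ³, C₁(t) e^{−C₂(t)|v|²} ≤ f(t,v) ≤ 1 − C₁(t) e^{−C₂(t)|v|^{p}} with p = 2·(ln 3)/(ln 2); moreover, for every 1 ≤ T < ∞, inf_{T^{−1} ≤ t ≤ T} C₁(t) > 0 and sup_{T^{−1} ≤ t ≤ T} C₂(t) < ∞. -/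
noncomputable section

open MeasureTheory Real Set
open scoped RealInnerProductSpace

/-- `ℝ³` as a Euclidean space. -/
abbrev R3 : Type := EuclideanSpace ℝ (Fin 3)

/-- The unit sphere `𝕊²` in `ℝ³`. -/
abbrev S2 : Type := Metric.sphere (0 : R3) 1

/-- The surface measure on the unit sphere in `ℝ³` (total mass `4π`). -/
def sphMeasure : Measure S2 := Measure.toSphere (volume : Measure R3)

/-- Post-collision velocity `v' = (v+v_*)/2 + (|v-v_*|/2)σ`. -/
def vOut (v w : R3) (σ : S2) : R3 := (2⁻¹ : ℝ) • (v + w) + (‖v - w‖ / 2) • (σ : R3)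

/-- Post-collision velocity `v'_* = (v+v_*)/2 - (|v-v_*|/2)σ`. -/
def vOutStar (v w : R3) (σ : S2) : R3 := (2⁻¹ : ℝ) • (v + w) - (‖v - w‖ / 2) • (σ : R3)

/-- `cos θ = ((v - v_*)/|v - v_*|) · σ`. -/
def cosAngle (v w : R3) (σ : S2) : ℝ := ⟪‖v - w‖⁻¹ • (v - w), (σ : R3)⟫

/-- The collision kernel `B(v - v_*, σ) = |v - v_*|^γ b(cos θ)`. -/
def Bker (γ : ℝ) (b : ℝ → ℝ) (v w : R3) (σ : S2) : ℝ := ‖v - w‖ ^ γ * b (cosAngle v w σ)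

/-- Grad's angular cutoff assumption (H1), with the standing assumptions on `b`:
`b` is measurable, nonnegative, symmetric (`b(cos(π-θ)) = b(cos θ)`), and
`0 < C_b = 2π∫₀^π b(cos θ) sin θ dθ < ∞`. -/
structure GradCutoff (b : ℝ → ℝ) : Prop where
  measurable : Measurable b
  nonneg : ∀ x : ℝ, 0 ≤ b x
  symm : ∀ θ : ℝ, b (Real.cos (π - θ)) = b (Real.cos θ)
  integrable : IntervalIntegrable (fun θ : ℝ => b (Real.cos θ) * Real.sin θ) volume 0 π
  pos : 0 < ∫ θ in (0:ℝ)..π, b (Real.cos θ) * Real.sin θ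

/-- `C_b = 2π ∫₀^π b(cos θ) sin θ dθ`. -/
def Cb (b : ℝ → ℝ) : ℝ := 2 * π * ∫ θ in (0:ℝ)..π, b (Real.cos θ) * Real.sin θ

/-- `C_{b,2} = 2π ∫₀^π b(cos θ) sin³ θ dθ`. -/
def Cb2 (b : ℝ → ℝ) : ℝ := 2 * π * ∫ θ in (0:ℝ)..π, b (Real.cos θ) * Real.sin θ ^ 3

/-- `φ(ε) = ∫_{𝕊²} b(cos θ)(1_{0<θ<ε} + 1_{π-ε<θ<π}) dσ`,
written via the polar-angle parametrization of the sphere. -/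
def phiAng (b : ℝ → ℝ) (ε : ℝ) : ℝ :=
  2 * π * ((∫ θ in (0:ℝ)..ε, b (Real.cos θ) * Real.sin θ)
    + ∫ θ in (π - ε)..π, b (Real.cos θ) * Real.sin θ)

/-- Weighted `L¹` norm `‖f‖_{1,s} = ∫ |f(v)| (1+|v|²)^{s/2} dv`. -/
def wnorm (s : ℝ) (f : R3 → ℝ) : ℝ := ∫ v : R3, |f v| * (1 + ‖v‖ ^ 2) ^ (s / 2)

/-- Membership in the weighted space `L¹_s`. -/
def MemL1s (s : ℝ) (f : R3 → ℝ) : Prop :=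
  Integrable (fun v : R3 => |f v| * (1 + ‖v‖ ^ 2) ^ (s / 2))

/-- The Boltzmann–Fermi–Dirac collision operator `Q_FD(f,f)`. -/
def QFD (γ : ℝ) (b : ℝ → ℝ) (f : R3 → ℝ) (v : R3) : ℝ :=
  ∫ w : R3, ∫ σ : S2, Bker γ b v w σ *
      (f (vOut v w σ) * f (vOutStar v w σ) * (1 - f v) * (1 - f w)
        - f v * f w * (1 - f (vOut v w σ)) * (1 - f (vOutStar v w σ))) ∂sphMeasure

/-- `Q₁(f₁,f₂,f₃)(v) = ∫∫ B f₁(v') f₂(v'_*) f₃(v_*) dσ dv_*`. -/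
def Q1 (γ : ℝ) (b : ℝ → ℝ) (f₁ f₂ f₃ : R3 → ℝ) (v : R3) : ℝ :=
  ∫ w : R3, ∫ σ : S2, Bker γ b v w σ *
      (f₁ (vOut v w σ) * f₂ (vOutStar v w σ) * f₃ w) ∂sphMeasure

/-- `L_FD(f, 1-f, 1-f)(v) = ∫∫ B f(v_*)(1-f(v'))(1-f(v'_*)) dσ dv_*`. -/
def LFD (γ : ℝ) (b : ℝ → ℝ) (f : R3 → ℝ) (v : R3) : ℝ :=
  ∫ w : R3, ∫ σ : S2, Bker γ b v w σ *
      (f w * (1 - f (vOut v w σ)) * (1 - f (vOutStar v w σ))) ∂sphMeasure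

/-- The Fermi–Dirac entropy `S(f)` (with `0·ln 0 = 0`, as `Real.log 0 = 0`). -/
def entropy (f : R3 → ℝ) : ℝ :=
  -∫ v : R3, (f v * Real.log (f v) + (1 - f v) * Real.log (1 - f v))

/-- A conservative mild solution of the Boltzmann–Fermi–Dirac equation with
initial datum `f₀`. -/
structure IsFDSolution (γ : ℝ) (b : ℝ → ℝ) (f₀ : R3 → ℝ) (f : ℝ → R3 → ℝ) : Prop where
  measurable : ∀ t : ℝ, Measurable (f t)
  nonneg : ∀ t : ℝ, 0 ≤ t → ∀ v : R3, 0 ≤ f t v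
  le_one : ∀ t : ℝ, 0 ≤ t → ∀ v : R3, f t v ≤ 1
  memL12 : ∀ t : ℝ, 0 ≤ t → MemL1s 2 (f t)
  contL12 : ∀ t : ℝ, 0 ≤ t → ∀ ε : ℝ, 0 < ε → ∃ δ > 0, ∀ s : ℝ, 0 ≤ s →
      |s - t| < δ → wnorm 2 (fun v => f s v - f t v) < ε
  mild : ∃ Z : Set R3, volume Z = 0 ∧ ∀ t : ℝ, 0 ≤ t → ∀ v : R3, v ∉ Z →
      f t v = f₀ v + ∫ τ in (0:ℝ)..t, QFD γ b (f τ) v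
  mass : ∀ t : ℝ, 0 ≤ t → ∫ v : R3, f t v = ∫ v : R3, f₀ v
  momentum : ∀ t : ℝ, 0 ≤ t → ∫ v : R3, f t v • v = ∫ v : R3, f₀ v • v
  energy : ∀ t : ℝ, 0 ≤ t → ∫ v : R3, f t v * ‖v‖ ^ 2 = ∫ v : R3, f₀ v * ‖v‖ ^ 2

open scoped ENNReal Pointwise

instance : IsFiniteMeasure sphMeasure := by unfold sphMeasure; infer_instance

lemma lint_cyl (G : ℝ → ℝ → ℝ≥0∞) (hG : Measurable (Function.uncurry G)) :
    ∫⁻ x : R3, G (x 0) ‖x‖ = ∫⁻ a : ℝ, ∫⁻ q : ℝ × ℝ, G a (√(a^2 + (q.1^2 + q.2^2))) := by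
  have h1 := (EuclideanSpace.volume_preserving_symm_measurableEquiv_toLp (Fin 3))
  have h2 := volume_preserving_piFinSuccAbove (fun _ : Fin 3 => ℝ) 0
  have h3 : MeasurePreserving (Prod.map (id : ℝ → ℝ) (@MeasurableEquiv.finTwoArrow ℝ _))
      (volume.prod volume) (volume.prod volume) :=
    (MeasurePreserving.id volume).prod (volume_preserving_finTwoArrow ℝ)
  have h4 := h3.comp (h2.comp h1)
  have hm : Measurable (fun p : ℝ × (ℝ × ℝ) => G p.1 (√(p.1^2 + (p.2.1^2 + p.2.2^2)))) := by
    apply hG.comp (f := fun p : ℝ × (ℝ × ℝ) => (p.1, √(p.1^2 + (p.2.1^2 + p.2.2^2))))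
    fun_prop
  have h5 := h4.lintegral_comp hm
  rw [lintegral_prod _ hm.aemeasurable] at h5
  rw [← h5]
  congr 1
  ext x
  simp only [EuclideanSpace.norm_eq]
  have e : ∑ i, ‖x.ofLp i‖ ^ 2 = (x 0)^2 + ((x 1)^2 + (x 2)^2) := by
    simp only [Fin.sum_univ_three, Real.norm_eq_abs, sq_abs]
    ring
  rw [e]
  rfl

lemma lint_pol1 (g : ℝ → ℝ≥0∞) (hg : Measurable g) :
    ∫⁻ q : ℝ × ℝ, g (q.1^2 + q.2^2)
      = ENNReal.ofReal (2*π) * ∫⁻ r in Ioi (0:ℝ), ENNReal.ofReal r * g (r^2) := by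
  rw [← lintegral_comp_polarCoord_symm]
  have : ∀ p : ℝ × ℝ, ENNReal.ofReal p.1 • g ((polarCoord.symm p).1^2 + (polarCoord.symm p).2^2)
      = ENNReal.ofReal p.1 * g (p.1^2) := by
    intro p
    simp only [polarCoord_symm_apply, smul_eq_mul]
    congr 2
    nlinarith [Real.sin_sq_add_cos_sq p.2]
  simp_rw [this]
  rw [polarCoord_target, Measure.volume_eq_prod, ← Measure.prod_restrict, lintegral_prod]
  · simp only [lintegral_const]
    simp
    rw [lintegral_mul_const', mul_comm]
    · congr 1
      rw [← two_mul, ENNReal.ofReal_mul (by norm_num), ENNReal.ofReal_ofNat]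
    · exact ENNReal.ofReal_ne_top
  · fun_prop

lemma lint_axis (G : ℝ → ℝ → ℝ≥0∞) (hG : Measurable (Function.uncurry G)) :
    ∫⁻ x : R3, G (x 0) ‖x‖ = ENNReal.ofReal (2*π) * ∫⁻ p in Ioi (0:ℝ) ×ˢ Ioo (0:ℝ) π,
       ENNReal.ofReal (p.1^2 * sin p.2) * G (p.1 * cos p.2) p.1 := by
  rw [lint_cyl G hG]
  have hGa : ∀ a, Measurable (fun s => G a (√(a^2+s))) := by
    intro a
    apply hG.comp (f := fun s => (a, √(a^2+s)))
    fun_prop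
  have : ∀ a : ℝ, ∫⁻ q : ℝ × ℝ, G a (√(a^2 + (q.1^2 + q.2^2)))
     = ENNReal.ofReal (2*π) * ∫⁻ r in Ioi (0:ℝ), ENNReal.ofReal r * G a (√(a^2+r^2)) := by
    intro a
    exact lint_pol1 (fun s => G a (√(a^2+s))) (hGa a)
  simp_rw [this]
  have hm : Measurable (fun p : ℝ × ℝ => ENNReal.ofReal p.2 * G p.1 (√(p.1^2+p.2^2))) := by
    apply Measurable.mul (by fun_prop)
    apply hG.comp (f := fun p : ℝ × ℝ => (p.1, √(p.1^2+p.2^2)))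
    fun_prop
  rw [lintegral_const_mul' _ _ ENNReal.ofReal_ne_top]
  congr 1
  have h2 : ∫⁻ a : ℝ, ∫⁻ r in Ioi (0:ℝ), ENNReal.ofReal r * G a (√(a^2+r^2))
      = ∫⁻ p : ℝ × ℝ, (univ ×ˢ Ioi (0:ℝ)).indicator
          (fun p : ℝ × ℝ => ENNReal.ofReal p.2 * G p.1 (√(p.1^2+p.2^2))) p := by
    rw [lintegral_indicator (MeasurableSet.univ.prod measurableSet_Ioi), Measure.volume_eq_prod,
      ← Measure.prod_restrict, lintegral_prod _ hm.aemeasurable]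
    simp
  rw [h2, ← lintegral_comp_polarCoord_symm, polarCoord_target]
  rw [← lintegral_indicator (by measurability), ← lintegral_indicator (by measurability)]
  congr 1
  ext p
  by_cases hp : p ∈ Ioi (0:ℝ) ×ˢ Ioo (0:ℝ) π
  · have hp1 : 0 < p.1 := hp.1
    have hp' : p ∈ Ioi (0:ℝ) ×ˢ Ioo (-π) π :=
      ⟨hp.1, lt_trans (neg_neg_of_pos Real.pi_pos) hp.2.1, hp.2.2⟩
    rw [indicator_of_mem hp, indicator_of_mem hp', polarCoord_symm_apply, indicator_of_mem]
    · have hs : 0 < sin p.2 := Real.sin_pos_of_pos_of_lt_pi hp.2.1 hp.2.2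
      have : √((p.1 * cos p.2)^2 + (p.1 * sin p.2)^2) = p.1 := by
        rw [show (p.1 * cos p.2)^2 + (p.1 * sin p.2)^2 = p.1^2 by
          nlinarith [Real.sin_sq_add_cos_sq p.2], Real.sqrt_sq hp1.le]
      simp only [this, smul_eq_mul]
      rw [← mul_assoc, ← ENNReal.ofReal_mul hp1.le]
      congr 2; ring
    · exact ⟨mem_univ _, mul_pos hp1 (Real.sin_pos_of_pos_of_lt_pi hp.2.1 hp.2.2)⟩
  · rw [indicator_of_notMem hp]
    by_cases hp' : p ∈ Ioi (0:ℝ) ×ˢ Ioo (-π) π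
    · rw [indicator_of_mem hp', polarCoord_symm_apply, indicator_of_notMem, smul_zero]
      rintro ⟨-, h⟩
      have hp1 : 0 < p.1 := hp'.1
      simp only [mem_Ioi] at h
      have h0 : p.2 ≤ 0 := by
        by_contra h0
        exact hp ⟨hp'.1, not_le.mp h0, hp'.2.2⟩
      have : sin p.2 ≤ 0 := Real.sin_nonpos_of_nonpos_of_neg_pi_le h0 hp'.2.1.le
      nlinarith
    · rw [indicator_of_notMem hp']

lemma lint_dir (k : R3) (hk : ‖k‖ = 1) (G : ℝ → ℝ → ℝ≥0∞) (hG : Measurable (Function.uncurry G)) :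
    ∫⁻ x : R3, G ⟪k, x⟫ ‖x‖ = ENNReal.ofReal (2*π) * ∫⁻ p in Ioi (0:ℝ) ×ˢ Ioo (0:ℝ) π,
       ENNReal.ofReal (p.1^2 * sin p.2) * G (p.1 * cos p.2) p.1 := by
  rw [← lint_axis G hG]
  obtain ⟨B, hB⟩ := Orthonormal.exists_orthonormalBasis_extension_of_card_eq (𝕜 := ℝ) (E := R3)
    (ι := Fin 3) (by simp) (v := fun _ => k) (s := {0}) (by
      constructor
      · intro i; simpa using hk
      · intro i j hij
        exact absurd (Subsingleton.elim i j) hij)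
  have hB0 : B 0 = k := hB 0 rfl
  have h := B.measurePreserving_repr.lintegral_comp (f := fun x : R3 => G (x 0) ‖x‖) (by
    apply hG.comp (f := fun x : R3 => (x 0, ‖x‖))
    fun_prop)
  rw [← h]
  congr 1
  ext x
  rw [B.repr_apply_apply, hB0, LinearIsometryEquiv.norm_map]

lemma sph_preimage (k : R3) (hk : ‖k‖ = 1) (s : Set ℝ) (hs : MeasurableSet s) :
    sphMeasure {σ : S2 | ⟪k, (σ : R3)⟫ ∈ s} =
      ENNReal.ofReal (2*π) * ∫⁻ θ in Ioo (0:ℝ) π, ENNReal.ofReal (sin θ) *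
        s.indicator 1 (cos θ) := by
  have hms : MeasurableSet {σ : S2 | ⟪k, (σ : R3)⟫ ∈ s} := by
    have : Measurable (fun σ : S2 => ⟪k, (σ : R3)⟫) := by fun_prop
    exact this hs
  rw [sphMeasure, Measure.toSphere_apply' _ hms]
  set A : Set R3 := Ioo (0:ℝ) 1 • ((Subtype.val : S2 → R3) '' {σ : S2 | ⟪k, (σ : R3)⟫ ∈ s}) with hA
  let G : ℝ → ℝ → ℝ≥0∞ := fun a n => (Ioo (0:ℝ) 1).indicator 1 n * s.indicator 1 (a / n)
  have hGm : Measurable (Function.uncurry G) := by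
    apply Measurable.mul
    · exact (measurable_one.indicator measurableSet_Ioo).comp measurable_snd
    · exact (measurable_one.indicator hs).comp (measurable_fst.div measurable_snd)
  have hAeq : A = {x : R3 | ‖x‖ ∈ Ioo (0:ℝ) 1 ∧ ⟪k, x⟫ / ‖x‖ ∈ s} := by
    ext x
    constructor
    · rintro ⟨r, hr, y, ⟨σ, hσ, rfl⟩, rfl⟩
      have hσ1 : ‖(σ : R3)‖ = 1 := by simpa using σ.2
      simp only [mem_ofPred_eq, smul_eq_mul] at hσ ⊢
      have hn : ‖r • (σ : R3)‖ = r := by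
        rw [norm_smul, hσ1, mul_one, Real.norm_of_nonneg hr.1.le]
      refine ⟨by rw [hn]; exact hr, ?_⟩
      rw [hn, inner_smul_right, mul_div_cancel_left₀ _ hr.1.ne']
      exact hσ
    · rintro ⟨h1, h2⟩
      have hx : ‖x‖ ≠ 0 := h1.1.ne'
      refine ⟨‖x‖, h1, ‖x‖⁻¹ • x, ⟨⟨‖x‖⁻¹ • x, ?_⟩, ?_, rfl⟩, ?_⟩
      · simp [norm_smul, hx]
      · simp only [mem_ofPred_eq, inner_smul_right]
        rwa [div_eq_inv_mul] at h2
      · show ‖x‖ • (‖x‖⁻¹ • x) = x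
        rw [smul_smul, mul_inv_cancel₀ hx, one_smul]
  have hAm : MeasurableSet A := by
    rw [hAeq]
    apply MeasurableSet.inter
    · exact measurable_norm measurableSet_Ioo
    · have : Measurable (fun x : R3 => ⟪k, x⟫ / ‖x‖) := by fun_prop
      exact this hs
  have hvol : volume A = ∫⁻ x : R3, G ⟪k, x⟫ ‖x‖ := by
    rw [← lintegral_indicator_one hAm]
    congr 1
    ext x
    simp only [G]
    by_cases h1 : ‖x‖ ∈ Ioo (0:ℝ) 1
    · by_cases h2 : ⟪k, x⟫ / ‖x‖ ∈ s
      · rw [indicator_of_mem h1, indicator_of_mem h2, indicator_of_mem (by rw [hAeq]; exact ⟨h1, h2⟩)]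
        simp
      · rw [indicator_of_notMem h2, indicator_of_notMem (by rw [hAeq]; exact fun h => h2 h.2)]
        simp
    · rw [indicator_of_notMem h1, indicator_of_notMem (by rw [hAeq]; exact fun h => h1 h.1)]
      simp
  rw [hvol, lint_dir k hk G hGm]
  have h3 : ∫⁻ p in Ioi (0:ℝ) ×ˢ Ioo (0:ℝ) π,
       ENNReal.ofReal (p.1^2 * sin p.2) * G (p.1 * cos p.2) p.1
       = ∫⁻ p in Ioi (0:ℝ) ×ˢ Ioo (0:ℝ) π,
         ((Ioo (0:ℝ) 1).indicator 1 p.1 * ENNReal.ofReal (p.1^2)) *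
          (ENNReal.ofReal (sin p.2) * s.indicator 1 (cos p.2)) := by
    apply setLIntegral_congr_fun (measurableSet_Ioi.prod measurableSet_Ioo)
    intro p hp
    have hp1 : 0 < p.1 := hp.1
    simp only [G]
    rw [mul_div_cancel_left₀ _ hp1.ne', ENNReal.ofReal_mul (by positivity)]
    ring
  rw [h3, Measure.volume_eq_prod, ← Measure.prod_restrict, lintegral_prod_mul
    (f := fun r : ℝ => (Ioo (0:ℝ) 1).indicator 1 r * ENNReal.ofReal (r^2))
    (g := fun θ : ℝ => ENNReal.ofReal (sin θ) * s.indicator 1 (cos θ))]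
  · have h4 : ∫⁻ r in Ioi (0:ℝ), (Ioo (0:ℝ) 1).indicator 1 r * ENNReal.ofReal (r^2) = ENNReal.ofReal (1/3) := by
      have : ∀ r : ℝ, (Ioo (0:ℝ) 1).indicator (1 : ℝ → ℝ≥0∞) r * ENNReal.ofReal (r^2) =
        (Ioo (0:ℝ) 1).indicator (fun r => ENNReal.ofReal (r^2)) r := by
        intro r; simp [indicator]
      simp_rw [this]
      rw [lintegral_indicator measurableSet_Ioo, Measure.restrict_restrict measurableSet_Ioo,
        inter_eq_left.mpr (fun x hx => hx.1), Measure.restrict_congr_set Ioo_ae_eq_Ioc,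
        ← ofReal_integral_eq_lintegral_ofReal (intervalIntegral.intervalIntegrable_pow 2).1,
        ← intervalIntegral.integral_of_le zero_le_one]
      · norm_num
      · exact Filter.Eventually.of_forall (fun r => by positivity)
    rw [h4]
    have : ((Module.finrank ℝ R3 : ℕ) : ℝ≥0∞) * ENNReal.ofReal (1/3) = 1 := by
      rw [show (Module.finrank ℝ R3) = 3 by simp, ← ENNReal.ofReal_natCast, ← ENNReal.ofReal_mul (by positivity)]
      norm_num
    calc _ = (((Module.finrank ℝ R3 : ℕ) : ℝ≥0∞) * ENNReal.ofReal (1/3)) * (ENNReal.ofReal (2*π) * ∫⁻ θ in Ioo (0:ℝ) π, ENNReal.ofReal (sin θ) *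
        s.indicator 1 (cos θ)) := by ring
      _ = _ := by rw [this, one_mul]
  · exact ((measurable_one.indicator measurableSet_Ioo).mul (by fun_prop)).aemeasurable
  · refine (Measurable.mul (by fun_prop) ?_).aemeasurable
    exact (measurable_one.indicator hs).comp Real.measurable_cos

/-- Archimedes / spherical coordinates formula. -/
lemma sph_lint (k : R3) (hk : ‖k‖ = 1) (F : ℝ → ℝ≥0∞) (hF : Measurable F) :
    ∫⁻ σ : S2, F ⟪k, (σ : R3)⟫ ∂sphMeasure =
      ENNReal.ofReal (2*π) * ∫⁻ θ in Ioo (0:ℝ) π, ENNReal.ofReal (sin θ) * F (cos θ) := by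
  have hkm : Measurable (fun σ : S2 => ⟪k, (σ : R3)⟫) := by fun_prop
  let D : ℝ → ℝ≥0∞ := fun θ => ENNReal.ofReal (sin θ)
  have hD : Measurable D := by fun_prop
  have hmap : Measure.map (fun σ : S2 => ⟪k, (σ : R3)⟫) sphMeasure =
      ENNReal.ofReal (2*π) • Measure.map cos ((volume.restrict (Ioo (0:ℝ) π)).withDensity D) := by
    ext s hs
    rw [Measure.map_apply hkm hs, Measure.smul_apply, Measure.map_apply Real.measurable_cos hs,
      withDensity_apply _ (Real.measurable_cos hs)]
    have := sph_preimage k hk s hs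
    rw [preimage, this, smul_eq_mul, ← lintegral_indicator (Real.measurable_cos hs)]
    congr 2
    ext θ
    by_cases h : cos θ ∈ s
    · rw [indicator_of_mem h, indicator_of_mem (by exact h)]; simp [D]
    · rw [indicator_of_notMem h, indicator_of_notMem (by exact h)]; simp
  have h1 := lintegral_map (μ := sphMeasure) hF hkm
  rw [← h1, hmap, lintegral_smul_measure, lintegral_map hF Real.measurable_cos,
    lintegral_withDensity_eq_lintegral_mul _ hD (g := fun θ => F (cos θ)) (hF.comp Real.measurable_cos)]
  rfl


/-- The map `z ↦ (z + |z| e)/2`. -/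
def Tm (e z : R3) : R3 := (2⁻¹ : ℝ) • (z + ‖z‖ • e)

def cosz (z e : R3) : ℝ := ⟪‖z‖⁻¹ • z, e⟫

lemma cosz_eq (z e : R3) : cosz z e = ‖z‖⁻¹ * ⟪z, e⟫ := by
  unfold cosz; rw [real_inner_smul_left]

lemma Tm_inner {e z : R3} (he : ‖e‖ = 1) (hz : z ≠ 0) :
    ⟪Tm e z, e⟫ = ‖z‖ * (1 + cosz z e) / 2 := by
  have hz' : ‖z‖ ≠ 0 := norm_ne_zero_iff.mpr hz
  rw [cosz_eq]
  unfold Tm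
  rw [real_inner_smul_left, inner_add_left, real_inner_smul_left, real_inner_self_eq_norm_sq, he]
  field_simp
  ring

lemma Tm_norm {e z : R3} (he : ‖e‖ = 1) (hz : z ≠ 0) :
    ‖Tm e z‖ ^ 2 = ‖z‖ ^ 2 * (1 + cosz z e) / 2 := by
  have hz' : ‖z‖ ≠ 0 := norm_ne_zero_iff.mpr hz
  rw [cosz_eq]
  unfold Tm
  rw [norm_smul, mul_pow, norm_add_sq_real, norm_smul, real_inner_smul_right, he]
  simp
  field_simp
  ring

lemma cosz_le {e z : R3} (he : ‖e‖ = 1) : cosz z e ≤ 1 := by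
  unfold cosz
  refine (real_inner_le_norm _ _).trans ?_
  rw [he, norm_smul, mul_one, norm_inv, norm_norm]
  exact inv_mul_le_one

lemma neg_one_le_cosz {e z : R3} (he : ‖e‖ = 1) : -1 ≤ cosz z e := by
  have h : cosz z (-e) ≤ 1 := cosz_le (by rwa [norm_neg])
  have : cosz z (-e) = - cosz z e := by unfold cosz; rw [inner_neg_right]
  linarith

lemma cosz_neg (z e : R3) : cosz z (-e) = - cosz z e := by unfold cosz; rw [inner_neg_right]

lemma Tm_injOn {e : R3} (he : ‖e‖ = 1) : InjOn (Tm e) {z | z ≠ 0 ∧ -1 < cosz z e} := by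
  have key : ∀ z : R3, z ≠ 0 → -1 < cosz z e → ‖z‖ = ‖Tm e z‖ ^ 2 / ⟪Tm e z, e⟫ := by
    intro z hz hc
    have hz' : 0 < ‖z‖ := norm_pos_iff.mpr hz
    rw [Tm_norm he hz, Tm_inner he hz]
    have : 0 < 1 + cosz z e := by linarith
    field_simp
  have key2 : ∀ z : R3, z = (2:ℝ) • Tm e z - ‖z‖ • e := by
    intro z; unfold Tm; rw [smul_smul]; norm_num
  rintro z ⟨hz, hzc⟩ w ⟨hw, hwc⟩ h
  have : ‖z‖ = ‖w‖ := by rw [key z hz hzc, key w hw hwc, h]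
  rw [key2 z, key2 w, h, this]

lemma Tm_hasFDeriv {e z : R3} (hz : z ≠ 0) :
    HasFDerivAt (Tm e) ((2⁻¹ : ℝ) • (ContinuousLinearMap.id ℝ R3 +
      (innerSL ℝ (‖z‖⁻¹ • z)).smulRight e)) z := by
  have h1 : HasFDerivAt (fun z : R3 => ‖z‖) (innerSL ℝ (‖z‖⁻¹ • z)) z := by
    have h2 := (hasStrictFDerivAt_norm_sq z).hasFDerivAt
    have h3 := h2.sqrt (by simpa using hz)
    simp only [Real.sqrt_sq (norm_nonneg _)] at h3
    have hz' : ‖z‖ ≠ 0 := norm_ne_zero_iff.mpr hz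
    have h4 : innerSL ℝ (‖z‖⁻¹ • z) = (1 / (2 * ‖z‖)) • (2 • innerSL ℝ z) := by
      rw [map_smul, two_smul, ← two_smul ℝ, smul_smul]
      congr 1
      field_simp
    rw [h4]
    exact h3
  exact ((hasFDerivAt_id z).add (h1.smul_const e)).const_smul (2⁻¹ : ℝ)

lemma Tm_det (e z : R3) :
    ((2⁻¹ : ℝ) • (ContinuousLinearMap.id ℝ R3 +
      (innerSL ℝ (‖z‖⁻¹ • z)).smulRight e)).det = (1 + cosz z e) / 8 := by
  rw [ContinuousLinearMap.det]
  have : (((2⁻¹ : ℝ) • (ContinuousLinearMap.id ℝ R3 +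
      (innerSL ℝ (‖z‖⁻¹ • z)).smulRight e) : R3 →L[ℝ] R3) : R3 →ₗ[ℝ] R3)
      = (2⁻¹:ℝ) • LinearMap.transvection ((innerSL ℝ (‖z‖⁻¹ • z) : R3 →L[ℝ] ℝ) : R3 →ₗ[ℝ] ℝ) e := by
    ext y
    simp [LinearMap.transvection]
  rw [this, LinearMap.det_smul, LinearMap.transvection.det]
  simp [cosz_eq]
  norm_num
  ring

lemma Tm_continuous (e : R3) : Continuous (Tm e) := by unfold Tm; fun_prop

lemma cosz_measurable2 : Measurable (fun p : R3 × R3 => cosz p.1 p.2) := by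
  simp_rw [cosz_eq]
  exact (measurable_fst.norm.inv).mul (continuous_inner.measurable)

lemma cosz_measurable (e : R3) : Measurable (fun z => cosz z e) :=
  Measurable.of_uncurry_right (f := fun z e => cosz z e) cosz_measurable2

lemma Tm_cov {e : R3} (he : ‖e‖ = 1) {κ : ℝ} (hκ : -1 < κ) (G : R3 → ℝ≥0∞) :
    ∫⁻ z in {z | z ≠ 0 ∧ κ ≤ cosz z e}, G (Tm e z) ≤
      ENNReal.ofReal (8 / (1 + κ)) * ∫⁻ y, G y := by
  set s : Set R3 := {z | z ≠ 0 ∧ κ ≤ cosz z e} with hs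
  have hsm : MeasurableSet s := by
    apply MeasurableSet.inter
    · exact (measurableSet_singleton (0:R3)).compl
    · exact measurableSet_le measurable_const (cosz_measurable e)
  have hinj : InjOn (Tm e) s := (Tm_injOn he).mono (fun z hz => by
    exact ⟨hz.1, lt_of_lt_of_le hκ hz.2⟩)
  have h := lintegral_image_eq_lintegral_abs_det_fderiv_mul volume hsm
    (fun z hz => (Tm_hasFDeriv (e := e) hz.1).hasFDerivWithinAt)
    hinj G
  have h2 : ∫⁻ z in s, G (Tm e z) ≤ ENNReal.ofReal (8 / (1 + κ)) * ∫⁻ y in Tm e '' s, G y := by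
    rw [h, ← lintegral_const_mul' _ _ ENNReal.ofReal_ne_top]
    apply setLIntegral_mono' hsm
    intro z hz
    rw [← mul_assoc, Tm_det, ← ENNReal.ofReal_mul (by have : 0 < 1+κ := by linarith
                                                      positivity)]
    have hc : κ ≤ cosz z e := hz.2
    have : (1:ℝ) ≤ 8 / (1 + κ) * |(1 + cosz z e) / 8| := by
      have : 0 < 1+κ := by linarith
      rw [abs_of_nonneg (by linarith)]
      rw [div_mul_div_comm, mul_comm, mul_div_mul_right _ _ (by norm_num : (8:ℝ) ≠ 0), one_le_div this]
      linarith
    calc G (Tm e z) = 1 * G (Tm e z) := (one_mul _).symm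
      _ ≤ _ := by
        gcongr
        exact ENNReal.one_le_ofReal.mpr this
  refine h2.trans ?_
  exact mul_le_mul_right (setLIntegral_le_lintegral _ _) _

lemma Tm_null {e : R3} (he : ‖e‖ = 1) {N : Set R3} (hN : volume N = 0) :
    volume (Tm e ⁻¹' N) = 0 := by
  obtain ⟨N', hNN, hN'm, hN'⟩ := exists_measurable_superset_of_null hN
  refine measure_mono_null (preimage_mono hNN) ?_
  have hcov : Tm e ⁻¹' N' ⊆ (↑(Submodule.span ℝ {e}) : Set R3) ∪
      ⋃ n : ℕ, (Tm e ⁻¹' N' ∩ {z | z ≠ 0 ∧ (-1 + 1 / ((n:ℝ) + 1)) ≤ cosz z e}) := by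
    intro z hz
    by_cases h0 : z = 0
    · left; rw [h0]; exact Submodule.zero_mem _
    by_cases h1 : cosz z e = -1
    · left
      have hz' : ‖z‖ ≠ 0 := norm_ne_zero_iff.mpr h0
      have h2 := Tm_norm he h0
      rw [h1] at h2
      have h3 : Tm e z = 0 := by
        have : ‖Tm e z‖ ^ 2 = 0 := by rw [h2]; ring
        simpa using this
      unfold Tm at h3
      have h4 : z + ‖z‖ • e = 0 := (smul_eq_zero.mp h3).resolve_left (by norm_num)
      have : z = (-‖z‖) • e := by rw [neg_smul]; exact eq_neg_of_add_eq_zero_left h4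
      rw [this]
      exact Submodule.smul_mem _ _ (Submodule.mem_span_singleton_self e)
    · right
      have h2 := neg_one_le_cosz (z := z) he
      have h3 : 0 < cosz z e + 1 := by
        rcases lt_or_eq_of_le h2 with h | h
        · linarith
        · exact absurd h.symm h1
      obtain ⟨n, hn⟩ := exists_nat_one_div_lt h3
      exact mem_iUnion.mpr ⟨n, hz, h0, by linarith⟩
  refine measure_mono_null hcov (measure_union_null ?_ (measure_iUnion_null ?_))
  · apply Measure.addHaar_submodule
    intro htop
    have h1 : Module.finrank ℝ (Submodule.span ℝ {e}) ≤ 1 := by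
      have := finrank_span_le_card (R := ℝ) ({e} : Set R3)
      simpa using this
    rw [htop, finrank_top] at h1
    simp at h1
  · intro n
    have hκ : (-1 : ℝ) < -1 + 1 / ((n:ℝ)+1) := by
      have : (0:ℝ) < 1 / ((n:ℝ)+1) := by positivity
      linarith
    have h := Tm_cov he hκ (N'.indicator 1)
    rw [lintegral_indicator_one hN'm, hN', mul_zero, nonpos_iff_eq_zero] at h
    have hm : MeasurableSet (Tm e ⁻¹' N') := (Tm_continuous e).measurable hN'm
    have e1 : (fun z => N'.indicator (1 : R3 → ℝ≥0∞) (Tm e z)) = (Tm e ⁻¹' N').indicator 1 := by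
      ext z; rfl
    rw [e1, lintegral_indicator_one hm, Measure.restrict_apply hm] at h
    exact h

lemma vOutStar_eq (v w : R3) (σ : S2) : vOutStar v w σ = v - Tm σ (v - w) := by
  unfold vOutStar Tm
  module

lemma vOut_eq (v w : R3) (σ : S2) : vOut v w σ = v - Tm (-σ) (v - w) := by
  unfold vOut Tm
  module

lemma cosAngle_eq (v w : R3) (σ : S2) : cosAngle v w σ = cosz (v - w) σ := rfl

lemma S2_norm (σ : S2) : ‖(σ : R3)‖ = 1 := by simp

lemma vOut_continuous : Continuous (fun p : R3 × (R3 × S2) => vOut p.1 p.2.1 p.2.2) := by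
  unfold vOut; fun_prop
lemma vOutStar_continuous : Continuous (fun p : R3 × (R3 × S2) => vOutStar p.1 p.2.1 p.2.2) := by
  unfold vOutStar; fun_prop

/-- For a null set `N`, almost every `(w,σ)` has both outgoing velocities outside `N`. -/
lemma ae_out {P : R3 → Prop} (hP : ∀ᵐ v : R3, P v) (v : R3) :
    ∀ᵐ p : R3 × S2 ∂(volume.prod sphMeasure),
      P (vOut v p.1 p.2) ∧ P (vOutStar v p.1 p.2) ∧ P p.1 := by
  obtain ⟨N, hNN, hNm, hN⟩ := exists_measurable_superset_of_null (ae_iff.mp hP)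
  have hc : ∀ x, x ∉ N → P x := fun x hx => by
    by_contra h
    exact hx (hNN h)
  have aux : ∀ e : R3, ‖e‖ = 1 → volume ((fun w : R3 => v - Tm e (v - w)) ⁻¹' N) = 0 := by
    intro e he
    have h1 : volume ((fun y : R3 => v - y) ⁻¹' N) = 0 :=
      (Measure.measurePreserving_sub_left volume v).quasiMeasurePreserving.preimage_null hN
    have h2 := Tm_null he h1
    have h3 := (Measure.measurePreserving_sub_left volume v).quasiMeasurePreserving.preimage_null h2
    exact h3
  have A : ∀ g : R3 × S2 → R3, Measurable g → (∀ σ, volume ((fun w => g (w,σ)) ⁻¹' N) = 0) →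
      ∀ᵐ p : R3 × S2 ∂(volume.prod sphMeasure), g p ∉ N := by
    intro g hg h
    have : (volume.prod sphMeasure) (g ⁻¹' N) = 0 := by
      rw [Measure.prod_apply_symm (hg hNm)]
      rw [lintegral_eq_zero_iff' (measurable_measure_prodMk_right (hg hNm)).aemeasurable]
      exact Filter.Eventually.of_forall (fun σ => h σ)
    rw [ae_iff]
    simp only [not_not]
    exact this
  have B1 := A (fun p => vOut v p.1 p.2)
    ((vOut_continuous.comp (by fun_prop : Continuous fun p : R3 × S2 => (v, p))).measurable)
    (fun σ => by simp_rw [vOut_eq]; exact aux _ (by simp))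
  have B2 := A (fun p => vOutStar v p.1 p.2)
    ((vOutStar_continuous.comp (by fun_prop : Continuous fun p : R3 × S2 => (v, p))).measurable)
    (fun σ => by simp_rw [vOutStar_eq]; exact aux _ (by simp))
  have B3 := A (fun p => p.1) measurable_fst (fun σ => hN)
  filter_upwards [B1, B2, B3] with p h1 h2 h3
  exact ⟨hc _ h1, hc _ h2, hc _ h3⟩


lemma cosz_meas_comp {α : Type*} [MeasurableSpace α] {f g : α → R3} (hf : Measurable f)
    (hg : Measurable g) : Measurable (fun x => cosz (f x) (g x)) := by
  simp_rw [cosz_eq]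
  exact (hf.norm.inv).mul (hf.inner hg)

lemma b_neg {b : ℝ → ℝ} (hb : GradCutoff b) {x : ℝ} (h1 : -1 ≤ x) (h2 : x ≤ 1) : b (-x) = b x := by
  have := hb.symm (Real.arccos x)
  rwa [Real.cos_pi_sub, Real.cos_arccos h1 h2] at this

lemma lint_Cb {b : ℝ → ℝ} (hb : GradCutoff b) :
    ENNReal.ofReal (2 * π) * ∫⁻ θ in Ioo 0 π, ENNReal.ofReal (sin θ) * ENNReal.ofReal (b (cos θ))
      = ENNReal.ofReal (Cb b) := by
  unfold Cb
  rw [ENNReal.ofReal_mul (p := 2 * π) (by positivity), intervalIntegral.integral_of_le pi_pos.le,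
    ofReal_integral_eq_lintegral_ofReal]
  · congr 1
    rw [Measure.restrict_congr_set Ioo_ae_eq_Ioc]
    apply setLIntegral_congr_fun measurableSet_Ioc
    intro θ hθ
    show ENNReal.ofReal (sin θ) * ENNReal.ofReal (b (cos θ)) = ENNReal.ofReal (b (cos θ) * sin θ)
    rw [ENNReal.ofReal_mul (hb.nonneg _), mul_comm]
  · exact (intervalIntegrable_iff_integrableOn_Ioc_of_le pi_pos.le).mp hb.integrable
  · rw [Filter.EventuallyLE, ae_restrict_iff' measurableSet_Ioc]
    refine Filter.Eventually.of_forall fun θ hθ => ?_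
    exact mul_nonneg (hb.nonneg _) (sin_nonneg_of_nonneg_of_le_pi hθ.1.le hθ.2)

lemma Cb_pos {b : ℝ → ℝ} (hb : GradCutoff b) : 0 < Cb b :=
  mul_pos (by positivity) hb.pos

lemma sph_b {b : ℝ → ℝ} (hb : GradCutoff b) {k : R3} (hk : ‖k‖ = 1) :
    ∫⁻ σ : S2, ENNReal.ofReal (b ⟪k, (σ : R3)⟫) ∂sphMeasure = ENNReal.ofReal (Cb b) := by
  rw [sph_lint k hk (fun x => ENNReal.ofReal (b x)) (hb.measurable.ennreal_ofReal), lint_Cb hb]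

def bhalf (b : ℝ → ℝ) (x : ℝ) : ℝ≥0∞ :=
  (Ici (√2 / 2)).indicator (fun x => ENNReal.ofReal (b (2 * x ^ 2 - 1))) x

lemma bhalf_meas {b : ℝ → ℝ} (hb : GradCutoff b) : Measurable (bhalf b) := by
  unfold bhalf
  apply Measurable.indicator _ measurableSet_Ici
  exact (hb.measurable.comp (by fun_prop)).ennreal_ofReal

lemma sph_bhalf {b : ℝ → ℝ} (hb : GradCutoff b) {k : R3} (hk : ‖k‖ = 1) :
    ∫⁻ σ : S2, bhalf b ⟪k, (σ : R3)⟫ ∂sphMeasure ≤ ENNReal.ofReal (Cb b) := by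
  rw [sph_lint k hk _ (bhalf_meas hb), ← lint_Cb hb]
  refine mul_le_mul_right ?_ _
  set s : Set ℝ := Ioo 0 (π/2) with hs
  set G : ℝ → ℝ≥0∞ := fun θ => ENNReal.ofReal (sin θ) * ENNReal.ofReal (b (cos θ)) with hG
  have hcv := lintegral_image_eq_lintegral_abs_deriv_mul (s := s) (f := fun θ => 2 * θ)
    (f' := fun _ => 2) measurableSet_Ioo
    (fun x _ => by simpa using ((hasDerivAt_id x).const_mul 2).hasDerivWithinAt)
    (fun x _ y _ h => by simpa using h) G
  have himg : (fun θ : ℝ => 2 * θ) '' s ⊆ Ioo 0 π := by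
    rintro _ ⟨θ, hθ, rfl⟩
    exact ⟨by simpa using hθ.1, by have := hθ.2; show 2 * θ < π; linarith⟩
  refine le_trans ?_ (lintegral_mono_set himg)
  rw [hcv]
  rw [← lintegral_indicator measurableSet_Ioo, ← lintegral_indicator measurableSet_Ioo]
  apply lintegral_mono
  intro θ
  show (Ioo 0 π).indicator (fun θ => ENNReal.ofReal (sin θ) * bhalf b (cos θ)) θ ≤
    (Ioo 0 (π/2)).indicator (fun θ => ENNReal.ofReal |2| * G (2 * θ)) θ
  by_cases h1 : θ ∈ Ioo 0 π
  · rw [indicator_of_mem h1]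
    by_cases h2 : √2 / 2 ≤ cos θ
    · have hp : 0 < cos θ := lt_of_lt_of_le (by positivity) h2
      have h3 : θ < π/2 := by
        by_contra h
        push Not at h
        have := cos_nonpos_of_pi_div_two_le_of_le h (by linarith [h1.2, pi_pos])
        linarith
      rw [indicator_of_mem (show θ ∈ Ioo 0 (π/2) from ⟨h1.1, h3⟩)]
      unfold bhalf
      rw [indicator_of_mem (by exact h2)]
      simp only [hG]
      rw [← cos_two_mul, ← mul_assoc, ← ENNReal.ofReal_mul (abs_nonneg _)]
      refine mul_le_mul_left (ENNReal.ofReal_le_ofReal ?_) _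
      rw [sin_two_mul, abs_of_pos (by norm_num : (0:ℝ) < 2)]
      have hsp : 0 < sin θ := sin_pos_of_mem_Ioo h1
      have : (1:ℝ) ≤ √2 := by rw [Real.one_le_sqrt]; norm_num
      nlinarith
    · unfold bhalf
      rw [indicator_of_notMem (by exact h2), mul_zero]
      exact zero_le
  · rw [indicator_of_notMem h1]
    exact zero_le

lemma rpow_gamma_le {γ : ℝ} (h0 : 0 ≤ γ) (h2 : γ ≤ 2) {x : ℝ} (hx : 0 ≤ x) : x ^ γ ≤ 1 + x ^ 2 := by
  rcases le_total x 1 with h | h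
  · have := Real.rpow_le_one hx h h0
    nlinarith [sq_nonneg x]
  · have := Real.rpow_le_rpow_of_exponent_le h h2
    rw [Real.rpow_two] at this
    linarith

abbrev colM : Measure (R3 × S2) := (volume : Measure R3).prod sphMeasure

lemma Bker_meas {γ : ℝ} {b : ℝ → ℝ} (hb : GradCutoff b) (v : R3) :
    Measurable (fun p : R3 × S2 => Bker γ b v p.1 p.2) := by
  unfold Bker
  have h1 : Measurable (fun p : R3 × S2 => cosz (v - p.1) p.2) :=
    cosz_meas_comp (by fun_prop) (by fun_prop)
  apply Measurable.mul
  · fun_prop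
  · exact hb.measurable.comp h1

lemma Bker_nonneg {γ : ℝ} {b : ℝ → ℝ} (hb : GradCutoff b) (v w : R3) (σ : S2) :
    0 ≤ Bker γ b v w σ := mul_nonneg (by positivity) (hb.nonneg _)

/-- second moment -/
def M2 (g : R3 → ℝ) : ℝ≥0∞ := ∫⁻ w : R3, ENNReal.ofReal (g w * (1 + ‖w‖ ^ 2))

lemma norm_unit {z : R3} (hz : z ≠ 0) : ‖(‖z‖⁻¹ • z)‖ = 1 := by
  rw [norm_smul, norm_inv, norm_norm, inv_mul_cancel₀ (norm_ne_zero_iff.mpr hz)]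

lemma U1 {γ : ℝ} (h0 : 0 ≤ γ) (h2 : γ ≤ 2) {b : ℝ → ℝ} (hb : GradCutoff b) {g : R3 → ℝ}
    (hg : Measurable g) (hg0 : ∀ w, 0 ≤ g w) (v : R3) :
    ∫⁻ p, ENNReal.ofReal (Bker γ b v p.1 p.2 * g p.1) ∂colM ≤
      ENNReal.ofReal (64 * Cb b * (1 + ‖v‖ ^ 2)) * M2 g := by
  rw [lintegral_prod _ (by
    exact (((Bker_meas hb v).mul (hg.comp measurable_fst)).ennreal_ofReal).aemeasurable)]
  unfold M2
  rw [← lintegral_const_mul' _ _ ENNReal.ofReal_ne_top]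
  apply lintegral_mono_ae
  have hne : ∀ᵐ w : R3, w ≠ v := by
    rw [ae_iff]; simp
  filter_upwards [hne] with w hw
  have e : ∀ σ : S2, ENNReal.ofReal (Bker γ b v w σ * g w)
      = ENNReal.ofReal (‖v - w‖ ^ γ * g w) *
        ENNReal.ofReal (b ⟪‖v-w‖⁻¹ • (v - w), (σ:R3)⟫) := by
    intro σ
    rw [← ENNReal.ofReal_mul (mul_nonneg (by positivity) (hg0 w))]
    congr 1
    unfold Bker cosAngle
    ring
  simp_rw [e]
  rw [lintegral_const_mul' _ _ ENNReal.ofReal_ne_top, sph_b hb (norm_unit (sub_ne_zero.mpr hw.symm)),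
    ← ENNReal.ofReal_mul (mul_nonneg (by positivity) (hg0 w)), ← ENNReal.ofReal_mul (by
      have := (Cb_pos hb).le; positivity)]
  apply ENNReal.ofReal_le_ofReal
  have h3 := rpow_gamma_le h0 h2 (norm_nonneg (v - w))
  have h4 : 1 + ‖v - w‖ ^ 2 ≤ 2 * (1 + ‖v‖^2) * (1 + ‖w‖^2) := by
    have := norm_sub_le v w
    nlinarith [norm_nonneg v, norm_nonneg w, norm_nonneg (v-w), sq_nonneg (‖v‖ - ‖w‖),
      mul_nonneg (sq_nonneg ‖v‖) (sq_nonneg ‖w‖)]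
  have hC := (Cb_pos hb).le
  calc ‖v - w‖ ^ γ * g w * Cb b ≤ (2 * (1 + ‖v‖^2) * (1 + ‖w‖^2)) * g w * Cb b := by
        have := hg0 w
        gcongr
        linarith
    _ ≤ 64 * Cb b * (1 + ‖v‖ ^ 2) * (g w * (1 + ‖w‖ ^ 2)) := by
        have : 0 ≤ Cb b * (1 + ‖v‖ ^ 2) * (g w * (1 + ‖w‖ ^ 2)) := by
          have := hg0 w
          positivity
        nlinarith

/-- half of the gain integrand after the change of variables -/
lemma half_gain {γ : ℝ} (h0 : 0 ≤ γ) (h2 : γ ≤ 2) {b : ℝ → ℝ} (hb : GradCutoff b) {g : R3 → ℝ}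
    (hg0 : ∀ w, 0 ≤ g w) (v : R3) {e : R3} (he : ‖e‖ = 1) :
    ∫⁻ z in {z | z ≠ 0 ∧ 0 ≤ cosz z e},
        ENNReal.ofReal (‖z‖ ^ γ * b (cosz z e) * g (v - Tm e z)) ≤
      8 * ∫⁻ y, ENNReal.ofReal (4 * (1 + ‖v‖^2) * (g (v - y) * (1 + ‖v - y‖^2))) *
        bhalf b ⟪‖y‖⁻¹ • y, e⟫ := by
  have := Tm_cov he (show (-1:ℝ) < 0 by norm_num)
    (fun y => ENNReal.ofReal (4 * (1 + ‖v‖^2) * (g (v - y) * (1 + ‖v - y‖^2))) *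
        bhalf b ⟪‖y‖⁻¹ • y, e⟫)
  have e8 : ENNReal.ofReal (8 / (1 + 0)) = 8 := by norm_num
  rw [e8] at this
  refine le_trans ?_ this
  have hsm : MeasurableSet {z : R3 | z ≠ 0 ∧ 0 ≤ cosz z e} := by
    apply MeasurableSet.inter
    · exact (measurableSet_singleton (0:R3)).compl
    · exact measurableSet_le measurable_const (cosz_measurable e)
  apply setLIntegral_mono' hsm
  rintro z ⟨hz, hc⟩
  set y := Tm e z with hy
  have hzp : 0 < ‖z‖ := norm_pos_iff.mpr hz
  have hn := Tm_norm he hz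
  have hi := Tm_inner he hz
  rw [← hy] at hn hi
  have hyp : 0 < ‖y‖ := by
    by_contra h
    have h' : ‖y‖ = 0 := le_antisymm (not_lt.mp h) (norm_nonneg _)
    rw [h'] at hn
    nlinarith [sq_pos_of_pos hzp]
  have hsq : ⟪‖y‖⁻¹ • y, e⟫ ^ 2 = (1 + cosz z e) / 2 := by
    rw [real_inner_smul_left, hi, mul_pow, inv_pow, hn]
    field_simp
  have hnn : 0 ≤ ⟪‖y‖⁻¹ • y, e⟫ := by
    rw [real_inner_smul_left, hi]; positivity
  have hge : √2 / 2 ≤ ⟪‖y‖⁻¹ • y, e⟫ := by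
    apply le_of_sq_le_sq _ hnn
    rw [hsq, div_pow, Real.sq_sqrt (by norm_num)]
    linarith
  unfold bhalf
  rw [indicator_of_mem (by exact hge), hsq]
  have e1 : 2 * ((1 + cosz z e) / 2) - 1 = cosz z e := by ring
  rw [e1, ← ENNReal.ofReal_mul (by have := hg0 (v - y); positivity)]
  apply ENNReal.ofReal_le_ofReal
  have hb0 := hb.nonneg (cosz z e)
  have hgy := hg0 (v - y)
  have h3 : ‖z‖ ^ γ ≤ 4 * (1 + ‖v‖^2) * (1 + ‖v - y‖^2) := by
    have h4 := rpow_gamma_le h0 h2 hzp.le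
    have h5 : ‖z‖^2 ≤ 2 * ‖y‖^2 := by nlinarith [sq_nonneg ‖z‖]
    have h6 : ‖y‖ ≤ ‖v‖ + ‖v - y‖ := by
      have := norm_sub_le v (v - y)
      rwa [sub_sub_cancel] at this
    nlinarith [norm_nonneg v, norm_nonneg (v-y), sq_nonneg (‖v‖ - ‖v-y‖),
      mul_nonneg (sq_nonneg ‖v‖) (sq_nonneg ‖v-y‖)]
  calc ‖z‖ ^ γ * b (cosz z e) * g (v - y)
      ≤ (4 * (1 + ‖v‖^2) * (1 + ‖v - y‖^2)) * b (cosz z e) * g (v - y) := by gcongr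
    _ = _ := by ring

lemma half_gain_sph {b : ℝ → ℝ} (hb : GradCutoff b) {g : R3 → ℝ} (hg : Measurable g) (v : R3)
    (s : ℝ) (hs : |s| = 1) :
    ∫⁻ σ : S2, (∫⁻ y : R3, ENNReal.ofReal (4 * (1 + ‖v‖^2) * (g (v - y) * (1 + ‖v - y‖^2))) *
        bhalf b ⟪‖y‖⁻¹ • y, s • (σ:R3)⟫) ∂sphMeasure ≤
      ENNReal.ofReal (4 * Cb b * (1 + ‖v‖^2)) * M2 g := by
  have hin : Measurable (fun p : S2 × R3 => ⟪‖p.2‖⁻¹ • p.2, s • (p.1 : R3)⟫) := by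
    have : Measurable (fun p : S2 × R3 => cosz p.2 (s • (p.1 : R3))) :=
      cosz_meas_comp (by fun_prop) (by fun_prop)
    exact this
  have hw : Measurable (fun y : R3 =>
      ENNReal.ofReal (4 * (1 + ‖v‖^2) * (g (v - y) * (1 + ‖v - y‖^2)))) := by
    have : Measurable (fun y : R3 => g (v - y)) := hg.comp (by fun_prop)
    fun_prop
  rw [lintegral_lintegral_swap]
  · have key : ∀ y : R3, ∫⁻ σ : S2, ENNReal.ofReal (4 * (1 + ‖v‖^2) * (g (v - y) * (1 + ‖v - y‖^2))) *
        bhalf b ⟪‖y‖⁻¹ • y, s • (σ:R3)⟫ ∂sphMeasure ≤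
        ENNReal.ofReal (4 * Cb b * (1 + ‖v‖^2)) * ENNReal.ofReal (g (v - y) * (1 + ‖v - y‖^2)) := by
      intro y
      rw [lintegral_const_mul' _ _ ENNReal.ofReal_ne_top]
      have : ∫⁻ σ : S2, bhalf b ⟪‖y‖⁻¹ • y, s • (σ:R3)⟫ ∂sphMeasure ≤ ENNReal.ofReal (Cb b) := by
        by_cases h : y = 0
        · subst h
          have : bhalf b 0 = 0 := by
            unfold bhalf
            apply indicator_of_notMem
            simp
          simp [this]
        · have h1 : ∀ σ : S2, ⟪‖y‖⁻¹ • y, s • (σ:R3)⟫ = ⟪s • (‖y‖⁻¹ • y), (σ:R3)⟫ := by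
            intro σ
            rw [real_inner_smul_right, real_inner_smul_left (r := s)]
          simp_rw [h1]
          apply sph_bhalf hb
          rw [norm_smul, norm_unit h, Real.norm_eq_abs, hs, mul_one]
      refine (mul_le_mul_right this _).trans ?_
      rw [← ENNReal.ofReal_mul' (Cb_pos hb).le, ← ENNReal.ofReal_mul (by
        have := (Cb_pos hb).le; positivity)]
      apply le_of_eq
      congr 1
      ring
    refine (lintegral_mono key).trans ?_
    rw [lintegral_const_mul' _ _ ENNReal.ofReal_ne_top]
    unfold M2
    rw [lintegral_sub_left_eq_self (fun x : R3 => ENNReal.ofReal (g x * (1 + ‖x‖^2))) v]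
  · apply Measurable.aemeasurable
    exact (hw.comp measurable_snd).mul ((bhalf_meas hb).comp hin)

lemma U2 {γ : ℝ} (h0 : 0 ≤ γ) (h2 : γ ≤ 2) {b : ℝ → ℝ} (hb : GradCutoff b) {g : R3 → ℝ}
    (hg : Measurable g) (hg0 : ∀ w, 0 ≤ g w) (hg1 : ∀ w, g w ≤ 1) (v : R3) :
    ∫⁻ p, ENNReal.ofReal (Bker γ b v p.1 p.2 * (g (vOut v p.1 p.2) * g (vOutStar v p.1 p.2))) ∂colM ≤
      ENNReal.ofReal (64 * Cb b * (1 + ‖v‖ ^ 2)) * M2 g := by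
  have m1 : Measurable (fun p : R3 × S2 => g (vOut v p.1 p.2)) := hg.comp
    ((vOut_continuous.comp (by fun_prop : Continuous fun p : R3 × S2 => (v, p))).measurable)
  have m2 : Measurable (fun p : R3 × S2 => g (vOutStar v p.1 p.2)) := hg.comp
    ((vOutStar_continuous.comp (by fun_prop : Continuous fun p : R3 × S2 => (v, p))).measurable)
  rw [lintegral_prod_symm _ (by
    exact (((Bker_meas hb v).mul (m1.mul m2)).ennreal_ofReal).aemeasurable)]
  set W : ℝ → S2 → ℝ≥0∞ := fun s σ =>
    ∫⁻ y, ENNReal.ofReal (4 * (1 + ‖v‖^2) * (g (v - y) * (1 + ‖v - y‖^2))) *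
        bhalf b ⟪‖y‖⁻¹ • y, s • (σ:R3)⟫ with hW
  have key : ∀ σ : S2, ∫⁻ w, ENNReal.ofReal (Bker γ b v w σ * (g (vOut v w σ) * g (vOutStar v w σ)))
      ≤ 8 * W 1 σ + 8 * W (-1) σ := by
    intro σ
    have hσ : ‖(σ:R3)‖ = 1 := S2_norm σ
    set H : R3 → R3 → ℝ≥0∞ := fun e z => ENNReal.ofReal (‖z‖ ^ γ * b (cosz z e) * g (v - Tm e z)) with hH
    set D : R3 → Set R3 := fun e => {z : R3 | z ≠ 0 ∧ 0 ≤ cosz z e} with hD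
    have hDm : ∀ e, MeasurableSet (D e) := by
      intro e
      apply MeasurableSet.inter
      · exact (measurableSet_singleton (0:R3)).compl
      · exact measurableSet_le measurable_const (cosz_measurable e)
    have hHm : ∀ e, Measurable (H e) := by
      intro e
      have a1 : Measurable (fun z => b (cosz z e)) := hb.measurable.comp (cosz_measurable e)
      have a2 : Measurable (fun z => g (v - Tm e z)) :=
        hg.comp ((continuous_const.sub (Tm_continuous e)).measurable)
      have a3 : Measurable (fun z : R3 => ‖z‖ ^ γ) := by fun_prop
      exact ((a3.mul a1).mul a2).ennreal_ofReal
    have s1 : ∫⁻ w, ENNReal.ofReal (Bker γ b v w σ * (g (vOut v w σ) * g (vOutStar v w σ)))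
        = ∫⁻ z, ENNReal.ofReal (‖z‖ ^ γ * b (cosz z σ) *
            (g (v - Tm (-σ) z) * g (v - Tm σ z))) := by
      rw [← lintegral_sub_left_eq_self (fun z : R3 => ENNReal.ofReal (‖z‖ ^ γ * b (cosz z σ) *
            (g (v - Tm (-σ) z) * g (v - Tm σ z)))) v]
      simp_rw [vOut_eq, vOutStar_eq]
      rfl
    rw [s1]
    have hne : ∀ᵐ w : R3, w ≠ 0 := by
      rw [ae_iff]; simp
    have s2 : ∫⁻ z, ENNReal.ofReal (‖z‖ ^ γ * b (cosz z σ) *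
            (g (v - Tm (-σ) z) * g (v - Tm σ z))) ≤
        ∫⁻ z, ((D σ).indicator (H σ) z + (D (-σ)).indicator (H (-σ)) z) := by
      apply lintegral_mono_ae
      filter_upwards [hne] with z hz
      have k0 : 0 ≤ ‖z‖ ^ γ * b (cosz z σ) := mul_nonneg (by positivity) (hb.nonneg _)
      rcases le_total 0 (cosz z σ) with h | h
      · rw [indicator_of_mem (show z ∈ D σ from ⟨hz, h⟩)]
        refine le_trans ?_ le_self_add
        apply ENNReal.ofReal_le_ofReal
        refine mul_le_mul_of_nonneg_left ?_ k0
        exact mul_le_of_le_one_left (hg0 _) (hg1 _)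
      · rw [indicator_of_mem (show z ∈ D (-σ) from ⟨hz, by rw [cosz_neg]; linarith⟩)]
        refine le_trans ?_ le_add_self
        apply ENNReal.ofReal_le_ofReal
        rw [cosz_neg, b_neg hb (neg_one_le_cosz hσ) (cosz_le hσ)]
        refine mul_le_mul_of_nonneg_left ?_ k0
        exact mul_le_of_le_one_right (hg0 _) (hg1 _)
    refine s2.trans ?_
    rw [lintegral_add_left ((hHm σ).indicator (hDm σ)), lintegral_indicator (hDm _),
      lintegral_indicator (hDm _)]
    have t1 := half_gain h0 h2 hb hg0 v (e := (σ:R3)) hσ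
    have t2 := half_gain h0 h2 hb hg0 v (e := -(σ:R3)) (by rw [norm_neg, hσ])
    simp only [hW, one_smul, neg_smul]
    exact add_le_add t1 t2
  refine (lintegral_mono key).trans ?_
  have t1 := half_gain_sph hb hg v 1 (by norm_num)
  have t2 := half_gain_sph hb hg v (-1) (by norm_num)
  have t1' : ∫⁻ σ, W 1 σ ∂sphMeasure ≤ ENNReal.ofReal (4 * Cb b * (1 + ‖v‖^2)) * M2 g := t1
  have t2' : ∫⁻ σ, W (-1) σ ∂sphMeasure ≤ ENNReal.ofReal (4 * Cb b * (1 + ‖v‖^2)) * M2 g := t2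
  have hWm : Measurable (W 1) := by
    have hin : Measurable (fun p : S2 × R3 => ⟪‖p.2‖⁻¹ • p.2, (1:ℝ) • (p.1 : R3)⟫) := by
      have : Measurable (fun p : S2 × R3 => cosz p.2 ((1:ℝ) • (p.1 : R3))) :=
        cosz_meas_comp (by fun_prop) (by fun_prop)
      exact this
    have hw : Measurable (fun y : R3 =>
        ENNReal.ofReal (4 * (1 + ‖v‖^2) * (g (v - y) * (1 + ‖v - y‖^2)))) := by
      have : Measurable (fun y : R3 => g (v - y)) := hg.comp (by fun_prop)
      fun_prop
    apply Measurable.lintegral_prod_right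
    exact (hw.comp measurable_snd).mul ((bhalf_meas hb).comp hin)
  rw [lintegral_add_left (hWm.const_mul 8), lintegral_const_mul' _ _ (by norm_num),
    lintegral_const_mul' _ _ (by norm_num)]
  calc _ ≤ 8 * (ENNReal.ofReal (4 * Cb b * (1 + ‖v‖^2)) * M2 g)
        + 8 * (ENNReal.ofReal (4 * Cb b * (1 + ‖v‖^2)) * M2 g) := by gcongr
    _ = ENNReal.ofReal 16 * ENNReal.ofReal (4 * Cb b * (1 + ‖v‖^2)) * M2 g := by
        rw [← two_mul, ← mul_assoc, ← mul_assoc]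
        norm_num
    _ = _ := by
        rw [← ENNReal.ofReal_mul (by norm_num)]
        congr 2
        ring


/-- `∫∫ B h(v') h(v'_*) k(v_*)`. -/
def T3 (γ : ℝ) (b : ℝ → ℝ) (h k : R3 → ℝ) (v : R3) : ℝ :=
  ∫ p, Bker γ b v p.1 p.2 * (h (vOut v p.1 p.2) * h (vOutStar v p.1 p.2) * k p.1) ∂colM

lemma comp_vOut_meas {h : R3 → ℝ} (hh : Measurable h) (v : R3) :
    Measurable (fun p : R3 × S2 => h (vOut v p.1 p.2)) := hh.comp
    ((vOut_continuous.comp (by fun_prop : Continuous fun p : R3 × S2 => (v, p))).measurable)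
lemma comp_vOutStar_meas {h : R3 → ℝ} (hh : Measurable h) (v : R3) :
    Measurable (fun p : R3 × S2 => h (vOutStar v p.1 p.2)) := hh.comp
    ((vOutStar_continuous.comp (by fun_prop : Continuous fun p : R3 × S2 => (v, p))).measurable)

lemma T3_int_meas {γ : ℝ} {b : ℝ → ℝ} (hb : GradCutoff b) {h k : R3 → ℝ}
    (hh : Measurable h) (hk : Measurable k) (v : R3) :
    Measurable (fun p : R3 × S2 =>
      Bker γ b v p.1 p.2 * (h (vOut v p.1 p.2) * h (vOutStar v p.1 p.2) * k p.1)) :=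
  (Bker_meas hb v).mul (((comp_vOut_meas hh v).mul (comp_vOutStar_meas hh v)).mul
    (hk.comp measurable_fst))

lemma T3_lint {γ : ℝ} (h0 : 0 ≤ γ) (h2 : γ ≤ 2) {b : ℝ → ℝ} (hb : GradCutoff b) {h k : R3 → ℝ}
    (hh : Measurable h) (hk : Measurable k) (hh0 : ∀ w, 0 ≤ h w) (hh1 : ∀ w, h w ≤ 1)
    (hk0 : ∀ w, 0 ≤ k w) (hk1 : ∀ w, k w ≤ 1) {M : ℝ}
    (hM : M2 h ≤ ENNReal.ofReal M ∨ M2 k ≤ ENNReal.ofReal M) (v : R3) :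
    ∫⁻ p, ENNReal.ofReal (Bker γ b v p.1 p.2 *
      (h (vOut v p.1 p.2) * h (vOutStar v p.1 p.2) * k p.1)) ∂colM
      ≤ ENNReal.ofReal (64 * Cb b * (1 + ‖v‖ ^ 2) * M) := by
  have hC : 0 ≤ 64 * Cb b * (1 + ‖v‖ ^ 2) := by have := (Cb_pos hb).le; positivity
  rw [ENNReal.ofReal_mul hC]
  rcases hM with hM | hM
  · refine le_trans ?_ ((U2 h0 h2 hb hh hh0 hh1 v).trans (mul_le_mul_right hM _))
    apply lintegral_mono
    intro p
    apply ENNReal.ofReal_le_ofReal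
    refine mul_le_mul_of_nonneg_left ?_ (Bker_nonneg hb _ _ _)
    exact mul_le_of_le_one_right (mul_nonneg (hh0 _) (hh0 _)) (hk1 _)
  · refine le_trans ?_ ((U1 h0 h2 hb hk hk0 v).trans (mul_le_mul_right hM _))
    apply lintegral_mono
    intro p
    apply ENNReal.ofReal_le_ofReal
    refine mul_le_mul_of_nonneg_left ?_ (Bker_nonneg hb _ _ _)
    exact mul_le_of_le_one_left (hk0 _) (mul_le_one₀ (hh1 _) (hh0 _) (hh1 _))

lemma T3_int_nonneg {γ : ℝ} {b : ℝ → ℝ} (hb : GradCutoff b) {h k : R3 → ℝ}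
    (hh0 : ∀ w, 0 ≤ h w) (hk0 : ∀ w, 0 ≤ k w) (v : R3) (p : R3 × S2) :
    0 ≤ Bker γ b v p.1 p.2 * (h (vOut v p.1 p.2) * h (vOutStar v p.1 p.2) * k p.1) :=
  mul_nonneg (Bker_nonneg hb _ _ _) (mul_nonneg (mul_nonneg (hh0 _) (hh0 _)) (hk0 _))

lemma T3_nonneg {γ : ℝ} {b : ℝ → ℝ} (hb : GradCutoff b) {h k : R3 → ℝ}
    (hh0 : ∀ w, 0 ≤ h w) (hk0 : ∀ w, 0 ≤ k w) (v : R3) : 0 ≤ T3 γ b h k v :=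
  integral_nonneg (fun p => T3_int_nonneg hb hh0 hk0 v p)

lemma T3_integrable {γ : ℝ} (h0 : 0 ≤ γ) (h2 : γ ≤ 2) {b : ℝ → ℝ} (hb : GradCutoff b) {h k : R3 → ℝ}
    (hh : Measurable h) (hk : Measurable k) (hh0 : ∀ w, 0 ≤ h w) (hh1 : ∀ w, h w ≤ 1)
    (hk0 : ∀ w, 0 ≤ k w) (hk1 : ∀ w, k w ≤ 1) {M : ℝ}
    (hM : M2 h ≤ ENNReal.ofReal M ∨ M2 k ≤ ENNReal.ofReal M) (v : R3) :
    Integrable (fun p : R3 × S2 => Bker γ b v p.1 p.2 *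
      (h (vOut v p.1 p.2) * h (vOutStar v p.1 p.2) * k p.1)) colM := by
  refine ⟨(T3_int_meas hb hh hk v).aestronglyMeasurable, ?_⟩
  rw [hasFiniteIntegral_iff_ofReal (Filter.Eventually.of_forall
    (fun p => T3_int_nonneg hb hh0 hk0 v p))]
  exact (T3_lint h0 h2 hb hh hk hh0 hh1 hk0 hk1 hM v).trans_lt ENNReal.ofReal_lt_top

lemma T3_le {γ : ℝ} (h0 : 0 ≤ γ) (h2 : γ ≤ 2) {b : ℝ → ℝ} (hb : GradCutoff b) {h k : R3 → ℝ}
    (hh : Measurable h) (hk : Measurable k) (hh0 : ∀ w, 0 ≤ h w) (hh1 : ∀ w, h w ≤ 1)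
    (hk0 : ∀ w, 0 ≤ k w) (hk1 : ∀ w, k w ≤ 1) {M : ℝ} (hMn : 0 ≤ M)
    (hM : M2 h ≤ ENNReal.ofReal M ∨ M2 k ≤ ENNReal.ofReal M) (v : R3) :
    T3 γ b h k v ≤ 64 * Cb b * (1 + ‖v‖ ^ 2) * M := by
  unfold T3
  rw [integral_eq_lintegral_of_nonneg_ae (Filter.Eventually.of_forall
    (fun p => T3_int_nonneg hb hh0 hk0 v p)) (T3_int_meas hb hh hk v).aestronglyMeasurable]
  apply ENNReal.toReal_le_of_le_ofReal
  · have := (Cb_pos hb).le; positivity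
  · exact T3_lint h0 h2 hb hh hk hh0 hh1 hk0 hk1 hM v

lemma T3_congr {γ : ℝ} {b : ℝ → ℝ} {h k h' k' : R3 → ℝ}
    (e1 : h =ᵐ[volume] h') (e2 : k =ᵐ[volume] k') (v : R3) : T3 γ b h k v = T3 γ b h' k' v := by
  unfold T3
  apply integral_congr_ae
  filter_upwards [ae_out (e1.and e2) v] with p hp
  rw [hp.1.1, hp.2.1.1, hp.2.2.2]

lemma QFD_eq {γ : ℝ} (h0 : 0 ≤ γ) (h2 : γ ≤ 2) {b : ℝ → ℝ} (hb : GradCutoff b) {g : R3 → ℝ}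
    (hg : Measurable g) (hg0 : ∀ w, 0 ≤ g w) (hg1 : ∀ w, g w ≤ 1) {M : ℝ}
    (hM : M2 g ≤ ENNReal.ofReal M) (v : R3) :
    QFD γ b g v = T3 γ b g (fun w => 1 - g w) v * (1 - g v) - g v * T3 γ b (fun w => 1 - g w) g v := by
  have hk : Measurable (fun w => 1 - g w) := measurable_const.sub hg
  have hk0 : ∀ w, 0 ≤ (fun w => 1 - g w) w := fun w => sub_nonneg.mpr (hg1 w)
  have hk1 : ∀ w, (fun w => 1 - g w) w ≤ 1 := fun w => sub_le_self _ (hg0 w)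
  have i1 := T3_integrable h0 h2 hb hg hk hg0 hg1 hk0 hk1 (Or.inl hM) v
  have i2 := T3_integrable h0 h2 hb hk hg hk0 hk1 hg0 hg1 (Or.inr hM) v
  have i3 := (i1.mul_const (1 - g v)).sub (i2.const_mul (g v))
  unfold QFD T3
  rw [← integral_mul_const, ← integral_const_mul, ← integral_sub (i1.mul_const _) (i2.const_mul _)]
  have e : (fun p : R3 × S2 =>
      Bker γ b v p.1 p.2 * (g (vOut v p.1 p.2) * g (vOutStar v p.1 p.2) * (1 - g p.1)) * (1 - g v)
       - g v * (Bker γ b v p.1 p.2 * ((1 - g (vOut v p.1 p.2)) * (1 - g (vOutStar v p.1 p.2)) * g p.1)))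
      = fun p : R3 × S2 => Bker γ b v p.1 p.2 *
      (g (vOut v p.1 p.2) * g (vOutStar v p.1 p.2) * (1 - g v) * (1 - g p.1)
        - g v * g p.1 * (1 - g (vOut v p.1 p.2)) * (1 - g (vOutStar v p.1 p.2))) := by
    ext p; ring
  have i4 : Integrable (fun p : R3 × S2 => Bker γ b v p.1 p.2 *
      (g (vOut v p.1 p.2) * g (vOutStar v p.1 p.2) * (1 - g v) * (1 - g p.1)
        - g v * g p.1 * (1 - g (vOut v p.1 p.2)) * (1 - g (vOutStar v p.1 p.2)))) colM := by
    rw [← e]; exact i3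
  rw [e, integral_prod _ i4]

/-- measurability in time of the collision integrals -/
lemma T3_meas_time {γ : ℝ} {b : ℝ → ℝ} (hb : GradCutoff b) {h k : ℝ → R3 → ℝ}
    (hh : Measurable (Function.uncurry h)) (hk : Measurable (Function.uncurry k)) (v : R3) :
    Measurable (fun τ => T3 γ b (h τ) (k τ) v) := by
  unfold T3
  have m1 : Measurable (fun q : ℝ × (R3 × S2) => h q.1 (vOut v q.2.1 q.2.2)) := by
    have : Measurable (fun q : ℝ × (R3 × S2) => (q.1, vOut v q.2.1 q.2.2)) :=
      measurable_fst.prodMk ((vOut_continuous.comp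
        (by fun_prop : Continuous fun q : ℝ × (R3 × S2) => (v, q.2))).measurable)
    exact hh.comp this
  have m2 : Measurable (fun q : ℝ × (R3 × S2) => h q.1 (vOutStar v q.2.1 q.2.2)) := by
    have : Measurable (fun q : ℝ × (R3 × S2) => (q.1, vOutStar v q.2.1 q.2.2)) :=
      measurable_fst.prodMk ((vOutStar_continuous.comp
        (by fun_prop : Continuous fun q : ℝ × (R3 × S2) => (v, q.2))).measurable)
    exact hh.comp this
  have m3 : Measurable (fun q : ℝ × (R3 × S2) => k q.1 q.2.1) := by
    have : Measurable (fun q : ℝ × (R3 × S2) => (q.1, q.2.1)) := by fun_prop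
    exact hk.comp this
  have m4 : Measurable (fun q : ℝ × (R3 × S2) => Bker γ b v q.2.1 q.2.2) :=
    (Bker_meas hb v).comp measurable_snd
  have m5 := (m4.mul ((m1.mul m2).mul m3)).stronglyMeasurable
  exact (m5.integral_prod_right (ν := colM)).measurable

lemma memL1s_two {g : R3 → ℝ} (h : MemL1s 2 g) : Integrable (fun v : R3 => |g v| * (1 + ‖v‖ ^ 2)) := by
  unfold MemL1s at h
  simpa using h

lemma wnorm_two (g : R3 → ℝ) : wnorm 2 g = ∫ v : R3, |g v| * (1 + ‖v‖ ^ 2) := by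
  unfold wnorm
  simp

section joint
variable {γ : ℝ} {b : ℝ → ℝ} {f₀ : R3 → ℝ} {f : ℝ → R3 → ℝ}

lemma sol_lint_dist (hf : IsFDSolution γ b f₀ f) {s t : ℝ} (hs : 0 ≤ s) (ht : 0 ≤ t) :
    ∫⁻ v, edist (f s v) (f t v) ≤ ENNReal.ofReal (wnorm 2 (fun v => f s v - f t v)) := by
  rw [wnorm_two, ofReal_integral_eq_lintegral_ofReal]
  · apply lintegral_mono
    intro v
    show edist (f s v) (f t v) ≤ _
    rw [edist_dist, Real.dist_eq]
    apply ENNReal.ofReal_le_ofReal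
    nlinarith [abs_nonneg (f s v - f t v), sq_nonneg ‖v‖]
  · refine ((memL1s_two (hf.memL12 s hs)).add (memL1s_two (hf.memL12 t ht))).mono' ?_ ?_
    · have := hf.measurable s
      have := hf.measurable t
      apply Measurable.aestronglyMeasurable
      fun_prop
    · refine Filter.Eventually.of_forall fun v => ?_
      rw [Real.norm_eq_abs, abs_of_nonneg (by positivity)]
      show _ ≤ |f s v| * (1 + ‖v‖ ^ 2) + |f t v| * (1 + ‖v‖ ^ 2)
      rw [← add_mul]
      gcongr
      exact abs_sub _ _
  · exact Filter.Eventually.of_forall fun v => by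
      show 0 ≤ |f s v - f t v| * (1 + ‖v‖ ^ 2)
      positivity

lemma sol_integrable (hf : IsFDSolution γ b f₀ f) {t : ℝ} (ht : 0 ≤ t) : Integrable (f t) := by
  refine (memL1s_two (hf.memL12 t ht)).mono' (hf.measurable t).aestronglyMeasurable ?_
  refine Filter.Eventually.of_forall fun v => ?_
  rw [Real.norm_eq_abs]
  nlinarith [abs_nonneg (f t v), sq_nonneg ‖v‖]

open Classical in
def solL1 (f : ℝ → R3 → ℝ) (t : ℝ) : (R3 →₁[volume] ℝ) :=
  if h : Integrable (f t) then h.toL1 (f t) else 0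

lemma solL1_edist (hf : IsFDSolution γ b f₀ f) {s t : ℝ} (hs : 0 ≤ s) (ht : 0 ≤ t) :
    edist (solL1 f s) (solL1 f t) = ∫⁻ v, edist (f s v) (f t v) := by
  unfold solL1
  rw [dif_pos (sol_integrable hf hs), dif_pos (sol_integrable hf ht),
    Integrable.edist_toL1_toL1]

lemma solL1_cont (hf : IsFDSolution γ b f₀ f) : ContinuousOn (solL1 f) (Ici 0) := by
  rw [EMetric.continuousOn_iff]
  intro t ht ε hε
  obtain ⟨ε', h1, h2⟩ := ENNReal.lt_iff_exists_nnreal_btwn.mp hε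
  have h1' : (0:ℝ) < ε' := by exact_mod_cast h1
  obtain ⟨δ, hδ, h⟩ := hf.contL12 t ht ε' h1'
  refine ⟨ENNReal.ofReal δ, by simpa using hδ, ?_⟩
  intro s hs hd
  rw [solL1_edist hf hs ht]
  refine (sol_lint_dist hf hs ht).trans_lt ?_
  rw [edist_dist, ENNReal.ofReal_lt_ofReal_iff hδ, Real.dist_eq] at hd
  refine lt_of_le_of_lt ?_ h2
  rw [← ENNReal.ofReal_coe_nnreal]
  exact ENNReal.ofReal_le_ofReal (h s hs hd).le

lemma exists_kn (hf : IsFDSolution γ b f₀ f) (n : ℕ) :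
    ∃ k : ℕ, 0 < k ∧ ∀ t ∈ Icc (0:ℝ) (n+1),
      ∫⁻ v, edist (f (⌊(k:ℝ) * t⌋₊ / (k:ℝ)) v) (f t v) ≤ (1/2) ^ n := by
  have huc : UniformContinuousOn (solL1 f) (Icc 0 ((n:ℝ)+1)) :=
    isCompact_Icc.uniformContinuousOn_of_continuous ((solL1_cont hf).mono (fun x hx => hx.1))
  rw [EMetric.uniformContinuousOn_iff] at huc
  obtain ⟨δ, hδ, h⟩ := huc ((1/2)^n) (by
    apply ENNReal.pow_pos; simp)
  obtain ⟨δ', h1, h2⟩ := ENNReal.lt_iff_exists_nnreal_btwn.mp hδ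
  have h1' : (0:ℝ) < δ' := by exact_mod_cast h1
  obtain ⟨m, hm⟩ := exists_nat_one_div_lt h1'
  refine ⟨m+1, Nat.succ_pos m, ?_⟩
  intro t ht
  have hk : (0:ℝ) < ((m+1 : ℕ):ℝ) := by positivity
  set k : ℝ := ((m+1 : ℕ):ℝ) with hkdef
  have hkt : 0 ≤ k * t := mul_nonneg hk.le ht.1
  have a1 : (⌊k * t⌋₊ : ℝ) / k ≤ t := by
    rw [div_le_iff₀ hk, mul_comm t]; exact Nat.floor_le hkt
  have a2 : t < (⌊k * t⌋₊ : ℝ) / k + 1 / k := by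
    rw [← add_div, lt_div_iff₀ hk, mul_comm t]; exact Nat.lt_floor_add_one _
  have a0 : 0 ≤ (⌊k * t⌋₊ : ℝ) / k := by positivity
  have := h (a := (⌊k * t⌋₊ : ℝ) / k) ⟨a0, a1.trans ht.2⟩ (b := t) ht ?_
  · rw [solL1_edist hf a0 ht.1] at this
    exact this.le
  · refine lt_of_le_of_lt ?_ h2
    rw [edist_dist, Real.dist_eq, ← ENNReal.ofReal_coe_nnreal]
    apply ENNReal.ofReal_le_ofReal
    rw [abs_sub_comm, abs_of_nonneg (by linarith)]
    have : 1 / k < δ' := by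
      rw [hkdef]; push_cast; exact hm
    linarith

lemma exists_joint (hf : IsFDSolution γ b f₀ f) :
    ∃ G : ℝ → R3 → ℝ, Measurable (Function.uncurry G) ∧ ∀ t, 0 ≤ t → G t =ᵐ[volume] f t := by
  choose k hk0 hk using exists_kn hf
  set F : ℕ → ℝ × R3 → ℝ := fun n p => f (⌊(k n:ℝ) * p.1⌋₊ / (k n:ℝ)) p.2 with hF
  have hFm : ∀ n, Measurable (F n) := by
    intro n
    have m1 : Measurable (fun q : ℕ × R3 => f ((q.1:ℝ) / (k n:ℝ)) q.2) :=
      measurable_from_prod_countable_right (fun j => hf.measurable ((j:ℝ) / (k n:ℝ)))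
    have m2 : Measurable (fun p : ℝ × R3 => (⌊(k n:ℝ) * p.1⌋₊, p.2)) :=
      ((Nat.measurable_floor).comp (measurable_fst.const_mul _)).prodMk measurable_snd
    exact m1.comp m2
  refine ⟨fun t v => Filter.limsup (fun n => F n (t, v)) Filter.atTop, ?_, ?_⟩
  · exact Measurable.limsup hFm
  · intro t ht
    obtain ⟨n0, hn0⟩ := exists_nat_ge t
    have hsum : ∑' n, ∫⁻ v, edist (F (n + n0) (t, v)) (f t v) ≤ 2 := by
      calc ∑' n, ∫⁻ v, edist (F (n + n0) (t, v)) (f t v) ≤ ∑' n : ℕ, (1/2 : ℝ≥0∞)^n := by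
            apply ENNReal.tsum_le_tsum
            intro n
            refine (hk (n + n0) t ⟨ht, ?_⟩).trans ?_
            · push_cast
              have : (0:ℝ) ≤ n := by positivity
              linarith
            · apply pow_le_pow_of_le_one
              · exact zero_le
              · simp
              · omega
        _ ≤ 2 := by
          rw [ENNReal.tsum_geometric]
          simp
    rw [← lintegral_tsum] at hsum
    · have hae := ae_lt_top' ?_ (hsum.trans_lt (by simp)).ne
      · filter_upwards [hae] with v hv
        have h1 := ENNReal.tendsto_atTop_zero_of_tsum_ne_top hv.ne
        have h2 : Filter.Tendsto (fun n => F (n + n0) (t, v)) Filter.atTop (nhds (f t v)) :=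
          tendsto_iff_edist_tendsto_0.mpr h1
        have h3 := (Filter.tendsto_add_atTop_iff_nat (f := fun n => F n (t, v)) n0).mp h2
        exact h3.limsup_eq
      · apply Measurable.aemeasurable
        apply Measurable.tsum
        intro n
        exact (Measurable.of_uncurry_left (f := fun t v => F (n+n0) (t,v)) (hFm _)).edist
          (hf.measurable t)
    · intro n
      exact ((Measurable.of_uncurry_left (f := fun t v => F (n+n0) (t,v)) (hFm _)).edist
          (hf.measurable t)).aemeasurable

end joint


lemma mild_integrable {y A L h : ℝ → ℝ} {y0 Λ : ℝ} (hy0 : ∀ t, 0 ≤ t → 0 ≤ y t)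
    (hy1 : ∀ t, 0 ≤ t → y t ≤ 1) (hA : Measurable A) (hL : Measurable L)
    (hAb : ∀ t, 0 ≤ t → |A t| ≤ Λ) (hLb : ∀ t, 0 ≤ t → |L t| ≤ Λ)
    (hh : ∀ t, 0 ≤ t → h t = A t * (1 - y t) - y t * L t)
    (hmild : ∀ t, 0 ≤ t → y t = y0 + ∫ τ in (0:ℝ)..t, h τ) {T : ℝ} (hT : 0 ≤ T) :
    IntervalIntegrable h volume 0 T := by
  have main : AEStronglyMeasurable y (volume.restrict (Ioc 0 T)) →
      IntervalIntegrable h volume 0 T := by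
    intro hm
    rw [intervalIntegrable_iff_integrableOn_Ioc_of_le hT]
    have h1 : IntegrableOn (fun t => A t * (1 - y t) - y t * L t) (Ioc 0 T) := by
      refine Integrable.of_bound ?_ (2 * Λ) ?_
      · exact (hA.aestronglyMeasurable.mul (aestronglyMeasurable_const.sub hm)).sub
          (hm.mul hL.aestronglyMeasurable)
      · rw [ae_restrict_iff' measurableSet_Ioc]
        refine Filter.Eventually.of_forall fun t ht => ?_
        have a1 := hAb t ht.1.le
        have a2 := hLb t ht.1.le
        have a3 := hy0 t ht.1.le
        have a4 := hy1 t ht.1.le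
        rw [Real.norm_eq_abs]
        have b1 : |A t * (1 - y t)| ≤ Λ := by
          rw [abs_mul, abs_of_nonneg (by linarith : 0 ≤ 1 - y t)]
          nlinarith [abs_nonneg (A t)]
        have b2 : |y t * L t| ≤ Λ := by
          rw [abs_mul, abs_of_nonneg a3]
          nlinarith [abs_nonneg (L t)]
        have := abs_sub (A t * (1 - y t)) (y t * L t)
        linarith
    refine h1.congr_fun ?_ measurableSet_Ioc
    intro t ht
    exact (hh t ht.1.le).symm
  apply main
  set S : Set ℝ := {t | t ∈ Icc 0 T ∧ IntervalIntegrable h volume 0 t} with hS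
  have hSne : (0:ℝ) ∈ S := ⟨⟨le_rfl, hT⟩, by simp⟩
  have hSb : BddAbove S := ⟨T, fun t ht => ht.1.2⟩
  set t0 := sSup S with ht0
  have ht00 : 0 ≤ t0 := le_csSup hSb hSne
  have ht0T : t0 ≤ T := csSup_le ⟨0, hSne⟩ (fun t ht => ht.1.2)
  have hcont : ContinuousOn y (Ioo 0 t0) := by
    intro t ht
    obtain ⟨t1, ht1, htt⟩ := exists_lt_of_lt_csSup ⟨0, hSne⟩ ht.2
    have hi : IntegrableOn h (uIcc 0 t1) := by
      rw [uIcc_of_le ht1.1.1, integrableOn_Icc_iff_integrableOn_Ioc]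
      exact (intervalIntegrable_iff_integrableOn_Ioc_of_le ht1.1.1).mp ht1.2
    have hc := intervalIntegral.continuousOn_primitive_interval hi
    rw [uIcc_of_le ht1.1.1] at hc
    have hc2 : ContinuousAt (fun x => ∫ τ in (0:ℝ)..x, h τ) t :=
      hc.continuousAt (Icc_mem_nhds ht.1 htt)
    have hc3 : ContinuousAt y t := by
      refine (continuousAt_const (y := y0) |>.add hc2).congr ?_
      filter_upwards [lt_mem_nhds ht.1] with x hx
      exact (hmild x hx.le).symm
    exact hc3.continuousWithinAt
  have hconst : ∀ t ∈ Ioc t0 T, y t = y0 := by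
    intro t ht
    have htn : 0 ≤ t := ht00.trans ht.1.le
    have : ¬ IntervalIntegrable h volume 0 t := by
      intro hi
      have : t ≤ t0 := le_csSup hSb ⟨⟨htn, ht.2⟩, hi⟩
      exact absurd ht.1 (not_lt.mpr this)
    rw [hmild t htn, intervalIntegral.integral_undef this, add_zero]
  have hu : Ioc 0 T = Ioc 0 t0 ∪ Ioc t0 T := (Ioc_union_Ioc_eq_Ioc ht00 ht0T).symm
  rw [hu, aestronglyMeasurable_union_iff]
  constructor
  · rw [← Measure.restrict_congr_set Ioo_ae_eq_Ioc]
    exact hcont.aestronglyMeasurable measurableSet_Ioo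
  · refine (aestronglyMeasurable_const (b := y0)).congr ?_
    rw [Filter.EventuallyEq, ae_restrict_iff' measurableSet_Ioc]
    exact Filter.Eventually.of_forall fun t ht => (hconst t ht).symm

lemma comparison {d : ℝ → ℝ} {s t K : ℝ} (hK : 0 ≤ K) (hst : s ≤ t) (hc : ContinuousOn d (Icc s t))
    (hs : 0 ≤ d s) (hd : ∀ x y, s ≤ x → x ≤ y → y ≤ t → - (K * ∫ τ in x..y, d τ) ≤ d y - d x) :
    0 ≤ d t := by
  by_contra hneg
  push Not at hneg
  set S : Set ℝ := Icc s t ∩ d ⁻¹' (Ici 0) with hS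
  have hScl : IsClosed S := hc.preimage_isClosed_of_isClosed isClosed_Icc isClosed_Ici
  have hSc : IsCompact S := isCompact_Icc.of_isClosed_subset hScl inter_subset_left
  obtain ⟨x, hx, hmax⟩ := hSc.exists_isGreatest ⟨s, ⟨le_rfl, hst⟩, hs⟩
  have h1 := hd x t hx.1.1 hx.1.2 le_rfl
  have h2 : ∫ τ in x..t, d τ ≤ 0 := by
    rw [intervalIntegral.integral_of_le hx.1.2]
    apply setIntegral_nonpos measurableSet_Ioc
    intro τ hτ
    by_contra h
    push Not at h
    have : τ ≤ x := hmax ⟨⟨hx.1.1.trans hτ.1.le, hτ.2⟩, h.le⟩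
    exact absurd hτ.1 (not_lt.mpr this)
  have h3 : 0 ≤ d x := hx.2
  nlinarith

lemma ode_lower {y A L : ℝ → ℝ} {s t Λ α : ℝ} (hst : s ≤ t) (hα : 0 ≤ α)
    (hc : ContinuousOn y (Icc s t))
    (hy0 : ∀ τ ∈ Icc s t, 0 ≤ y τ) (hy1 : ∀ τ ∈ Icc s t, y τ ≤ 1)
    (hA : ∀ τ ∈ Icc s t, α ≤ A τ) (hAΛ : ∀ τ ∈ Icc s t, A τ ≤ Λ)
    (hL : ∀ τ ∈ Icc s t, L τ ≤ Λ)
    (hIntv : IntervalIntegrable (fun τ => A τ * (1 - y τ) - y τ * L τ) volume s t)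
    (hy : ∀ x z, s ≤ x → x ≤ z → z ≤ t → y z - y x = ∫ τ in x..z, (A τ * (1 - y τ) - y τ * L τ)) :
    exp (-(2 * Λ * (t - s))) * (y s + α * (t - s)) ≤ y t := by
  set K := 2 * Λ with hK
  have hαΛ : α ≤ Λ := (hA s ⟨le_rfl, hst⟩).trans (hAΛ s ⟨le_rfl, hst⟩)
  have hK0 : 0 ≤ K := by linarith
  set ψ : ℝ → ℝ := fun τ => exp (-(K * (τ - s))) * (y s + α * (τ - s)) with hψ
  set ψ' : ℝ → ℝ := fun τ => α * exp (-(K * (τ - s))) - K * ψ τ with hψ'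
  have hder : ∀ τ, HasDerivAt ψ (ψ' τ) τ := by
    intro τ
    have h1 : HasDerivAt (fun τ => exp (-(K * (τ - s)))) (exp (-(K * (τ - s))) * (-(K * 1))) τ :=
      ((((hasDerivAt_id τ).sub_const s).const_mul K).neg).exp
    have h2 : HasDerivAt (fun τ => y s + α * (τ - s)) (α * 1) τ :=
      ((((hasDerivAt_id τ).sub_const s).const_mul α).const_add (y s))
    refine (h1.mul h2).congr_deriv ?_
    show _ = α * exp (-(K * (τ - s))) - K * (exp (-(K * (τ - s))) * (y s + α * (τ - s)))
    ring
  have hψc : Continuous ψ := by rw [hψ]; fun_prop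
  have hψ'c : Continuous ψ' := by rw [hψ']; fun_prop
  have key : 0 ≤ (fun τ => y τ - ψ τ) t := by
    apply comparison hK0 hst (hc.sub hψc.continuousOn)
    · simp [hψ]
    · intro x z hsx hxz hzt
      have hsub : uIcc x z ⊆ uIcc s t := by
        rw [uIcc_of_le hxz, uIcc_of_le hst]; exact Icc_subset_Icc hsx hzt
      have e1 := hy x z hsx hxz hzt
      have e2 : ψ z - ψ x = ∫ τ in x..z, ψ' τ :=
        (intervalIntegral.integral_eq_sub_of_hasDerivAt (fun τ _ => hder τ)
          (hψ'c.intervalIntegrable _ _)).symm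
      have hyi : IntervalIntegrable y volume x z := by
        apply ContinuousOn.intervalIntegrable
        refine hc.mono ?_
        rw [← uIcc_of_le hst]; exact hsub
      have i1 := hIntv.mono_set hsub
      have hdi := hyi.sub (hψc.intervalIntegrable x z)
      have e3 : y z - ψ z - (y x - ψ x) =
          ∫ τ in x..z, ((A τ * (1 - y τ) - y τ * L τ) - ψ' τ) := by
        rw [intervalIntegral.integral_sub i1 (hψ'c.intervalIntegrable _ _), ← e1, ← e2]
        ring
      show -(K * ∫ τ in x..z, (y τ - ψ τ)) ≤ y z - ψ z - (y x - ψ x)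
      rw [e3, ← intervalIntegral.integral_const_mul, ← intervalIntegral.integral_neg]
      apply intervalIntegral.integral_mono_on hxz
      · exact (hdi.const_mul K).neg
      · exact i1.sub (hψ'c.intervalIntegrable _ _)
      · intro τ hτ
        have hτ' : τ ∈ Icc s t := ⟨hsx.trans hτ.1, hτ.2.trans hzt⟩
        have a1 := hy0 τ hτ'
        have a2 := hy1 τ hτ'
        have a3 := hA τ hτ'
        have a4 := hL τ hτ'
        have a5 : exp (-(K * (τ - s))) ≤ 1 := by
          rw [exp_le_one_iff, neg_nonpos]
          exact mul_nonneg hK0 (by linarith [hτ'.1])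
        simp only [hψ']
        have b1 : α * (1 - y τ) ≤ A τ * (1 - y τ) := by
          apply mul_le_mul_of_nonneg_right a3; linarith
        have b2 : y τ * L τ ≤ y τ * Λ := mul_le_mul_of_nonneg_left a4 a1
        have b3 : α * exp (-(K * (τ - s))) ≤ α := mul_le_of_le_one_right hα a5
        have b4 : α * y τ ≤ Λ * y τ := mul_le_mul_of_nonneg_right hαΛ a1
        have b5 : K * y τ = 2 * Λ * y τ := by rw [hK]
        nlinarith
  have : 0 ≤ y t - ψ t := key
  simp only [hψ] at this
  linarith

/-- `f` or `1 - f`. -/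
def Fs (f : ℝ → R3 → ℝ) : Bool → ℝ → R3 → ℝ
  | true => f
  | false => fun t v => 1 - f t v

section key
variable {γ : ℝ} {b : ℝ → ℝ} {f₀ : R3 → ℝ} {f : ℝ → R3 → ℝ}

lemma Fs_nonneg (hf : IsFDSolution γ b f₀ f) (i : Bool) {t : ℝ} (ht : 0 ≤ t) (v : R3) :
    0 ≤ Fs f i t v := by
  cases i
  · exact sub_nonneg.mpr (hf.le_one t ht v)
  · exact hf.nonneg t ht v

lemma Fs_le_one (hf : IsFDSolution γ b f₀ f) (i : Bool) {t : ℝ} (ht : 0 ≤ t) (v : R3) :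
    Fs f i t v ≤ 1 := by
  cases i
  · exact sub_le_self _ (hf.nonneg t ht v)
  · exact hf.le_one t ht v

lemma Fs_meas (hf : IsFDSolution γ b f₀ f) (i : Bool) (t : ℝ) : Measurable (Fs f i t) := by
  cases i
  · exact measurable_const.sub (hf.measurable t)
  · exact hf.measurable t

def massM (f₀ : R3 → ℝ) : ℝ := (∫ v : R3, f₀ v) + ∫ v : R3, f₀ v * ‖v‖ ^ 2

lemma sol_energy_integrable (hf : IsFDSolution γ b f₀ f) {t : ℝ} (ht : 0 ≤ t) :
    Integrable (fun v => f t v * ‖v‖ ^ 2) := by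
  refine (memL1s_two (hf.memL12 t ht)).mono' ?_ ?_
  · have := hf.measurable t
    apply Measurable.aestronglyMeasurable
    fun_prop
  · refine Filter.Eventually.of_forall fun v => ?_
    rw [norm_mul, Real.norm_eq_abs, norm_pow, norm_norm]
    nlinarith [abs_nonneg (f t v), sq_nonneg ‖v‖]

lemma M2_sol (hf : IsFDSolution γ b f₀ f) {t : ℝ} (ht : 0 ≤ t) :
    M2 (f t) = ENNReal.ofReal (massM f₀) := by
  unfold M2 massM
  rw [← hf.mass t ht, ← hf.energy t ht,
    ← integral_add (sol_integrable hf ht) (sol_energy_integrable hf ht),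
    ofReal_integral_eq_lintegral_ofReal]
  · congr 1
    ext v
    congr 1
    ring
  · exact (sol_integrable hf ht).add (sol_energy_integrable hf ht)
  · refine Filter.Eventually.of_forall fun v => ?_
    have := hf.nonneg t ht v
    show 0 ≤ f t v + f t v * ‖v‖ ^ 2
    positivity

lemma massM_nonneg (hf : IsFDSolution γ b f₀ f) : 0 ≤ massM f₀ := by
  unfold massM
  rw [← hf.mass 0 le_rfl, ← hf.energy 0 le_rfl]
  apply add_nonneg
  · exact integral_nonneg (fun v => hf.nonneg 0 le_rfl v)
  · exact integral_nonneg (fun v => mul_nonneg (hf.nonneg 0 le_rfl v) (by positivity))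

/-- The upper bound for the collision frequencies. -/
def Lam (b : ℝ → ℝ) (f₀ : R3 → ℝ) (v : R3) : ℝ := 64 * Cb b * (1 + ‖v‖ ^ 2) * massM f₀

lemma T3_sol_le (h0 : 0 ≤ γ) (h2 : γ ≤ 2) (hb : GradCutoff b) (hf : IsFDSolution γ b f₀ f)
    (i : Bool) {t : ℝ} (ht : 0 ≤ t) (v : R3) :
    T3 γ b (Fs f i t) (Fs f (!i) t) v ≤ Lam b f₀ v := by
  apply T3_le h0 h2 hb (Fs_meas hf _ _) (Fs_meas hf _ _) (Fs_nonneg hf _ ht) (Fs_le_one hf _ ht)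
    (Fs_nonneg hf _ ht) (Fs_le_one hf _ ht) (massM_nonneg hf)
  cases i
  · exact Or.inr (M2_sol hf ht).le
  · exact Or.inl (M2_sol hf ht).le

lemma T3_sol_nonneg (hb : GradCutoff b) (hf : IsFDSolution γ b f₀ f)
    (i : Bool) {t : ℝ} (ht : 0 ≤ t) (v : R3) :
    0 ≤ T3 γ b (Fs f i t) (Fs f (!i) t) v :=
  T3_nonneg hb (Fs_nonneg hf _ ht) (Fs_nonneg hf _ ht) v

theorem sol_key (h0 : 0 ≤ γ) (h2 : γ ≤ 2) (hb : GradCutoff b) (hf : IsFDSolution γ b f₀ f) :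
    ∃ Z : Set R3, volume Z = 0 ∧ ∀ v, v ∉ Z → f 0 v = f₀ v ∧
      ∀ (i : Bool) (s t α : ℝ), 0 ≤ s → s ≤ t → 0 ≤ α →
        (∀ τ ∈ Icc s t, α ≤ T3 γ b (Fs f i τ) (Fs f (!i) τ) v) →
        exp (-(2 * Lam b f₀ v * (t - s))) * (Fs f i s v + α * (t - s)) ≤ Fs f i t v := by
  obtain ⟨Z, hZ, hmild⟩ := hf.mild
  obtain ⟨G, hGm, hG⟩ := exists_joint hf
  refine ⟨Z, hZ, fun v hv => ?_⟩
  have hmv := fun t ht => hmild t ht v hv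
  have hGm' : Measurable (Function.uncurry (fun τ v => 1 - G τ v)) := measurable_const.sub hGm
  set A := fun τ => T3 γ b (f τ) (fun w => 1 - f τ w) v with hA
  set L := fun τ => T3 γ b (fun w => 1 - f τ w) (f τ) v with hL
  set A' := fun τ => T3 γ b (G τ) (fun w => 1 - G τ w) v with hA'
  set L' := fun τ => T3 γ b (fun w => 1 - G τ w) (G τ) v with hL'
  have hA'm : Measurable A' := T3_meas_time hb hGm hGm' v
  have hL'm : Measurable L' := T3_meas_time hb hGm' hGm v
  have eA : ∀ τ, 0 ≤ τ → A' τ = A τ := fun τ hτ =>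
    T3_congr (hG τ hτ) ((hG τ hτ).fun_comp (fun x => 1 - x)) v
  have eL : ∀ τ, 0 ≤ τ → L' τ = L τ := fun τ hτ =>
    T3_congr ((hG τ hτ).fun_comp (fun x => 1 - x)) (hG τ hτ) v
  have bA : ∀ τ, 0 ≤ τ → A τ ≤ Lam b f₀ v := fun τ hτ => T3_sol_le h0 h2 hb hf true hτ v
  have bL : ∀ τ, 0 ≤ τ → L τ ≤ Lam b f₀ v := fun τ hτ => T3_sol_le h0 h2 hb hf false hτ v
  have nA : ∀ τ, 0 ≤ τ → 0 ≤ A τ := fun τ hτ => T3_sol_nonneg hb hf true hτ v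
  have nL : ∀ τ, 0 ≤ τ → 0 ≤ L τ := fun τ hτ => T3_sol_nonneg hb hf false hτ v
  have eQ : ∀ τ, 0 ≤ τ → QFD γ b (f τ) v = A τ * (1 - f τ v) - f τ v * L τ := fun τ hτ =>
    QFD_eq h0 h2 hb (hf.measurable τ) (hf.nonneg τ hτ) (hf.le_one τ hτ) (M2_sol hf hτ).le v
  have hIntv : ∀ T, 0 ≤ T → IntervalIntegrable (fun τ => QFD γ b (f τ) v) volume 0 T := by
    intro T hT
    refine mild_integrable (y := fun t => f t v) (A := A') (L := L') (Λ := Lam b f₀ v) (y0 := f₀ v)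
      (fun t ht => hf.nonneg t ht v) (fun t ht => hf.le_one t ht v) hA'm hL'm ?_ ?_ ?_ hmv hT
    · intro t ht; rw [eA t ht, abs_of_nonneg (nA t ht)]; exact bA t ht
    · intro t ht; rw [eL t ht, abs_of_nonneg (nL t ht)]; exact bL t ht
    · intro t ht
      rw [eA t ht, eL t ht]; exact eQ t ht
  have hdiff : ∀ x z, 0 ≤ x → x ≤ z →
      IntervalIntegrable (fun τ => A τ * (1 - f τ v) - f τ v * L τ) volume x z ∧
      f z v - f x v = ∫ τ in x..z, (A τ * (1 - f τ v) - f τ v * L τ) := by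
    intro x z hx hxz
    have hz := hx.trans hxz
    have i1 := hIntv x hx
    have i2 := hIntv z hz
    have i3 := i1.symm.trans i2
    have hEq : EqOn (fun τ => QFD γ b (f τ) v) (fun τ => A τ * (1 - f τ v) - f τ v * L τ) (uIcc x z) := by
      intro τ hτ
      rw [uIcc_of_le hxz] at hτ
      exact eQ τ (hx.trans hτ.1)
    constructor
    · exact i3.congr (fun τ hτ => hEq (uIoc_subset_uIcc hτ))
    · rw [hmv z hz, hmv x hx, ← intervalIntegral.integral_congr hEq,
        ← intervalIntegral.integral_interval_sub_left i2 i1]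
      ring
  have hcont : ∀ s t, 0 ≤ s → s ≤ t → ContinuousOn (fun τ => f τ v) (Icc s t) := by
    intro s t hs hst
    have hi : IntegrableOn (fun τ => QFD γ b (f τ) v) (uIcc 0 t) := by
      rw [uIcc_of_le (hs.trans hst), integrableOn_Icc_iff_integrableOn_Ioc]
      exact (intervalIntegrable_iff_integrableOn_Ioc_of_le (hs.trans hst)).mp (hIntv t (hs.trans hst))
    have hc := intervalIntegral.continuousOn_primitive_interval hi
    rw [uIcc_of_le (hs.trans hst)] at hc
    refine ((continuousOn_const (c := f₀ v)).add (hc.mono (Icc_subset_Icc_left hs))).congr ?_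
    intro τ hτ
    exact hmv τ (hs.trans hτ.1)
  refine ⟨by simpa using hmv 0 le_rfl, ?_⟩
  intro i s t α hs hst hα hlow
  cases i
  · refine ode_lower (y := fun τ => 1 - f τ v) (A := L) (L := A) hst hα
      (continuousOn_const.sub (hcont s t hs hst)) ?_ ?_ hlow ?_ ?_ ?_ ?_
    · intro τ hτ; exact sub_nonneg.mpr (hf.le_one τ (hs.trans hτ.1) v)
    · intro τ hτ; exact sub_le_self _ (hf.nonneg τ (hs.trans hτ.1) v)
    · intro τ hτ; exact bL τ (hs.trans hτ.1)
    · intro τ hτ; exact bA τ (hs.trans hτ.1)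
    · have := (hdiff s t hs hst).1.neg
      refine this.congr (fun τ _ => ?_)
      show -(A τ * (1 - f τ v) - f τ v * L τ) = L τ * (1 - (1 - f τ v)) - (1 - f τ v) * A τ
      ring
    · intro x z hx hxz hz
      have := (hdiff x z (hs.trans hx) hxz).2
      have e : ∀ τ, L τ * (1 - (1 - f τ v)) - (1 - f τ v) * A τ = -(A τ * (1 - f τ v) - f τ v * L τ) := by
        intro τ; ring
      simp_rw [e]
      rw [intervalIntegral.integral_neg, ← this]
      ring
  · refine ode_lower (y := fun τ => f τ v) (A := A) (L := L) hst hα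
      (hcont s t hs hst) ?_ ?_ hlow ?_ ?_ ?_ ?_
    · intro τ hτ; exact (hf.nonneg τ (hs.trans hτ.1) v)
    · intro τ hτ; exact (hf.le_one τ (hs.trans hτ.1) v)
    · intro τ hτ; exact bA τ (hs.trans hτ.1)
    · intro τ hτ; exact bL τ (hs.trans hτ.1)
    · exact (hdiff s t hs hst).1
    · intro x z hx hxz hz
      exact (hdiff x z (hs.trans hx) hxz).2

end key


lemma b_lower {b : ℝ → ℝ} {c_b : ℝ} (hH2 : ∀ θ ∈ Icc (π/4) (3*π/4), c_b ≤ b (Real.cos θ))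
    {x : ℝ} (hx : |x| ≤ 1/2) : c_b ≤ b x := by
  rw [abs_le] at hx
  have hs : (1:ℝ)/2 ≤ √2/2 := by
    have : (1:ℝ) ≤ √2 := by rw [Real.one_le_sqrt]; norm_num
    linarith
  have h1 : π/4 ≤ arccos x := by
    have : arccos (cos (π/4)) = π/4 := arccos_cos (by positivity) (by linarith [pi_pos])
    rw [← this, cos_pi_div_four]
    exact arccos_le_arccos (by linarith)
  have h2 : arccos x ≤ 3*π/4 := by
    have h3 : arccos (cos (3*π/4)) = 3*π/4 := arccos_cos (by positivity) (by linarith [pi_pos])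
    have h4 : cos (3*π/4) = -(√2/2) := by
      rw [← cos_pi_div_four, ← cos_pi_sub]
      congr 1
      ring
    rw [← h3, h4]
    exact arccos_le_arccos (by linarith)
  have := hH2 _ ⟨h1, h2⟩
  rwa [cos_arccos (by linarith) (by linarith)] at this

lemma lint_sin {a c : ℝ} (hac : a ≤ c) (ha : 0 ≤ a) (hc : c ≤ π) :
    ∫⁻ θ in Ioc a c, ENNReal.ofReal (sin θ) = ENNReal.ofReal (cos a - cos c) := by
  rw [← integral_sin, intervalIntegral.integral_of_le hac, ofReal_integral_eq_lintegral_ofReal]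
  · exact (intervalIntegrable_iff_integrableOn_Ioc_of_le hac).mp (continuous_sin.intervalIntegrable _ _)
  · rw [Filter.EventuallyLE, ae_restrict_iff' measurableSet_Ioc]
    refine Filter.Eventually.of_forall fun θ hθ => ?_
    exact sin_nonneg_of_nonneg_of_le_pi (ha.trans hθ.1.le) (hθ.2.trans hc)

lemma band_lower {k : R3} (hk : ‖k‖ = 1) {κ : ℝ} (h0 : 0 ≤ κ) (h1 : κ ≤ 1) :
    ENNReal.ofReal (4 * π * κ) ≤ sphMeasure {σ : S2 | |⟪k, (σ:R3)⟫| ≤ κ} := by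
  have hs : MeasurableSet (Icc (-κ) κ) := measurableSet_Icc
  have h := sph_preimage k hk (Icc (-κ) κ) hs
  have e : {σ : S2 | |⟪k, (σ:R3)⟫| ≤ κ} = {σ : S2 | ⟪k, (σ:R3)⟫ ∈ Icc (-κ) κ} := by
    ext σ
    exact (abs_le (a := ⟪k, (σ:R3)⟫) (b := κ))
  rw [e, h]
  have e2 : (4 * π * κ) = (2 * π) * (2 * κ) := by ring
  rw [e2, ENNReal.ofReal_mul (by positivity)]
  refine mul_le_mul_right ?_ _
  have e3 : 2 * κ = cos (arccos κ) - cos (arccos (-κ)) := by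
    rw [cos_arccos (by linarith) h1, cos_arccos (by linarith) (by linarith)]; ring
  rw [e3, ← lint_sin (arccos_le_arccos (by linarith)) (arccos_nonneg _) (arccos_le_pi _),
    ← Measure.restrict_congr_set Ioo_ae_eq_Ioc,
    ← lintegral_indicator measurableSet_Ioo, ← lintegral_indicator measurableSet_Ioo]
  apply lintegral_mono
  intro θ
  by_cases hθ : θ ∈ Ioo (arccos κ) (arccos (-κ))
  · have hm : θ ∈ Ioo 0 π := ⟨(arccos_nonneg _).trans_lt hθ.1, hθ.2.trans_le (arccos_le_pi _)⟩
    rw [indicator_of_mem hθ, indicator_of_mem hm]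
    have hc : cos θ ∈ Icc (-κ) κ := by
      constructor
      · rw [← cos_arccos (by linarith : -1 ≤ -κ) (by linarith)]
        exact cos_le_cos_of_nonneg_of_le_pi hm.1.le (arccos_le_pi _) hθ.2.le
      · rw [← cos_arccos (by linarith : -1 ≤ κ) h1]
        exact cos_le_cos_of_nonneg_of_le_pi (arccos_nonneg _) hm.2.le hθ.1.le
    rw [indicator_of_mem hc]
    simp
  · rw [indicator_of_notMem hθ]
    exact zero_le

lemma sph_univ : sphMeasure univ ≤ ENNReal.ofReal (4 * π) := by
  have hk : ‖(EuclideanSpace.single 0 1 : R3)‖ = 1 := by simp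
  have h := sph_preimage _ hk univ MeasurableSet.univ
  simp only [mem_univ, indicator_univ, Pi.one_apply, mul_one] at h
  have e : sphMeasure univ = sphMeasure {σ : S2 | True} := by congr
  rw [e, h, Measure.restrict_congr_set Ioo_ae_eq_Ioc, lint_sin pi_pos.le le_rfl le_rfl,
    ← ENNReal.ofReal_mul (by positivity)]
  apply ENNReal.ofReal_le_ofReal
  simp
  linarith

lemma T3_lower {γ : ℝ} (h0 : 0 ≤ γ) (h2 : γ ≤ 2) {b : ℝ → ℝ} (hb : GradCutoff b) {h k : R3 → ℝ}
    (hh : Measurable h) (hk : Measurable k) (hh0 : ∀ w, 0 ≤ h w) (hh1 : ∀ w, h w ≤ 1)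
    (hk0 : ∀ w, 0 ≤ k w) (hk1 : ∀ w, k w ≤ 1) {M : ℝ}
    (hM : M2 h ≤ ENNReal.ofReal M ∨ M2 k ≤ ENNReal.ofReal M) (v : R3)
    {G : Set (R3 × S2)} (hG : MeasurableSet G) {β m : ℝ} (hβ : 0 ≤ β)
    (hm : ENNReal.ofReal m ≤ colM G)
    (hlow : ∀ᵐ p ∂colM, p ∈ G → β ≤ Bker γ b v p.1 p.2 *
      (h (vOut v p.1 p.2) * h (vOutStar v p.1 p.2) * k p.1)) :
    β * m ≤ T3 γ b h k v := by
  have h3 := T3_int_meas (γ := γ) hb hh hk v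
  have h4 : ENNReal.ofReal (T3 γ b h k v) = ∫⁻ p, ENNReal.ofReal (Bker γ b v p.1 p.2 *
      (h (vOut v p.1 p.2) * h (vOutStar v p.1 p.2) * k p.1)) ∂colM :=
    ofReal_integral_eq_lintegral_ofReal (T3_integrable h0 h2 hb hh hk hh0 hh1 hk0 hk1 hM v)
      (Filter.Eventually.of_forall (fun p => T3_int_nonneg hb hh0 hk0 v p))
  rw [← ENNReal.ofReal_le_ofReal_iff (T3_nonneg hb hh0 hk0 v), h4, ENNReal.ofReal_mul hβ]
  calc ENNReal.ofReal β * ENNReal.ofReal m ≤ ENNReal.ofReal β * colM G := by gcongr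
    _ = ∫⁻ p in G, ENNReal.ofReal β ∂colM := by rw [setLIntegral_const]
    _ = ∫⁻ p, G.indicator (fun _ => ENNReal.ofReal β) p ∂colM := (lintegral_indicator hG _).symm
    _ ≤ _ := by
      apply lintegral_mono_ae
      filter_upwards [hlow] with p hp
      by_cases hpG : p ∈ G
      · rw [indicator_of_mem hpG]
        exact ENNReal.ofReal_le_ofReal (hp hpG)
      · rw [indicator_of_notMem hpG]
        exact zero_le

/-- geometry of nearly orthogonal collisions -/
lemma geom {a u e : R3} {r ε : ℝ} (hr : 0 < r) (hε : 0 < ε) (hε1 : ε ≤ 1) (he : ‖e‖ = 1)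
    (ha : ‖a‖ < √2 * (1 - ε) * r) (hu : ‖u‖ < ε / 8 * r) (hc : ⟪a - u, e⟫ ≤ ε / 8 * ‖a - u‖) :
    ‖(2⁻¹:ℝ) • (a + u) + (‖a - u‖ / 2) • e‖ < r := by
  have hs0 : 0 ≤ √2 := by positivity
  have hs2 : √2 ^ 2 = 2 := Real.sq_sqrt (by norm_num)
  have hs : √2 ≤ 3/2 := by nlinarith
  have hA : ‖a‖ ^ 2 ≤ 2 * (1 - ε)^2 * r^2 := by
    have : ‖a‖ ^ 2 ≤ (√2 * (1 - ε) * r)^2 := by gcongr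
    calc ‖a‖ ^ 2 ≤ (√2 * (1 - ε) * r)^2 := this
      _ = √2^2 * (1-ε)^2 * r^2 := by ring
      _ = _ := by rw [hs2]
  have hU : ‖u‖ ^ 2 ≤ (ε/8 * r)^2 := by gcongr
  have hz : ‖a - u‖ ≤ 2 * r := by
    have h1 := norm_sub_le a u
    have h2 : √2 * (1 - ε) * r ≤ 3/2 * r := by
      have : √2 * (1 - ε) ≤ 3/2 := by nlinarith
      gcongr
    nlinarith
  have hin : ⟪a + u, e⟫ ≤ ε/8 * ‖a - u‖ + 2 * (ε/8 * r) := by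
    have h1 : a + u = (a - u) + (2:ℝ) • u := by module
    have h2 : ⟪u, e⟫ ≤ ‖u‖ := by
      have := real_inner_le_norm u e
      rwa [he, mul_one] at this
    rw [h1, inner_add_left, real_inner_smul_left]
    linarith
  have hpar := parallelogram_law_with_norm ℝ a u
  have hsq : ‖(2⁻¹:ℝ) • (a + u) + (‖a - u‖ / 2) • e‖ ^ 2 < r ^ 2 := by
    rw [norm_add_sq_real, norm_smul, norm_smul, real_inner_smul_left, real_inner_smul_right, he]
    rw [Real.norm_eq_abs, Real.norm_eq_abs, abs_of_nonneg (by positivity : (0:ℝ) ≤ ‖a - u‖/2),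
      abs_of_pos (by norm_num : (0:ℝ) < 2⁻¹)]
    have hn := norm_nonneg (a - u)
    have k1 : ‖a - u‖ * ⟪a + u, e⟫ ≤ ‖a-u‖ * (ε/8 * ‖a - u‖ + 2 * (ε/8 * r)) :=
      mul_le_mul_of_nonneg_left hin hn
    have k2 : ‖a - u‖ * (ε/8 * ‖a - u‖ + 2 * (ε/8 * r)) ≤ (2*r) * (ε/8 * (2 * r) + 2 * (ε/8 * r)) := by
      gcongr
    have k3 : (‖a+u‖^2 + ‖a-u‖^2) / 4 ≤ (1-ε)^2 * r^2 + (ε/8*r)^2/2 := by nlinarith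
    have k4 : (1-ε)^2 * r^2 + (ε/8*r)^2/2 + (1/2) * ((2*r) * (ε/8 * (2 * r) + 2 * (ε/8 * r))) < r^2 := by
      have hr2 : 0 < r^2 := by positivity
      have : (1-ε)^2 + (ε/8)^2/2 + ε/2 < 1 := by nlinarith
      nlinarith
    nlinarith
  exact lt_of_pow_lt_pow_left₀ 2 hr.le hsq

lemma vOut_sub (v w v0 : R3) (σ : S2) : vOut v w σ - v0 =
    (2⁻¹:ℝ) • ((v - v0) + (w - v0)) + (‖(v - v0) - (w - v0)‖ / 2) • (σ:R3) := by
  unfold vOut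
  rw [sub_sub_sub_cancel_right]
  module

lemma vOutStar_sub (v w v0 : R3) (σ : S2) : vOutStar v w σ - v0 =
    (2⁻¹:ℝ) • ((v - v0) + (w - v0)) + (‖(v - v0) - (w - v0)‖ / 2) • (-(σ:R3)) := by
  unfold vOutStar
  rw [sub_sub_sub_cancel_right]
  module

lemma cosz_mul {z e : R3} (hz : z ≠ 0) : ⟪z, e⟫ = cosz z e * ‖z‖ := by
  have : ‖z‖ ≠ 0 := norm_ne_zero_iff.mpr hz
  rw [cosz_eq]
  field_simp

lemma colM_band {v : R3} {W : Set R3} (hW : MeasurableSet W) (hne : v ∉ W) {κ : ℝ} (h0 : 0 ≤ κ)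
    (h1 : κ ≤ 1) :
    MeasurableSet {p : R3 × S2 | p.1 ∈ W ∧ |cosz (v - p.1) p.2| ≤ κ} ∧
    volume W * ENNReal.ofReal (4 * π * κ) ≤ colM {p : R3 × S2 | p.1 ∈ W ∧ |cosz (v - p.1) p.2| ≤ κ} := by
  have hcm : Measurable (fun p : R3 × S2 => cosz (v - p.1) p.2) :=
    cosz_meas_comp (by fun_prop) (by fun_prop)
  have hm : MeasurableSet {p : R3 × S2 | p.1 ∈ W ∧ |cosz (v - p.1) p.2| ≤ κ} := by
    apply MeasurableSet.inter
    · exact measurable_fst hW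
    · exact measurableSet_le hcm.abs measurable_const
  refine ⟨hm, ?_⟩
  rw [Measure.prod_apply hm, mul_comm, ← setLIntegral_const, ← lintegral_indicator hW]
  apply lintegral_mono
  intro w
  by_cases hw : w ∈ W
  · rw [indicator_of_mem hw]
    have hz : v - w ≠ 0 := by
      intro h
      rw [sub_eq_zero] at h
      exact hne (h ▸ hw)
    refine (band_lower (norm_unit hz) h0 h1).trans ?_
    apply measure_mono
    intro σ hσ
    exact ⟨hw, hσ⟩
  · rw [indicator_of_notMem hw]
    exact zero_le

lemma spread {γ : ℝ} (h0 : 0 ≤ γ) (h2 : γ ≤ 2) {b : ℝ → ℝ} (hb : GradCutoff b)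
    {c_b : ℝ} (hc_b : 0 < c_b) (hH2 : ∀ θ ∈ Icc (π/4) (3*π/4), c_b ≤ b (Real.cos θ))
    {h k : R3 → ℝ}
    (hh : Measurable h) (hk : Measurable k) (hh0 : ∀ w, 0 ≤ h w) (hh1 : ∀ w, h w ≤ 1)
    (hk0 : ∀ w, 0 ≤ k w) (hk1 : ∀ w, k w ≤ 1) {M : ℝ}
    (hM : M2 h ≤ ENNReal.ofReal M ∨ M2 k ≤ ENNReal.ofReal M) {v v0 : R3} {r ε c d m : ℝ}
    (hr : 0 < r) (hε : 0 < ε) (hε1 : ε ≤ 1) (hc : 0 ≤ c) (hd : 0 ≤ d)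
    (hlow : ∀ᵐ x, x ∈ Metric.ball v0 r → c ≤ h x)
    {W : Set R3} (hWm : MeasurableSet W) (hWs : W ⊆ Metric.ball v0 (ε / 8 * r))
    (hWk : ∀ᵐ x, x ∈ W → d ≤ k x) (hmW : ENNReal.ofReal m ≤ volume W)
    (hv1 : r ≤ ‖v - v0‖) (hv2 : ‖v - v0‖ < √2 * (1 - ε) * r) :
    (r / 2) ^ γ * c_b * (c ^ 2 * d) * (m * (4 * π * (ε / 8))) ≤ T3 γ b h k v := by
  have hne : v ∉ W := by
    intro hvW
    have := hWs hvW
    rw [Metric.mem_ball, dist_eq_norm] at this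
    nlinarith
  obtain ⟨hGm, hG⟩ := colM_band hWm hne (show 0 ≤ ε / 8 by positivity) (by linarith)
  refine T3_lower h0 h2 hb hh hk hh0 hh1 hk0 hk1 hM v hGm (by positivity) ?_ ?_
  · refine le_trans ?_ hG
    rw [ENNReal.ofReal_mul' (by positivity)]
    gcongr
  · filter_upwards [ae_out (hlow.and hWk) v] with p hp hpG
    obtain ⟨hp1, hp2, hp3⟩ := hp
    obtain ⟨hw, hcos⟩ := hpG
    have hu := hWs hw
    rw [Metric.mem_ball, dist_eq_norm] at hu
    have hz : v - p.1 ≠ 0 := by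
      intro h
      rw [sub_eq_zero] at h
      exact hne (h ▸ hw)
    have ezz : (v - v0) - (p.1 - v0) = v - p.1 := sub_sub_sub_cancel_right _ _ _
    have hzz : r / 2 ≤ ‖v - p.1‖ := by
      rw [← ezz]
      have := norm_sub_norm_le (v - v0) (p.1 - v0)
      nlinarith
    have hcos' := abs_le.mp hcos
    have o1 : c ≤ h (vOut v p.1 p.2) := by
      apply hp1.1
      rw [Metric.mem_ball, dist_eq_norm, vOut_sub]
      apply geom hr hε hε1 (S2_norm _) hv2 hu
      rw [ezz, cosz_mul hz]
      have := norm_nonneg (v - p.1)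
      nlinarith
    have o2 : c ≤ h (vOutStar v p.1 p.2) := by
      apply hp2.1
      rw [Metric.mem_ball, dist_eq_norm, vOutStar_sub]
      apply geom hr hε hε1 (by rw [norm_neg, S2_norm]) hv2 hu
      rw [ezz, inner_neg_right, cosz_mul hz]
      have := norm_nonneg (v - p.1)
      nlinarith
    have o3 : d ≤ k p.1 := hp3.2 hw
    have o4 : c_b ≤ b (cosz (v - p.1) p.2) := b_lower hH2 (hcos.trans (by linarith))
    unfold Bker
    rw [cosAngle_eq]
    have o5 : (r/2)^γ ≤ ‖v - p.1‖ ^ γ := Real.rpow_le_rpow (by positivity) hzz h0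
    have : c ^ 2 * d ≤ h (vOut v p.1 p.2) * h (vOutStar v p.1 p.2) * k p.1 := by
      rw [pow_two]
      exact mul_le_mul (mul_le_mul o1 o2 hc (hh0 _)) o3 hd (mul_nonneg (hh0 _) (hh0 _))
    refine mul_le_mul (mul_le_mul o5 o4 hc_b.le (by positivity)) this (by positivity) ?_
    exact mul_nonneg (by positivity) (hb.nonneg _)


lemma bad_vol {e : R3} (he : ‖e‖ = 1) {N : Set R3} (hN : MeasurableSet N) (v : R3) :
    volume {w : R3 | v - w ≠ 0 ∧ -(1/2) ≤ cosz (v - w) e ∧ v - Tm e (v - w) ∈ N} ≤ 16 * volume N := by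
  set N' : Set R3 := (fun y => v - y) ⁻¹' N with hN'
  have hN'm : MeasurableSet N' := (by fun_prop : Measurable fun y : R3 => v - y) hN
  have hvol : volume N' = volume N :=
    (Measure.measurePreserving_sub_left volume v).measure_preimage hN.nullMeasurableSet
  have h := Tm_cov he (show (-1:ℝ) < -(1/2) by norm_num) (N'.indicator 1)
  have e16 : ENNReal.ofReal (8 / (1 + -(1/2))) = 16 := by
    rw [show (8:ℝ) / (1 + -(1/2)) = 16 by norm_num]
    norm_num
  rw [e16, lintegral_indicator_one hN'm, hvol] at h
  have hm : MeasurableSet (Tm e ⁻¹' N') := (Tm_continuous e).measurable hN'm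
  have e1 : (fun z => N'.indicator (1 : R3 → ℝ≥0∞) (Tm e z)) = (Tm e ⁻¹' N').indicator 1 := by
    ext z; rfl
  rw [e1, lintegral_indicator_one hm, Measure.restrict_apply hm] at h
  refine le_trans ?_ h
  have hS : MeasurableSet (Tm e ⁻¹' N' ∩ {z | z ≠ 0 ∧ -(1/2) ≤ cosz z e}) := by
    apply hm.inter
    apply MeasurableSet.inter
    · exact (measurableSet_singleton (0:R3)).compl
    · exact measurableSet_le measurable_const (cosz_measurable e)
  rw [← (Measure.measurePreserving_sub_left volume v).measure_preimage hS.nullMeasurableSet]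
  apply measure_mono
  rintro w ⟨h1, h2, h3⟩
  exact ⟨h3, h1, h2⟩

lemma Tm_norm_le {e : R3} (he : ‖e‖ = 1) (z : R3) : ‖Tm e z‖ ≤ ‖z‖ := by
  unfold Tm
  rw [norm_smul]
  have := norm_add_le z (‖z‖ • e)
  rw [norm_smul, he, norm_norm, mul_one] at this
  rw [Real.norm_eq_abs, abs_of_pos (by norm_num : (0:ℝ) < 2⁻¹)]
  linarith

lemma vol_cball (v0 : R3) {r : ℝ} (hr : 0 ≤ r) :
    volume (Metric.closedBall v0 r) = ENNReal.ofReal (r ^ 3 * (π * 4 / 3)) := by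
  rw [EuclideanSpace.volume_closedBall_fin_three, ENNReal.ofReal_mul (by positivity),
    ENNReal.ofReal_pow hr]

lemma vol_ball (v0 : R3) {r : ℝ} (hr : 0 ≤ r) :
    volume (Metric.ball v0 r) = ENNReal.ofReal (r ^ 3 * (π * 4 / 3)) := by
  rw [EuclideanSpace.volume_ball_fin_three, ENNReal.ofReal_mul (by positivity),
    ENNReal.ofReal_pow hr]

lemma dense_gain {γ : ℝ} (h0 : 0 ≤ γ) (h2 : γ ≤ 2) {b : ℝ → ℝ} (hb : GradCutoff b)
    {c_b : ℝ} (hc_b : 0 < c_b) (hH2 : ∀ θ ∈ Icc (π/4) (3*π/4), c_b ≤ b (Real.cos θ))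
    {h k : R3 → ℝ}
    (hh : Measurable h) (hk : Measurable k) (hh0 : ∀ w, 0 ≤ h w) (hh1 : ∀ w, h w ≤ 1)
    (hk0 : ∀ w, 0 ≤ k w) (hk1 : ∀ w, k w ≤ 1) {M : ℝ}
    (hM : M2 h ≤ ENNReal.ofReal M ∨ M2 k ≤ ENNReal.ofReal M) {v v0 : R3} {r c : ℝ}
    (hr : 0 < r) (hc : 0 ≤ c) {E : Set R3} (hE : MeasurableSet E)
    (hlow : ∀ᵐ x, x ∈ E → x ∈ Metric.closedBall v0 r → c ≤ h x ∧ c ≤ k x)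
    (hdens : volume (Metric.closedBall v0 r \ E) ≤ ENNReal.ofReal (1/100000 * (r ^ 3 * (π * 4 / 3))))
    (hv : ‖v - v0‖ < r / 32) :
    (r / 32) ^ γ * c_b * (c * c * c) * (1/1000 * r ^ 3 * (π * 4 / 3)) ≤ T3 γ b h k v := by
  set B := Metric.closedBall v0 r with hB
  set ω : ℝ := π * 4 / 3 with hω
  have hωp : 0 < ω := by positivity
  set W : Set R3 := Metric.closedBall v0 (r/8) \ Metric.closedBall v0 (r/16) with hW
  have hWm : MeasurableSet W := Metric.isClosed_closedBall.measurableSet.diff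
    Metric.isClosed_closedBall.measurableSet
  have hWvol : volume W = ENNReal.ofReal (7/4096 * r^3 * ω) := by
    rw [hW, measure_sdiff (Metric.closedBall_subset_closedBall (by linarith))
      Metric.isClosed_closedBall.measurableSet.nullMeasurableSet (by
        rw [vol_cball _ (by positivity)]; exact ENNReal.ofReal_ne_top),
      vol_cball _ (by positivity), vol_cball _ (by positivity),
      ← ENNReal.ofReal_sub _ (by positivity)]
    congr 1
    ring
  have hne : v ∉ W := by
    intro hvW
    apply hvW.2
    rw [Metric.mem_closedBall, dist_eq_norm]
    linarith
  obtain ⟨hGm, hG⟩ := colM_band hWm hne (show (0:ℝ) ≤ 1/2 by norm_num) (by norm_num)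
  set G0 : Set (R3 × S2) := {p : R3 × S2 | p.1 ∈ W ∧ |cosz (v - p.1) p.2| ≤ 1/2} with hG0
  set N : Set R3 := B \ E with hN
  have hNm : MeasurableSet N := Metric.isClosed_closedBall.measurableSet.diff hE
  have mO : Measurable (fun p : R3 × S2 => vOut v p.1 p.2) :=
    ((vOut_continuous.comp (by fun_prop : Continuous fun p : R3 × S2 => (v, p))).measurable)
  have mOS : Measurable (fun p : R3 × S2 => vOutStar v p.1 p.2) :=
    ((vOutStar_continuous.comp (by fun_prop : Continuous fun p : R3 × S2 => (v, p))).measurable)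
  set G : Set (R3 × S2) := ((G0 \ (Prod.fst ⁻¹' N)) \ ((fun p : R3 × S2 => vOut v p.1 p.2) ⁻¹' N)) \
    ((fun p : R3 × S2 => vOutStar v p.1 p.2) ⁻¹' N) with hGdef
  have hGmeas : MeasurableSet G :=
    ((hGm.diff (measurable_fst hNm)).diff (mO hNm)).diff (mOS hNm)
  have hz0 : ∀ p ∈ G0, v - p.1 ≠ 0 := by
    intro p hp h
    rw [sub_eq_zero] at h
    exact hne (h ▸ hp.1)
  have hnW : ∀ w ∈ W, ‖v - w‖ ≤ r/32 + r/8 := by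
    intro w hw
    have h1 := hw.1
    rw [Metric.mem_closedBall, dist_eq_norm] at h1
    have := norm_sub_le (v - v0) (w - v0)
    rw [sub_sub_sub_cancel_right] at this
    linarith
  have hTB : ∀ p ∈ G0, ∀ e : R3, ‖e‖ = 1 → v - Tm e (v - p.1) ∈ B := by
    intro p hp e he
    rw [hB, Metric.mem_closedBall, dist_eq_norm, sub_right_comm]
    have h1 := norm_sub_le (v - v0) (Tm e (v - p.1))
    have h2 := Tm_norm_le he (v - p.1)
    have h3 := hnW _ hp.1
    linarith
  have bound : ∀ s : ℝ, |s| = 1 → colM (G0 ∩ {p : R3 × S2 | v - Tm (s • (p.2:R3)) (v - p.1) ∈ N})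
      ≤ 16 * volume N * ENNReal.ofReal (4 * π) := by
    intro s hs
    have hTmm : Measurable (fun p : R3 × S2 => v - Tm (s • (p.2:R3)) (v - p.1)) := by
      unfold Tm
      fun_prop
    have hmm : MeasurableSet (G0 ∩ {p : R3 × S2 | v - Tm (s • (p.2:R3)) (v - p.1) ∈ N}) :=
      hGm.inter (hTmm hNm)
    rw [Measure.prod_apply_symm hmm]
    calc _ ≤ ∫⁻ σ : S2, 16 * volume N ∂sphMeasure := by
          apply lintegral_mono
          intro σ
          have he : ‖s • (σ:R3)‖ = 1 := by rw [norm_smul, Real.norm_eq_abs, hs, S2_norm, mul_one]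
          refine le_trans (measure_mono ?_) (bad_vol he hNm v)
          rintro w ⟨hw1, hw2⟩
          refine ⟨hz0 _ hw1, ?_, hw2⟩
          have h3 : |cosz (v - w) (s • (σ:R3))| ≤ 1/2 := by
            have : cosz (v - w) (s • (σ:R3)) = s * cosz (v - w) σ := by
              unfold cosz; rw [real_inner_smul_right]
            rw [this, abs_mul, hs, one_mul]
            exact hw1.2
          exact (abs_le.mp h3).1
      _ = 16 * volume N * sphMeasure univ := by rw [lintegral_const]
      _ ≤ _ := by gcongr; exact sph_univ
  have b1 : colM (G0 ∩ Prod.fst ⁻¹' N) ≤ volume N * ENNReal.ofReal (4 * π) := by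
    refine (measure_mono inter_subset_right).trans ?_
    have : (Prod.fst ⁻¹' N : Set (R3 × S2)) = N ×ˢ univ := by ext; simp
    rw [this, Measure.prod_prod]
    gcongr
    exact sph_univ
  have b2 : colM (G0 ∩ (fun p : R3 × S2 => vOut v p.1 p.2) ⁻¹' N)
      ≤ 16 * volume N * ENNReal.ofReal (4 * π) := by
    refine le_trans (measure_mono ?_) (bound (-1) (by norm_num))
    rintro p ⟨hp1, hp2⟩
    refine ⟨hp1, ?_⟩
    have : vOut v p.1 p.2 ∈ N := hp2
    rw [vOut_eq] at this
    show v - Tm ((-1:ℝ) • (p.2:R3)) (v - p.1) ∈ N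
    rwa [neg_one_smul]
  have b3 : colM (G0 ∩ (fun p : R3 × S2 => vOutStar v p.1 p.2) ⁻¹' N)
      ≤ 16 * volume N * ENNReal.ofReal (4 * π) := by
    refine le_trans (measure_mono ?_) (bound 1 (by norm_num))
    rintro p ⟨hp1, hp2⟩
    refine ⟨hp1, ?_⟩
    have : vOutStar v p.1 p.2 ∈ N := hp2
    rw [vOutStar_eq] at this
    show v - Tm ((1:ℝ) • (p.2:R3)) (v - p.1) ∈ N
    rwa [one_smul]
  have hcover : colM G0 ≤ colM G + 33 * (volume N * ENNReal.ofReal (4 * π)) := by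
    have hsub : G0 ⊆ G ∪ ((G0 ∩ Prod.fst ⁻¹' N) ∪ ((G0 ∩ (fun p : R3 × S2 => vOut v p.1 p.2) ⁻¹' N) ∪
        (G0 ∩ (fun p : R3 × S2 => vOutStar v p.1 p.2) ⁻¹' N))) := by
      intro p hp
      by_cases q1 : p ∈ Prod.fst ⁻¹' N
      · exact Or.inr (Or.inl ⟨hp, q1⟩)
      by_cases q2 : p ∈ (fun p : R3 × S2 => vOut v p.1 p.2) ⁻¹' N
      · exact Or.inr (Or.inr (Or.inl ⟨hp, q2⟩))
      by_cases q3 : p ∈ (fun p : R3 × S2 => vOutStar v p.1 p.2) ⁻¹' N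
      · exact Or.inr (Or.inr (Or.inr ⟨hp, q3⟩))
      exact Or.inl ⟨⟨⟨hp, q1⟩, q2⟩, q3⟩
    calc colM G0 ≤ _ := measure_mono hsub
      _ ≤ colM G + (colM (G0 ∩ Prod.fst ⁻¹' N) + (colM (G0 ∩ (fun p : R3 × S2 => vOut v p.1 p.2) ⁻¹' N)
          + colM (G0 ∩ (fun p : R3 × S2 => vOutStar v p.1 p.2) ⁻¹' N))) := by
        refine (measure_union_le _ _).trans (add_le_add le_rfl ?_)
        refine (measure_union_le _ _).trans (add_le_add le_rfl ?_)
        exact measure_union_le _ _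
      _ ≤ colM G + (volume N * ENNReal.ofReal (4 * π) + (16 * volume N * ENNReal.ofReal (4 * π)
          + 16 * volume N * ENNReal.ofReal (4 * π))) := by gcongr
      _ = _ := by ring
  have hfin : ENNReal.ofReal (1/1000 * r ^ 3 * ω) ≤ colM G := by
    have k1 : ENNReal.ofReal (7/4096 * r^3 * ω * (4 * π * (1/2))) ≤ colM G0 := by
      rw [ENNReal.ofReal_mul (by positivity), ← hWvol]; exact hG
    have k2 : 33 * (volume N * ENNReal.ofReal (4 * π)) ≤
        ENNReal.ofReal (33 * ((1/100000 * (r ^ 3 * ω)) * (4 * π))) := by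
      rw [ENNReal.ofReal_mul (p := 33) (by norm_num),
        ENNReal.ofReal_mul (p := 1/100000 * (r ^ 3 * ω)) (by positivity)]
      have : ENNReal.ofReal 33 = 33 := by norm_num
      rw [this]
      gcongr
    have k3 : ENNReal.ofReal (1/1000 * r ^ 3 * ω) +
        ENNReal.ofReal (33 * ((1/100000 * (r ^ 3 * ω)) * (4 * π))) ≤
        colM G + ENNReal.ofReal (33 * ((1/100000 * (r ^ 3 * ω)) * (4 * π))) := by
      calc _ = ENNReal.ofReal (1/1000 * r ^ 3 * ω + 33 * ((1/100000 * (r ^ 3 * ω)) * (4 * π))) := by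
            rw [ENNReal.ofReal_add (by positivity) (by positivity)]
        _ ≤ ENNReal.ofReal (7/4096 * r^3 * ω * (4 * π * (1/2))) := by
            apply ENNReal.ofReal_le_ofReal
            have hp : 3 < π := pi_gt_three
            have : 0 < r^3 * ω := by positivity
            have h5 : 1/1000 + 33 * (1/100000) * (4*π) ≤ 7/4096 * (4 * π * (1/2)) := by nlinarith
            nlinarith
        _ ≤ colM G0 := k1
        _ ≤ _ := hcover.trans (by gcongr)
    exact (ENNReal.add_le_add_iff_right ENNReal.ofReal_ne_top).mp k3
  refine T3_lower h0 h2 hb hh hk hh0 hh1 hk0 hk1 hM v hGmeas (by positivity) hfin ?_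
  filter_upwards [ae_out hlow v] with p hp hpG
  obtain ⟨⟨⟨hpG0, q1⟩, q2⟩, q3⟩ := hpG
  have inE : ∀ x ∈ B, x ∉ N → x ∈ E := by
    intro x hx hxN
    by_contra h
    exact hxN ⟨hx, h⟩
  have B1 : vOut v p.1 p.2 ∈ B := by rw [vOut_eq]; exact hTB p hpG0 _ (by rw [norm_neg, S2_norm])
  have B2 : vOutStar v p.1 p.2 ∈ B := by rw [vOutStar_eq]; exact hTB p hpG0 _ (S2_norm _)
  have B3 : p.1 ∈ B := Metric.closedBall_subset_closedBall (by linarith) hpG0.1.1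
  have o1 := (hp.1 (inE _ B1 q2) B1).1
  have o2 := (hp.2.1 (inE _ B2 q3) B2).1
  have o3 := (hp.2.2 (inE _ B3 q1) B3).2
  have o4 : c_b ≤ b (cosz (v - p.1) p.2) := b_lower hH2 hpG0.2
  have hzz : r / 32 ≤ ‖v - p.1‖ := by
    have h1 : r/16 < ‖p.1 - v0‖ := by
      have := hpG0.1.2
      rw [Metric.mem_closedBall, dist_eq_norm, not_le] at this
      exact this
    have := norm_sub_norm_le (p.1 - v0) (v - v0)
    rw [sub_sub_sub_cancel_right, norm_sub_rev p.1 v] at this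
    linarith
  unfold Bker
  rw [cosAngle_eq]
  have o5 : (r/32)^γ ≤ ‖v - p.1‖ ^ γ := Real.rpow_le_rpow (by positivity) hzz h0
  have : c * c * c ≤ h (vOut v p.1 p.2) * h (vOutStar v p.1 p.2) * k p.1 := by
    exact mul_le_mul (mul_le_mul o1 o2 hc (hh0 _)) o3 hc (mul_nonneg (hh0 _) (hh0 _))
  refine mul_le_mul (mul_le_mul o5 o4 hc_b.le (by positivity)) this (by positivity) ?_
  exact mul_nonneg (by positivity) (hb.nonneg _)

lemma entropy_set {g f₀ : R3 → ℝ} (hgf : g =ᵐ[volume] f₀)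
    (hg0 : ∀ v, 0 ≤ g v) (hg1 : ∀ v, g v ≤ 1) (hS : 0 < entropy f₀) :
    ∃ ε : ℝ, 0 < ε ∧ volume {v : R3 | ε ≤ g v ∧ g v ≤ 1 - ε} ≠ 0 := by
  by_contra hcon
  push Not at hcon
  have hU : volume (⋃ n : ℕ, {v : R3 | 1 / ((n:ℝ)+1) ≤ g v ∧ g v ≤ 1 - 1/((n:ℝ)+1)}) = 0 :=
    measure_iUnion_null (fun n => hcon _ (by positivity))
  have hae : ∀ᵐ v : R3, g v = 0 ∨ g v = 1 := by
    rw [ae_iff]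
    refine measure_mono_null ?_ hU
    intro v hv
    have hv' : ¬ (g v = 0 ∨ g v = 1) := hv
    push Not at hv'
    have p0 : 0 < g v := lt_of_le_of_ne (hg0 v) (Ne.symm hv'.1)
    have p1 : 0 < 1 - g v := sub_pos.mpr (lt_of_le_of_ne (hg1 v) hv'.2)
    obtain ⟨n, hn⟩ := exists_nat_one_div_lt (lt_min p0 p1)
    refine mem_iUnion.mpr ⟨n, ?_, ?_⟩
    · exact (hn.trans_le (min_le_left _ _)).le
    · have := (hn.trans_le (min_le_right _ _)).le
      linarith
  have : entropy f₀ = 0 := by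
    unfold entropy
    rw [neg_eq_zero]
    apply integral_eq_zero_of_ae
    filter_upwards [hae, hgf] with v hv he
    rw [← he]
    rcases hv with h | h <;> simp [h]
  linarith

lemma exists_density {E : Set R3} (hE : MeasurableSet E) (hpos : volume E ≠ 0) :
    ∃ (v0 : R3) (r : ℝ), 0 < r ∧ r ≤ 1 ∧
      volume (Metric.closedBall v0 r \ E) ≤ ENNReal.ofReal (1/100000 * (r ^ 3 * (π * 4 / 3))) := by
  have hd := Besicovitch.ae_tendsto_measure_inter_div (volume : Measure R3) E
  have hne : (ae (volume.restrict E)).NeBot := by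
    rw [ae_neBot]
    intro h
    rw [Measure.restrict_eq_zero] at h
    exact hpos h
  obtain ⟨v0, hv0⟩ := hd.exists
  have hlt : ENNReal.ofReal (1 - 1/100000) < 1 := by
    rw [ENNReal.ofReal_lt_one]; norm_num
  have hev := hv0.eventually (lt_mem_nhds hlt)
  have hev2 : ∀ᶠ r : ℝ in nhdsWithin 0 (Ioi 0), r ≤ 1 := by
    have : Iic (1:ℝ) ∈ nhds (0:ℝ) := Iic_mem_nhds (by norm_num)
    exact mem_nhdsWithin_of_mem_nhds this
  obtain ⟨r, ⟨h1, h2⟩, h3⟩ := ((hev.and hev2).and self_mem_nhdsWithin).exists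
  have hr : 0 < r := h3
  refine ⟨v0, r, hr, h2, ?_⟩
  have hV := vol_cball v0 hr.le
  set V : ℝ := r ^ 3 * (π * 4 / 3) with hVd
  have hVp : 0 < V := by positivity
  rw [hV] at h1
  have h4 : ENNReal.ofReal ((1 - 1/100000) * V) ≤ volume (E ∩ Metric.closedBall v0 r) := by
    rw [ENNReal.ofReal_mul (by norm_num)]
    exact ((ENNReal.lt_div_iff_mul_lt (Or.inl (by simpa using hVp))
      (Or.inl ENNReal.ofReal_ne_top)).mp h1).le
  have h5 : volume (Metric.closedBall v0 r ∩ E) + volume (Metric.closedBall v0 r \ E) =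
    ENNReal.ofReal V := by rw [measure_inter_add_sdiff _ hE, hV]
  rw [inter_comm] at h4
  have h6 : ENNReal.ofReal ((1 - 1/100000) * V) + volume (Metric.closedBall v0 r \ E) ≤
      ENNReal.ofReal ((1 - 1/100000) * V) + ENNReal.ofReal (1/100000 * V) := by
    rw [← ENNReal.ofReal_add (by norm_num; positivity) (by positivity)]
    calc _ ≤ _ := add_le_add_left h4 _
      _ = ENNReal.ofReal V := h5
      _ = _ := by congr 1; ring
  exact (ENNReal.add_le_add_iff_left ENNReal.ofReal_ne_top).mp h6


/-- The key property of solutions outside a null set. -/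
def KeyProp (γ : ℝ) (b : ℝ → ℝ) (f₀ : R3 → ℝ) (f : ℝ → R3 → ℝ) (Z : Set R3) : Prop :=
  volume Z = 0 ∧ ∀ v, v ∉ Z → f 0 v = f₀ v ∧ ∀ (i : Bool) (s t α : ℝ), 0 ≤ s → s ≤ t → 0 ≤ α →
    (∀ τ ∈ Icc s t, α ≤ T3 γ b (Fs f i τ) (Fs f (!i) τ) v) →
    exp (-(2 * Lam b f₀ v * (t - s))) * (Fs f i s v + α*(t-s)) ≤ Fs f i t v

section phases
variable {γ : ℝ} {b : ℝ → ℝ} {f₀ : R3 → ℝ} {f : ℝ → R3 → ℝ}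

lemma Lam_le (hb : GradCutoff b) (hf : IsFDSolution γ b f₀ f) {v : R3} {R : ℝ} (hv : ‖v‖ ≤ R) :
    Lam b f₀ v ≤ 64 * Cb b * (1 + R ^ 2) * massM f₀ := by
  unfold Lam
  have := massM_nonneg hf
  have := (Cb_pos hb).le
  gcongr

lemma Lam_nonneg (hb : GradCutoff b) (hf : IsFDSolution γ b f₀ f) (v : R3) : 0 ≤ Lam b f₀ v := by
  unfold Lam
  have := massM_nonneg hf
  have := (Cb_pos hb).le
  positivity

lemma M2_or (hf : IsFDSolution γ b f₀ f) (i : Bool) {t : ℝ} (ht : 0 ≤ t) :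
    M2 (Fs f i t) ≤ ENNReal.ofReal (massM f₀) ∨ M2 (Fs f (!i) t) ≤ ENNReal.ofReal (massM f₀) := by
  cases i
  · exact Or.inr (M2_sol hf ht).le
  · exact Or.inl (M2_sol hf ht).le

lemma phaseA (h0 : 0 ≤ γ) (h2 : γ ≤ 2) (hb : GradCutoff b)
    {c_b : ℝ} (hc_b : 0 < c_b) (hH2 : ∀ θ ∈ Icc (π/4) (3*π/4), c_b ≤ b (Real.cos θ))
    (hf : IsFDSolution γ b f₀ f) (hS : 0 < entropy f₀) {Z : Set R3} (hZ : KeyProp γ b f₀ f Z) :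
    ∃ (v0 : R3) (r : ℝ), 0 < r ∧ ∀ τ T : ℝ, 0 < τ → ∃ c : ℝ, 0 < c ∧
      ∀ i : Bool, ∀ v, v ∉ Z → ‖v - v0‖ < r → ∀ t ∈ Icc τ T, c ≤ Fs f i t v := by
  have hZae : ∀ᵐ v : R3, v ∉ Z := measure_eq_zero_iff_ae_notMem.mp hZ.1
  have hgf : f 0 =ᵐ[volume] f₀ := by
    filter_upwards [hZae] with v hv
    exact (hZ.2 v hv).1
  obtain ⟨ε, hε, hvol⟩ := entropy_set hgf (hf.nonneg 0 le_rfl) (hf.le_one 0 le_rfl) hS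
  have hEm : MeasurableSet {v : R3 | ε ≤ f 0 v ∧ f 0 v ≤ 1 - ε} :=
    (measurableSet_le measurable_const (hf.measurable 0)).inter
      (measurableSet_le (hf.measurable 0) measurable_const)
  obtain ⟨v0, r, hr, hr1, hdens⟩ := exists_density hEm hvol
  refine ⟨v0, r / 32, by positivity, ?_⟩
  intro τ T hτ
  set L : ℝ := 64 * Cb b * (1 + (‖v0‖ + 1) ^ 2) * massM f₀ with hL
  have hL0 : 0 ≤ L := by
    have := massM_nonneg hf
    have := (Cb_pos hb).le
    positivity
  have hLam : ∀ v : R3, ‖v - v0‖ ≤ 1 → Lam b f₀ v ≤ L := by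
    intro v hv
    apply Lam_le hb hf
    have := norm_le_norm_add_norm_sub' v v0
    linarith
  set c1 : ℝ := ε * exp (-(2 * L * T)) with hc1
  have hc1p : 0 < c1 := by positivity
  have hexp : ∀ v : R3, ‖v - v0‖ ≤ 1 → ∀ t, 0 ≤ t → t ≤ T →
      exp (-(2 * L * T)) ≤ exp (-(2 * Lam b f₀ v * (t - 0))) := by
    intro v hv t ht htT
    apply exp_le_exp.mpr
    have h1 := hLam v hv
    have h2 := Lam_nonneg hb hf v
    have : Lam b f₀ v * t ≤ L * T := mul_le_mul h1 htT ht hL0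
    rw [sub_zero]
    linarith
  have hE : ∀ v, v ∉ Z → v ∈ {v : R3 | ε ≤ f 0 v ∧ f 0 v ≤ 1 - ε} → ‖v - v0‖ ≤ 1 → ∀ i : Bool,
      ∀ t ∈ Icc 0 T, c1 ≤ Fs f i t v := by
    intro v hv hvE hn i t ht
    have h1 := (hZ.2 v hv).2 i 0 t 0 le_rfl ht.1 le_rfl
      (fun τ hτ => T3_sol_nonneg hb hf i hτ.1 v)
    have h2 := hexp v hn t ht.1 ht.2
    have h3 : ε ≤ Fs f i 0 v := by
      have a1 : ε ≤ f 0 v := hvE.1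
      have a2 : f 0 v ≤ 1 - ε := hvE.2
      cases i
      · show ε ≤ 1 - f 0 v
        linarith
      · exact a1
    rw [zero_mul, add_zero] at h1
    refine le_trans ?_ h1
    rw [hc1, mul_comm]
    exact mul_le_mul h2 h3 hε.le (exp_pos _).le
  set α : ℝ := (r / 32) ^ γ * c_b * (c1 * c1 * c1) * (1/1000 * r ^ 3 * (π * 4 / 3)) with hα
  have hαp : 0 < α := by positivity
  refine ⟨exp (-(2 * L * T)) * (α * τ), by positivity, ?_⟩
  intro i v hv hvn t ht
  have ht0 : 0 ≤ t := hτ.le.trans ht.1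
  have hn1 : ‖v - v0‖ ≤ 1 := by linarith
  have h1 := (hZ.2 v hv).2 i 0 t α le_rfl ht0 hαp.le (by
    intro s hs
    refine dense_gain h0 h2 hb hc_b hH2 (Fs_meas hf _ _) (Fs_meas hf _ _) (Fs_nonneg hf _ hs.1)
      (Fs_le_one hf _ hs.1) (Fs_nonneg hf _ hs.1) (Fs_le_one hf _ hs.1) (M2_or hf i hs.1)
      hr hc1p.le hEm ?_ hdens hvn
    filter_upwards [hZae] with x hx hxE hxB
    rw [Metric.mem_closedBall, dist_eq_norm] at hxB
    have hs' : s ∈ Icc 0 T := ⟨hs.1, hs.2.trans ht.2⟩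
    exact ⟨hE x hx hxE (hxB.trans hr1) i s hs', hE x hx hxE (hxB.trans hr1) (!i) s hs'⟩)
  refine le_trans ?_ h1
  have h2 := hexp v hn1 t ht0 ht.2
  refine mul_le_mul h2 ?_ (by positivity) (exp_pos _).le
  have := Fs_nonneg hf i le_rfl v
  rw [sub_zero]
  have := mul_le_mul_of_nonneg_left ht.1 hαp.le
  linarith

/-- radii -/
def rad (ρ : ℝ) (n : ℕ) : ℝ := √2 ^ n * ρ * (1 + (3/4:ℝ) ^ n)

/-- epsilons -/
def epsn (n : ℕ) : ℝ := (3/4:ℝ) ^ n / 8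

lemma sqrt2_sq : √2 * √2 = 2 := Real.mul_self_sqrt (by norm_num)

lemma sqrt2_pow_sq (n : ℕ) : (√2 ^ n) ^ 2 = 2 ^ n := by
  rw [← pow_mul, mul_comm, pow_mul, Real.sq_sqrt (by norm_num)]

lemma sqrt2_ge : 4/3 ≤ √2 := Real.le_sqrt_of_sq_le (by norm_num)

lemma rad_ge {ρ : ℝ} (hρ : 0 < ρ) (n : ℕ) : √2 ^ n * ρ ≤ rad ρ n := by
  unfold rad
  have : 0 < √2 ^ n * ρ := by positivity
  have : 0 < (3/4:ℝ)^n := by positivity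
  nlinarith

lemma rad_ge' {ρ : ℝ} (hρ : 0 < ρ) (n : ℕ) : ρ ≤ rad ρ n := by
  refine le_trans ?_ (rad_ge hρ n)
  have : 1 ≤ √2 ^ n := one_le_pow₀ (by linarith [sqrt2_ge])
  nlinarith

lemma rad_pos {ρ : ℝ} (hρ : 0 < ρ) (n : ℕ) : 0 < rad ρ n := hρ.trans_le (rad_ge' hρ n)

lemma rad_le {ρ : ℝ} (hρ : 0 < ρ) (n : ℕ) : rad ρ n ≤ 2 * (√2 ^ n * ρ) := by
  unfold rad
  have h1 : 0 < √2 ^ n * ρ := by positivity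
  have h2 : (3/4:ℝ)^n ≤ 1 := pow_le_one₀ (by norm_num) (by norm_num)
  nlinarith

lemma rad_sq_le {ρ : ℝ} (hρ : 0 < ρ) (n : ℕ) : rad ρ n ^ 2 ≤ 4 * ρ ^ 2 * 2 ^ n := by
  calc rad ρ n ^ 2 ≤ (2 * (√2 ^ n * ρ)) ^ 2 := by
        have := rad_le hρ n
        have := rad_pos hρ n
        gcongr
    _ = 4 * ρ ^ 2 * (√2 ^ n) ^ 2 := by ring
    _ = _ := by rw [sqrt2_pow_sq]

lemma rad_succ {ρ : ℝ} (hρ : 0 < ρ) (n : ℕ) :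
    rad ρ (n+1) ≤ √2 * (1 - epsn n) * rad ρ n := by
  unfold rad epsn
  have h1 : 0 < √2 ^ n * ρ * √2 := by positivity
  have h2 : (3/4:ℝ)^n ≤ 1 := pow_le_one₀ (by norm_num) (by norm_num)
  have h3 : 0 < (3/4:ℝ)^n := by positivity
  set q : ℝ := (3/4:ℝ)^n
  have h4 : 1 + q * (3/4) ≤ (1 - q/8) * (1 + q) := by nlinarith
  calc √2 ^ (n+1) * ρ * (1 + (3/4:ℝ)^(n+1)) = (√2 ^ n * ρ * √2) * (1 + q * (3/4)) := by
        rw [pow_succ, pow_succ]; ring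
    _ ≤ (√2 ^ n * ρ * √2) * ((1 - q/8) * (1 + q)) := by gcongr
    _ = _ := by ring

lemma eps_rad {ρ : ℝ} (hρ : 0 < ρ) (n : ℕ) : ρ / 64 ≤ epsn n / 8 * rad ρ n := by
  have h1 := rad_ge hρ n
  have h2 : 1 ≤ (3/4:ℝ)^n * √2 ^ n := by
    rw [← mul_pow]
    exact one_le_pow₀ (by linarith [sqrt2_ge])
  unfold epsn
  have h3 : 0 < (3/4:ℝ)^n := by positivity
  calc ρ / 64 ≤ ((3/4:ℝ)^n * √2 ^ n) * (ρ / 64) := le_mul_of_one_le_left (by positivity) h2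
    _ = (3/4:ℝ)^n / 64 * (√2 ^ n * ρ) := by ring
    _ ≤ (3/4:ℝ)^n / 64 * rad ρ n := by gcongr
    _ = _ := by ring

lemma rad_mono {ρ : ℝ} (hρ : 0 < ρ) (n : ℕ) : √2 ^ n * ρ < rad ρ n := by
  unfold rad
  have : 0 < √2 ^ n * ρ := by positivity
  have : 0 < (3/4:ℝ)^n := by positivity
  nlinarith

/-- Abstract iteration of the spreading step. -/
lemma iter (hb : GradCutoff b) (hf : IsFDSolution γ b f₀ f) {Z : Set R3} (hZ : KeyProp γ b f₀ f Z)
    (J : Bool → Prop) {e : ℕ} (he : 2 ≤ e) {v0 : R3} {ρ κ0 τ0 τ T c0 : ℝ} (hρ : 0 < ρ) (hκ0 : 0 < κ0)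
    (hτ0 : 0 ≤ τ0) (hτ : 0 < τ) (hc0 : 0 < c0)
    (hgain : ∀ t, 0 ≤ t → ∀ n : ℕ, ∀ c : ℝ, 0 ≤ c →
      (∀ i, J i → ∀ v, v ∉ Z → ‖v - v0‖ < rad ρ n → c ≤ Fs f i t v) →
      ∀ i, J i → ∀ v, rad ρ n ≤ ‖v - v0‖ → ‖v - v0‖ < rad ρ (n+1) →
        κ0 * ((3/4:ℝ)^4) ^ n * c ^ e ≤ T3 γ b (Fs f i t) (Fs f (!i) t) v)
    (hbase : ∀ i, J i → ∀ v, v ∉ Z → ‖v - v0‖ < rad ρ 0 → ∀ t ∈ Icc τ0 T, c0 ≤ Fs f i t v) :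
    ∃ x : ℝ, 0 < x ∧ x ≤ 1 ∧ ∀ n : ℕ, ∀ i, J i → ∀ v, v ∉ Z → ‖v - v0‖ < rad ρ n →
      ∀ t ∈ Icc (τ0 + τ) T, x ^ (e ^ n) ≤ Fs f i t v := by
  -- constants
  set A : ℝ := 64 * Cb b * (1 + 2 * ‖v0‖ ^ 2 + 8 * ρ ^ 2) * massM f₀ * τ with hA
  have hA0 : 0 ≤ A := by
    have := massM_nonneg hf
    have := (Cb_pos hb).le
    positivity
  set θ : ℝ := (3/4:ℝ)^4 / 2 with hθ
  have hθp : 0 < θ := by positivity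
  have hθ1 : θ ≤ 1 := by rw [hθ]; norm_num
  set κ : ℝ := min 1 (exp (-(2*A)) * (κ0 * (τ / 2))) with hκ
  have hκp : 0 < κ := lt_min one_pos (by positivity)
  have hκ1 : κ ≤ 1 := min_le_left _ _
  set G : ℝ := max 1 (θ⁻¹ / κ) with hG
  have hG1 : 1 ≤ G := le_max_left _ _
  have hG2 : θ⁻¹ ≤ κ * G := by
    have : θ⁻¹ / κ ≤ G := le_max_right _ _
    rw [div_le_iff₀ hκp] at this
    linarith
  have hg1 : 1 ≤ θ⁻¹ := (one_le_inv₀ hθp).mpr hθ1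
  have hGp : 0 < G := by linarith
  set x : ℝ := min c0 1 / G with hx
  have hxp : 0 < x := div_pos (lt_min hc0 one_pos) hGp
  have hx1 : x ≤ 1 := by
    rw [hx, div_le_one hGp]
    exact (min_le_right _ _).trans hG1
  -- step in the constants
  have hstep : ∀ n : ℕ, G * θ⁻¹ ^ (n+1) * x ^ (e^(n+1)) ≤
      κ * θ ^ n * (G * θ⁻¹ ^ n * x ^ (e^n)) ^ e := by
    intro n
    have a1 : (G * θ⁻¹ ^ n * x ^ (e^n)) ^ e = (G * θ⁻¹ ^ n) ^ e * x ^ (e^(n+1)) := by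
      rw [mul_pow, ← pow_mul, ← pow_succ]
    have a2 : (1:ℝ) ≤ G * θ⁻¹ ^ n := one_le_mul_of_one_le_of_one_le hG1 (one_le_pow₀ hg1)
    have a3 : (G * θ⁻¹ ^ n) ^ 2 ≤ (G * θ⁻¹ ^ n) ^ e := pow_le_pow_right₀ a2 he
    rw [a1, ← mul_assoc]
    apply mul_le_mul_of_nonneg_right _ (by positivity)
    calc G * θ⁻¹ ^ (n+1) = G * θ⁻¹ ^ n * θ⁻¹ := by ring
      _ ≤ G * θ⁻¹ ^ n * (κ * G) := by gcongr
      _ = κ * (θ * θ⁻¹) ^ n * G ^ 2 * θ⁻¹ ^ n := by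
          rw [mul_inv_cancel₀ hθp.ne', one_pow]; ring
      _ = κ * θ ^ n * (G * θ⁻¹ ^ n) ^ 2 := by rw [mul_pow]; ring
      _ ≤ _ := by gcongr
  have main : ∀ n : ℕ, ∀ i, J i → ∀ v, v ∉ Z → ‖v - v0‖ < rad ρ n →
      ∀ t ∈ Icc (τ0 + τ * (1 - (1/2:ℝ)^n)) T, G * θ⁻¹ ^ n * x ^ (e^n) ≤ Fs f i t v := by
    intro n
    induction n with
    | zero =>
      intro i hi v hv hvn t ht
      have : G * θ⁻¹ ^ 0 * x ^ (e^0) = min c0 1 := by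
        rw [pow_zero, pow_zero, pow_one, hx]
        field_simp
      rw [this]
      refine (min_le_left _ _).trans (hbase i hi v hv hvn t ?_)
      simpa using ht
    | succ n ih =>
      intro i hi v hv hvn t ht
      set c : ℝ := G * θ⁻¹ ^ n * x ^ (e^n) with hc
      have hcp : 0 < c := by positivity
      set Δ : ℝ := τ * (1/2:ℝ)^(n+1) with hΔ
      have hΔp : 0 < Δ := by positivity
      have hsn : τ0 + τ * (1 - (1/2:ℝ)^(n+1)) - Δ = τ0 + τ * (1 - (1/2:ℝ)^n) := by
        rw [hΔ, pow_succ]; ring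
      have hhalf : (1/2:ℝ)^n ≤ 1 := pow_le_one₀ (by norm_num) (by norm_num)
      have hs0 : 0 ≤ τ0 + τ * (1 - (1/2:ℝ)^n) := by
        have : 0 ≤ τ * (1 - (1/2:ℝ)^n) := mul_nonneg hτ.le (by linarith)
        linarith
      have hts : τ0 + τ * (1 - (1/2:ℝ)^n) ≤ t - Δ := by have := ht.1; linarith
      refine (hstep n).trans ?_
      by_cases hlt : ‖v - v0‖ < rad ρ n
      · have h1 := ih i hi v hv hlt t ⟨by linarith, ht.2⟩
        have h2 := Fs_le_one hf i (show 0 ≤ t by linarith) v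
        have hc1 : c ≤ 1 := h1.trans h2
        refine le_trans ?_ h1
        have h3 : c ^ e ≤ c := by
          calc c ^ e ≤ c ^ 1 := pow_le_pow_of_le_one hcp.le hc1 (by omega)
            _ = c := pow_one c
        have h4 : κ * θ ^ n ≤ 1 := mul_le_one₀ hκ1 (by positivity) (pow_le_one₀ hθp.le hθ1)
        calc κ * θ ^ n * c ^ e ≤ 1 * c := mul_le_mul h4 h3 (by positivity) (by norm_num)
          _ = c := one_mul c
      · rw [not_lt] at hlt
        have h1 := (hZ.2 v hv).2 i (t - Δ) t (κ0 * ((3/4:ℝ)^4) ^ n * c ^ e) (by linarith)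
          (by linarith) (by positivity) (by
            intro s hs
            refine hgain s (by have := hs.1; linarith) n c hcp.le ?_ i hi v hlt hvn
            intro j hj w hw hwn
            exact ih j hj w hw hwn s ⟨hts.trans hs.1, hs.2.trans ht.2⟩)
        refine le_trans ?_ h1
        have hLam : Lam b f₀ v * Δ ≤ A := by
          have k1 : ‖v‖ ≤ ‖v0‖ + rad ρ (n+1) := by
            have := norm_le_norm_add_norm_sub' v v0
            linarith
          have k2 := Lam_le hb hf k1
          have k3 := rad_sq_le hρ (n+1)
          have k4 : (1:ℝ) ≤ 2 ^ (n+1) := one_le_pow₀ (by norm_num)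
          have k5 : 1 + (‖v0‖ + rad ρ (n+1)) ^ 2 ≤ (1 + 2 * ‖v0‖ ^ 2 + 8 * ρ ^ 2) * 2 ^ (n+1) := by
            have := sq_nonneg (‖v0‖ - rad ρ (n+1))
            have : 1 + 2 * ‖v0‖^2 ≤ (1 + 2 * ‖v0‖^2) * 2 ^ (n+1) :=
              le_mul_of_one_le_right (by positivity) k4
            nlinarith
          have hm := massM_nonneg hf
          have hC := (Cb_pos hb).le
          calc Lam b f₀ v * Δ ≤ 64 * Cb b * ((1 + 2 * ‖v0‖ ^ 2 + 8 * ρ ^ 2) * 2 ^ (n+1)) * massM f₀ * Δ := by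
                refine mul_le_mul_of_nonneg_right (k2.trans ?_) hΔp.le
                gcongr
            _ = A * ((2:ℝ) * (1/2)) ^ (n+1) := by rw [hΔ, hA, mul_pow]; ring
            _ = A := by norm_num
        have hF := Fs_nonneg hf i (show 0 ≤ t - Δ by linarith) v
        have e1 : exp (-(2*A)) ≤ exp (-(2 * Lam b f₀ v * (t - (t - Δ)))) := by
          apply exp_le_exp.mpr
          rw [sub_sub_cancel]
          linarith
        calc κ * θ ^ n * c ^ e ≤ (exp (-(2*A)) * (κ0 * (τ / 2))) * θ ^ n * c ^ e := by
              gcongr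
              exact min_le_right _ _
          _ = exp (-(2*A)) * (κ0 * ((3/4:ℝ)^4) ^ n * c ^ e * (t - (t - Δ))) := by
              rw [sub_sub_cancel, hΔ, hθ, div_pow, pow_succ (1/2:ℝ), one_div_pow]; ring
          _ ≤ _ := by
              refine mul_le_mul e1 (by linarith) ?_ (exp_pos _).le
              rw [sub_sub_cancel]
              positivity
  refine ⟨x, hxp, hx1, ?_⟩
  intro n i hi v hv hvn t ht
  have h1 := main n i hi v hv hvn t ⟨by
    have : 0 ≤ τ * (1/2:ℝ)^n := by positivity
    have := ht.1
    nlinarith, ht.2⟩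
  refine le_trans ?_ h1
  have a2 : (1:ℝ) ≤ G * θ⁻¹ ^ n := one_le_mul_of_one_le_of_one_le hG1 (one_le_pow₀ hg1)
  exact le_mul_of_one_le_left (by positivity) a2

end phases


section phases2
variable {γ : ℝ} {b : ℝ → ℝ} {f₀ : R3 → ℝ} {f : ℝ → R3 → ℝ}

lemma gainW (h0 : 0 ≤ γ) (h2 : γ ≤ 2) (hb : GradCutoff b)
    {c_b : ℝ} (hc_b : 0 < c_b) (hH2 : ∀ θ ∈ Icc (π/4) (3*π/4), c_b ≤ b (Real.cos θ))
    (hf : IsFDSolution γ b f₀ f) {Z : Set R3} (hZ0 : volume Z = 0) {v0 : R3} {ρ t c d m : ℝ}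
    (hρ : 0 < ρ) (ht : 0 ≤ t) (n : ℕ) (hc : 0 ≤ c) (hd : 0 ≤ d) (hm : 0 ≤ m) (i : Bool)
    (hlow : ∀ v, v ∉ Z → ‖v - v0‖ < rad ρ n → c ≤ Fs f i t v)
    {W : Set R3} (hWm : MeasurableSet W) (hWs : W ⊆ Metric.ball v0 (ρ / 64))
    (hWk : ∀ x, x ∉ Z → x ∈ W → d ≤ Fs f (!i) t x) (hmW : ENNReal.ofReal m ≤ volume W)
    {v : R3} (hv1 : rad ρ n ≤ ‖v - v0‖) (hv2 : ‖v - v0‖ < rad ρ (n+1)) :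
    (ρ / 2) ^ γ * c_b * m * (π / 16) * ((3/4:ℝ)^4) ^ n * (c ^ 2 * d) ≤
      T3 γ b (Fs f i t) (Fs f (!i) t) v := by
  have hZae : ∀ᵐ v : R3, v ∉ Z := measure_eq_zero_iff_ae_notMem.mp hZ0
  have hr := rad_pos hρ n
  have hε : 0 < epsn n := by unfold epsn; positivity
  have hq1 : (3/4:ℝ)^n ≤ 1 := pow_le_one₀ (by norm_num) (by norm_num)
  have hε1 : epsn n ≤ 1 := by unfold epsn; linarith
  have h := spread h0 h2 hb hc_b hH2 (Fs_meas hf i t) (Fs_meas hf (!i) t) (Fs_nonneg hf _ ht)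
    (Fs_le_one hf _ ht) (Fs_nonneg hf _ ht) (Fs_le_one hf _ ht) (M2_or hf i ht) (v := v) (v0 := v0)
    (r := rad ρ n) (ε := epsn n) (c := c) (d := d) (m := m) hr hε hε1 hc hd
    (by
      filter_upwards [hZae] with x hx hxB
      rw [Metric.mem_ball, dist_eq_norm] at hxB
      exact hlow x hx hxB) hWm (hWs.trans (Metric.ball_subset_ball (eps_rad hρ n)))
    (by
      filter_upwards [hZae] with x hx hxB
      exact hWk x hx hxB) hmW hv1 (hv2.trans_le (rad_succ hρ n))
  refine le_trans ?_ h
  have e1 : (ρ/2)^γ ≤ (rad ρ n / 2)^γ := by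
    apply Real.rpow_le_rpow (by positivity) _ h0
    have := rad_ge' hρ n
    linarith
  have e2 : ((3/4:ℝ)^4)^n ≤ (3/4:ℝ)^n := by
    apply pow_le_pow_left₀ (by positivity)
    norm_num
  calc (ρ / 2) ^ γ * c_b * m * (π / 16) * ((3/4:ℝ)^4) ^ n * (c ^ 2 * d)
      = (ρ / 2) ^ γ * (((3/4:ℝ)^4) ^ n * (c_b * m * (π / 16) * (c ^ 2 * d))) := by ring
    _ ≤ (rad ρ n / 2) ^ γ * ((3/4:ℝ)^n * (c_b * m * (π / 16) * (c ^ 2 * d))) := by gcongr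
    _ = _ := by unfold epsn; ring

lemma stage1 (h0 : 0 ≤ γ) (h2 : γ ≤ 2) (hb : GradCutoff b)
    {c_b : ℝ} (hc_b : 0 < c_b) (hH2 : ∀ θ ∈ Icc (π/4) (3*π/4), c_b ≤ b (Real.cos θ))
    (hf : IsFDSolution γ b f₀ f) {Z : Set R3} (hZ : KeyProp γ b f₀ f Z) {v0 : R3} {ρ τ0 τ T c0 : ℝ}
    (hρ : 0 < ρ) (hτ0 : 0 ≤ τ0) (hτ : 0 < τ) (hc0 : 0 < c0)
    (hbase : ∀ i, ∀ v, v ∉ Z → ‖v - v0‖ < 2 * ρ → ∀ t ∈ Icc τ0 T, c0 ≤ Fs f i t v) :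
    ∃ x : ℝ, 0 < x ∧ x ≤ 1 ∧ ∀ n : ℕ, ∀ i, ∀ v, v ∉ Z → ‖v - v0‖ < √2 ^ n * ρ →
      ∀ t ∈ Icc (τ0 + τ) T, x ^ (3 ^ n) ≤ Fs f i t v := by
  have hr0 : rad ρ 0 = 2 * ρ := by unfold rad; norm_num; ring
  set m : ℝ := (ρ / 64)^3 * (π * 4 / 3) with hm
  have hmp : 0 < m := by positivity
  obtain ⟨x, hx, hx1, hxx⟩ := iter hb hf hZ (fun _ => True) (e := 3) (by norm_num) (v0 := v0) (ρ := ρ)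
    (κ0 := (ρ / 2) ^ γ * c_b * m * (π / 16)) (τ0 := τ0) (τ := τ) (T := T) (c0 := c0) hρ (by positivity)
    hτ0 hτ hc0 (by
      intro t ht n c hc hl i _ v hv1 hv2
      have := gainW h0 h2 hb hc_b hH2 hf hZ.1 hρ ht n hc hc hmp.le i (hl i trivial)
        (W := Metric.ball v0 (ρ / 64)) measurableSet_ball subset_rfl (by
          intro x hx hxW
          refine hl (!i) trivial x hx ?_
          rw [Metric.mem_ball, dist_eq_norm] at hxW
          have := rad_ge' hρ n
          linarith) (by rw [vol_ball _ (by positivity)]) hv1 hv2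
      rwa [← pow_succ] at this)
    (by
      intro i _ v hv hvn t ht
      rw [hr0] at hvn
      exact hbase i v hv hvn t ht)
  exact ⟨x, hx, hx1, fun n i v hv hvn t ht => hxx n i trivial v hv (hvn.trans (rad_mono hρ n)) t ht⟩

lemma half_vol (hf : IsFDSolution γ b f₀ f) {v0 : R3} {R t : ℝ} (ht : 0 ≤ t) (hR : 0 ≤ R)
    (hbig : 4 * massM f₀ ≤ R ^ 3 * (π * 4 / 3)) :
    ENNReal.ofReal (R ^ 3 * (π * 4 / 3) / 2) ≤ volume (Metric.ball v0 R ∩ {w | f t w ≤ 1/2}) := by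
  set V : ℝ := R ^ 3 * (π * 4 / 3) with hV
  have hmeas : MeasurableSet {w : R3 | f t w ≤ 1/2} := measurableSet_le (hf.measurable t) measurable_const
  have h1 : volume (Metric.ball v0 R \ {w | f t w ≤ 1/2}) ≤ ENNReal.ofReal (V / 2) := by
    have hM : ∫ w, f t w ≤ massM f₀ := by
      rw [hf.mass t ht]
      unfold massM
      have : 0 ≤ ∫ v : R3, f₀ v * ‖v‖^2 := by
        rw [← hf.energy t ht]
        exact integral_nonneg (fun v => mul_nonneg (hf.nonneg t ht v) (by positivity))
      linarith
    have h2 := mul_meas_ge_le_integral_of_nonneg (μ := volume)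
      (Filter.Eventually.of_forall (hf.nonneg t ht)) (sol_integrable hf ht) (1/2)
    have hfin : volume {w : R3 | 1/2 ≤ f t w} ≠ ⊤ :=
      ((sol_integrable hf ht).measure_ge_lt_top (by norm_num)).ne
    have h3 : volume {w : R3 | 1/2 ≤ f t w} ≤ ENNReal.ofReal (V / 2) := by
      rw [← ENNReal.ofReal_toReal hfin]
      apply ENNReal.ofReal_le_ofReal
      have : (volume {w : R3 | 1/2 ≤ f t w}).toReal = volume.real {w : R3 | 1/2 ≤ f t w} := rfl
      rw [this]
      linarith
    refine (measure_mono ?_).trans h3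
    rintro w ⟨_, hw⟩
    have : ¬ (f t w ≤ 1/2) := hw
    exact (not_le.mp this).le
  have h5 := measure_inter_add_sdiff (μ := volume) (Metric.ball v0 R) hmeas
  rw [vol_ball v0 hR] at h5
  have h6 : ENNReal.ofReal (V / 2) + ENNReal.ofReal (V / 2) ≤
      volume (Metric.ball v0 R ∩ {w | f t w ≤ 1/2}) + ENNReal.ofReal (V / 2) := by
    rw [← ENNReal.ofReal_add (by positivity) (by positivity), add_halves, ← h5]
    gcongr
  exact (ENNReal.add_le_add_iff_right ENNReal.ofReal_ne_top).mp h6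

lemma stage2 (h0 : 0 ≤ γ) (h2 : γ ≤ 2) (hb : GradCutoff b)
    {c_b : ℝ} (hc_b : 0 < c_b) (hH2 : ∀ θ ∈ Icc (π/4) (3*π/4), c_b ≤ b (Real.cos θ))
    (hf : IsFDSolution γ b f₀ f) {Z : Set R3} (hZ : KeyProp γ b f₀ f Z) {v0 : R3} {ρ τ0 τ T c0 : ℝ}
    (hρ : 0 < ρ) (hbig : 4 * massM f₀ ≤ (ρ / 64) ^ 3 * (π * 4 / 3))
    (hτ0 : 0 ≤ τ0) (hτ : 0 < τ) (hc0 : 0 < c0)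
    (hbase : ∀ v, v ∉ Z → ‖v - v0‖ < 2 * ρ → ∀ t ∈ Icc τ0 T, c0 ≤ Fs f true t v) :
    ∃ x : ℝ, 0 < x ∧ x ≤ 1 ∧ ∀ n : ℕ, ∀ v, v ∉ Z → ‖v - v0‖ < √2 ^ n * ρ →
      ∀ t ∈ Icc (τ0 + τ) T, x ^ (2 ^ n) ≤ Fs f true t v := by
  have hr0 : rad ρ 0 = 2 * ρ := by unfold rad; norm_num; ring
  set m : ℝ := (ρ / 64)^3 * (π * 4 / 3) / 2 with hm
  have hmp : 0 < m := by positivity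
  obtain ⟨x, hx, hx1, hxx⟩ := iter hb hf hZ (fun i => i = true) (e := 2) (by norm_num) (v0 := v0) (ρ := ρ)
    (κ0 := (ρ / 2) ^ γ * c_b * m * (π / 16) / 2) (τ0 := τ0) (τ := τ) (T := T) (c0 := c0) hρ (by positivity)
    hτ0 hτ hc0 (by
      rintro t ht n c hc hl i rfl v hv1 hv2
      have := gainW h0 h2 hb hc_b hH2 hf hZ.1 hρ ht n hc (d := 1/2) (by norm_num) hmp.le true (hl true rfl)
        (W := Metric.ball v0 (ρ / 64) ∩ {w | f t w ≤ 1/2})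
        (measurableSet_ball.inter (measurableSet_le (hf.measurable t) measurable_const))
        inter_subset_left (by
          intro x hx hxW
          have h3 : f t x ≤ 1/2 := hxW.2
          show 1/2 ≤ 1 - f t x
          linarith) (half_vol hf ht (by positivity) hbig) hv1 hv2
      refine le_trans (le_of_eq ?_) this
      ring)
    (by
      rintro i rfl v hv hvn t ht
      rw [hr0] at hvn
      exact hbase v hv hvn t ht)
  exact ⟨x, hx, hx1, fun n v hv hvn t ht => hxx n true rfl v hv (hvn.trans (rad_mono hρ n)) t ht⟩

end phases2

lemma choose_n {e : ℕ} (he : 1 ≤ e) {ρ d : ℝ} (hρ : 0 < ρ) :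
    ∃ n : ℕ, d < √2 ^ n * ρ ∧ (e:ℝ) ^ n ≤ e * (1 + (d / ρ) ^ (2 * Real.log e / Real.log 2)) ∨ d < 0 := by
  by_cases hd : d < 0
  · exact ⟨0, Or.inr hd⟩
  rw [not_lt] at hd
  have hs : 1 < √2 := by linarith [sqrt2_ge]
  have hex : ∃ n : ℕ, d < √2 ^ n * ρ := by
    obtain ⟨n, hn⟩ := pow_unbounded_of_one_lt (d / ρ) hs
    exact ⟨n, by rwa [div_lt_iff₀ hρ] at hn⟩
  classical
  have he' : (1:ℝ) ≤ e := by exact_mod_cast he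
  refine ⟨Nat.find hex, Or.inl ⟨Nat.find_spec hex, ?_⟩⟩
  have hp0 : 0 ≤ (d / ρ) ^ (2 * Real.log e / Real.log 2) := by positivity
  rcases hN : Nat.find hex with _ | k
  · rw [pow_zero]
    nlinarith
  · have hk : ¬ (d < √2 ^ k * ρ) := Nat.find_min hex (by omega)
    rw [not_lt, ← le_div_iff₀ hρ] at hk
    have hlog : 0 ≤ Real.log e := Real.log_nonneg he'
    have hl2 : 0 < Real.log 2 := Real.log_pos (by norm_num)
    have h1 : (√2 ^ k) ^ (2 * Real.log e / Real.log 2) ≤ (d / ρ) ^ (2 * Real.log e / Real.log 2) :=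
      Real.rpow_le_rpow (by positivity) hk (by positivity)
    have h2 : (√2 ^ k) ^ (2 * Real.log e / Real.log 2) = (e:ℝ) ^ k := by
      rw [Real.rpow_def_of_pos (by positivity), Real.log_pow, Real.log_sqrt (by norm_num),
        ← Real.exp_log (show (0:ℝ) < e by linarith), ← Real.exp_nat_mul, Real.exp_log (by linarith)]
      congr 1
      field_simp
    rw [h2] at h1
    rw [pow_succ]
    nlinarith

lemma final_bound {e : ℕ} (he : 2 ≤ e) {ρ x : ℝ} (hρ : 0 < ρ) (hx : 0 < x) (hx1 : x ≤ 1) (v0 : R3) :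
    ∃ m M : ℝ, 0 < m ∧ 0 ≤ M ∧ ∀ v : R3, ∃ n : ℕ, ‖v - v0‖ < √2 ^ n * ρ ∧
      m * exp (-M * ‖v‖ ^ (2 * Real.log e / Real.log 2)) ≤ x ^ (e ^ n) := by
  set p : ℝ := 2 * Real.log e / Real.log 2 with hp
  have he' : (2:ℝ) ≤ e := by exact_mod_cast he
  have hl2 : 0 < Real.log 2 := Real.log_pos (by norm_num)
  have hlog : 0 ≤ Real.log e := Real.log_nonneg (by linarith)
  have hp0 : 0 ≤ p := by positivity
  set L : ℝ := -Real.log x with hL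
  have hL0 : 0 ≤ L := by have := Real.log_nonpos hx.le hx1; linarith
  set K : ℝ := (2 / ρ) ^ p with hK
  have hK0 : 0 ≤ K := by positivity
  refine ⟨exp (-(L * (e * (1 + K * ‖v0‖ ^ p)))), L * (e * K), exp_pos _, by positivity, ?_⟩
  intro v
  obtain ⟨n, hn⟩ := choose_n (e := e) (d := ‖v - v0‖) (by omega) hρ
  rcases hn with ⟨hn1, hn2⟩ | hn
  swap
  · exact absurd (norm_nonneg (v - v0)) (not_le.mpr hn)
  refine ⟨n, hn1, ?_⟩
  rw [← hp] at hn2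
  have h1 : (‖v - v0‖ / ρ) ^ p ≤ K * (‖v‖ ^ p + ‖v0‖ ^ p) := by
    have a1 : ‖v - v0‖ ≤ 2 * max ‖v‖ ‖v0‖ := by
      have := norm_sub_le v v0
      have := le_max_left ‖v‖ ‖v0‖
      have := le_max_right ‖v‖ ‖v0‖
      linarith
    calc (‖v - v0‖ / ρ) ^ p ≤ ((2 / ρ) * max ‖v‖ ‖v0‖) ^ p := by
          apply Real.rpow_le_rpow (by positivity) _ hp0
          rw [div_mul_eq_mul_div]
          gcongr
      _ = K * (max ‖v‖ ‖v0‖) ^ p := Real.mul_rpow (by positivity) (by positivity)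
      _ ≤ K * (‖v‖ ^ p + ‖v0‖ ^ p) := by
          apply mul_le_mul_of_nonneg_left _ hK0
          rcases le_total ‖v‖ ‖v0‖ with h | h
          · rw [max_eq_right h]
            have : 0 ≤ ‖v‖ ^ p := by positivity
            linarith
          · rw [max_eq_left h]
            have : 0 ≤ ‖v0‖ ^ p := by positivity
            linarith
  have h2 : x ^ (e ^ n) = exp (-(L * (e:ℝ) ^ n)) := by
    rw [hL, ← Real.exp_log (show 0 < x ^ (e^n) by positivity), Real.log_pow]
    push_cast
    congr 1
    ring
  rw [h2, ← Real.exp_add]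
  apply exp_le_exp.mpr
  have h3 : (e:ℝ) ^ n ≤ e * (1 + K * (‖v‖ ^ p + ‖v0‖ ^ p)) := by
    refine hn2.trans ?_
    gcongr
  have h4 := mul_le_mul_of_nonneg_left h3 hL0
  linarith


lemma window {γ : ℝ} {b : ℝ → ℝ} {f₀ : R3 → ℝ} {f : ℝ → R3 → ℝ}
    (h0 : 0 ≤ γ) (h2 : γ ≤ 2) (hb : GradCutoff b)
    {c_b : ℝ} (hc_b : 0 < c_b) (hH2 : ∀ θ ∈ Icc (π/4) (3*π/4), c_b ≤ b (Real.cos θ))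
    (hf : IsFDSolution γ b f₀ f) (hS : 0 < entropy f₀) {Z : Set R3} (hZ : KeyProp γ b f₀ f Z)
    {τ : ℝ} (hτ : 0 < τ) (T : ℝ) :
    ∃ m M : ℝ, 0 < m ∧ 0 ≤ M ∧ ∀ v, v ∉ Z → ∀ t ∈ Icc (τ + τ + τ) T,
      m * exp (-M * ‖v‖ ^ 2) ≤ f t v ∧
      m * exp (-M * ‖v‖ ^ (2 * Real.log 3 / Real.log 2)) ≤ 1 - f t v := by
  obtain ⟨v0, r, hr, hA⟩ := phaseA h0 h2 hb hc_b hH2 hf hS hZ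
  obtain ⟨c, hc, hcc⟩ := hA τ T hτ
  obtain ⟨x, hx, hx1, hxx⟩ := stage1 h0 h2 hb hc_b hH2 hf hZ (v0 := v0) (ρ := r / 2) (τ0 := τ)
    (τ := τ) (T := T) (c0 := c) (by positivity) hτ.le hτ hc (by
      intro i v hv hvn t ht
      exact hcc i v hv (by linarith) t ht)
  obtain ⟨m1, M1, hm1, hM1, hb1⟩ := final_bound (e := 3) (by norm_num) (half_pos hr) hx hx1 v0
  have hmass := massM_nonneg hf
  set R : ℝ := 64 * (1 + massM f₀) with hR
  have hRp : 0 < R := by positivity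
  have hbig : 4 * massM f₀ ≤ (R / 64) ^ 3 * (π * 4 / 3) := by
    have e1 : R / 64 = 1 + massM f₀ := by rw [hR]; ring
    rw [e1]
    have hpi : 3 < π := pi_gt_three
    have e2 : 1 + massM f₀ ≤ (1 + massM f₀) ^ 3 := le_self_pow₀ (by linarith) (by norm_num)
    nlinarith
  obtain ⟨n, hn⟩ := pow_unbounded_of_one_lt (2 * R / (r / 2)) (show 1 < √2 by linarith [sqrt2_ge])
  rw [div_lt_iff₀ (by positivity)] at hn
  obtain ⟨y, hy, hy1, hyy⟩ := stage2 h0 h2 hb hc_b hH2 hf hZ (v0 := v0) (ρ := R) (τ0 := τ + τ)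
    (τ := τ) (T := T) (c0 := x ^ (3 ^ n)) hRp hbig (by positivity) hτ (by positivity) (by
      intro v hv hvn t ht
      exact hxx n true v hv (by linarith) t ht)
  obtain ⟨m2, M2', hm2, hM2, hb2⟩ := final_bound (e := 2) (by norm_num) hRp hy hy1 v0
  refine ⟨min m1 m2, max M1 M2', lt_min hm1 hm2, le_max_of_le_left hM1, ?_⟩
  intro v hv t ht
  constructor
  · obtain ⟨k, hk1, hk2⟩ := hb2 v
    refine le_trans (le_trans ?_ hk2) (hyy k v hv hk1 t ht)
    have hl2 : Real.log 2 ≠ 0 := (Real.log_pos (by norm_num)).ne'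
    have e1 : ‖v‖ ^ (2 * Real.log ((2:ℕ):ℝ) / Real.log 2) = ‖v‖ ^ 2 := by
      push_cast
      rw [mul_div_assoc, div_self hl2, mul_one, Real.rpow_two]
    rw [e1]
    refine mul_le_mul (min_le_right _ _) (exp_le_exp.mpr ?_) (exp_pos _).le hm2.le
    have := mul_le_mul_of_nonneg_right (le_max_right M1 M2') (sq_nonneg ‖v‖)
    linarith
  · obtain ⟨k, hk1, hk2⟩ := hb1 v
    have h3 := hxx k false v hv hk1 t ⟨by have := ht.1; linarith, ht.2⟩
    refine le_trans (le_trans ?_ hk2) h3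
    push_cast
    refine mul_le_mul (min_le_left _ _) (exp_le_exp.mpr ?_) (exp_pos _).le hm1.le
    have hp : 0 ≤ ‖v‖ ^ (2 * Real.log 3 / Real.log 2) := by positivity
    have := mul_le_mul_of_nonneg_right (le_max_left M1 M2') hp
    linarith

lemma finite_min (m : ℕ → ℝ) (hm : ∀ n, 0 < m n) (K : ℕ) : ∃ a : ℝ, 0 < a ∧ ∀ n ≤ K, a ≤ m n := by
  induction K with
  | zero =>
    refine ⟨m 0, hm 0, ?_⟩
    intro n hn
    rw [Nat.le_zero.mp hn]
  | succ K ih =>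
    obtain ⟨a, ha, h⟩ := ih
    refine ⟨min a (m (K+1)), lt_min ha (hm _), ?_⟩
    intro n hn
    rcases Nat.le_succ_iff.mp hn with h1 | h1
    · exact (min_le_left _ _).trans (h n h1)
    · rw [h1]
      exact min_le_right _ _

lemma finite_max (m : ℕ → ℝ) (K : ℕ) : ∃ a : ℝ, ∀ n ≤ K, m n ≤ a := by
  induction K with
  | zero =>
    refine ⟨m 0, ?_⟩
    intro n hn
    rw [Nat.le_zero.mp hn]
  | succ K ih =>
    obtain ⟨a, h⟩ := ih
    refine ⟨max a (m (K+1)), ?_⟩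
    intro n hn
    rcases Nat.le_succ_iff.mp hn with h1 | h1
    · exact (h n h1).trans (le_max_left _ _)
    · rw [h1]
      exact le_max_right _ _


/-- Gaussian lower bound (and exponential upper bound) for solutions of the
Boltzmann–Fermi–Dirac equation with `S(f₀) > 0`. -/
theorem gaussian_lower_bound_BFD
    (γ : ℝ) (hγ₀ : 0 ≤ γ) (hγ₂ : γ ≤ 2) (b : ℝ → ℝ) (hb : GradCutoff b)
    (c_b : ℝ) (hc_b : 0 < c_b)
    (hH2 : ∀ θ ∈ Icc (π/4) (3*π/4), c_b ≤ b (Real.cos θ))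
    (f₀ : R3 → ℝ) (hf₀meas : Measurable f₀)
    (hf₀bd : ∀ᵐ v : R3 ∂volume, 0 ≤ f₀ v ∧ f₀ v ≤ 1) (hf₀L12 : MemL1s 2 f₀)
    (f : ℝ → R3 → ℝ) (hf : IsFDSolution γ b f₀ f)
    (hS : 0 < entropy f₀) :
    ∃ C₁ C₂ : ℝ → ℝ,
      (∀ t : ℝ, 0 < t → 0 < C₁ t) ∧
      (∀ t : ℝ, 0 < t → ∀ᵐ v : R3 ∂volume,
        C₁ t * Real.exp (-(C₂ t) * ‖v‖ ^ 2) ≤ f t v ∧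
        f t v ≤ 1 - C₁ t * Real.exp (-(C₂ t) * ‖v‖ ^ (2 * Real.log 3 / Real.log 2))) ∧
      (∀ T : ℝ, 1 ≤ T → ∃ m > (0:ℝ), ∀ t ∈ Icc T⁻¹ T, m ≤ C₁ t) ∧
      (∀ T : ℝ, 1 ≤ T → ∃ M : ℝ, ∀ t ∈ Icc T⁻¹ T, C₂ t ≤ M) := by
  obtain ⟨Z, hZ⟩ := sol_key hγ₀ hγ₂ hb hf
  have hK : KeyProp γ b f₀ f Z := hZ
  have hZae : ∀ᵐ v : R3, v ∉ Z := measure_eq_zero_iff_ae_notMem.mp hK.1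
  have hw : ∀ n : ℕ, ∃ m M : ℝ, 0 < m ∧ 0 ≤ M ∧ ∀ v, v ∉ Z → ∀ t ∈ Icc (1 / ((n:ℝ) + 1)) ((n:ℝ) + 1),
      m * Real.exp (-M * ‖v‖ ^ 2) ≤ f t v ∧
      m * Real.exp (-M * ‖v‖ ^ (2 * Real.log 3 / Real.log 2)) ≤ 1 - f t v := by
    intro n
    obtain ⟨m, M, hm, hM, h⟩ := window hγ₀ hγ₂ hb hc_b hH2 hf hS hK
      (τ := 1 / ((n:ℝ) + 1) / 3) (by positivity) ((n:ℝ) + 1)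
    refine ⟨m, M, hm, hM, ?_⟩
    intro v hv t ht
    refine h v hv t ⟨?_, ht.2⟩
    have := ht.1
    linarith
  choose m M hm hM h using hw
  have hN : ∀ t : ℝ, 0 < t → t ∈ Icc (1 / ((⌈max t t⁻¹⌉₊:ℝ) + 1)) ((⌈max t t⁻¹⌉₊:ℝ) + 1) := by
    intro t ht
    have h1 : max t t⁻¹ ≤ (⌈max t t⁻¹⌉₊:ℝ) := Nat.le_ceil _
    have h2 := (le_max_left t t⁻¹).trans h1
    have h3 := (le_max_right t t⁻¹).trans h1
    refine ⟨?_, by linarith⟩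
    rw [div_le_iff₀ (by positivity)]
    have h4 : t * t⁻¹ = 1 := mul_inv_cancel₀ ht.ne'
    have h5 := mul_le_mul_of_nonneg_left h3 ht.le
    linarith
  have hNT : ∀ T : ℝ, 1 ≤ T → ∀ t ∈ Icc T⁻¹ T, ⌈max t t⁻¹⌉₊ ≤ ⌈T⌉₊ := by
    intro T hT t ht
    have hT0 : 0 < T := by linarith
    apply Nat.ceil_mono
    refine max_le ht.2 ?_
    exact inv_le_of_inv_le₀ hT0 ht.1
  refine ⟨fun t => m ⌈max t t⁻¹⌉₊, fun t => M ⌈max t t⁻¹⌉₊, fun t _ => hm _, ?_, ?_, ?_⟩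
  · intro t ht
    filter_upwards [hZae] with v hv
    obtain ⟨a1, a2⟩ := h _ v hv t (hN t ht)
    exact ⟨a1, by linarith⟩
  · intro T hT
    obtain ⟨a, ha, hle⟩ := finite_min m hm ⌈T⌉₊
    exact ⟨a, ha, fun t ht => hle _ (hNT T hT t ht)⟩
  · intro T hT
    obtain ⟨a, hle⟩ := finite_max M ⌈T⌉₊
    exact ⟨a, fun t ht => hle _ (hNT T hT t ht)⟩
end
end

section
/- Let the unit cube [0,1]³ ⊂ ℝ³ be partitioned into the 13³ axis-parallel closed subcubes of side length 1/13 whose centers are the points ((2i+1)/26, (2j+1)/26, (2k+1)/26) for 0 ≤ i,j,k ≤ 12. Then for every collection E of at least 12³ + 100 of these subcubes, there exist two subcubes in E whose centers are at Euclidean distance at least 10/13. -/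
noncomputable section

open MeasureTheory Real Set
open scoped RealInnerProductSpace

/-- The center of the subcube of the unit cube indexed by `(i, j, k) ∈ {0,…,12}³`. -/
def cubeCenter (p : Fin 13 × Fin 13 × Fin 13) : R3 :=
  (EuclideanSpace.equiv (Fin 3) ℝ).symm
    ![(2 * ((p.1 : ℕ) : ℝ) + 1) / 26, (2 * ((p.2.1 : ℕ) : ℝ) + 1) / 26,
      (2 * ((p.2.2 : ℕ) : ℝ) + 1) / 26]

/-- Among any `12³ + 100` of the `13³` subcubes of the unit cube, two have
centers at distance at least `10/13`. -/
theorem subcube_separation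
    (E : Finset (Fin 13 × Fin 13 × Fin 13)) (hE : 12 ^ 3 + 100 ≤ E.card) :
    ∃ p ∈ E, ∃ q ∈ E, (10 : ℝ) / 13 ≤ dist (cubeCenter p) (cubeCenter q) := by
  have hc : (Finset.range 10 ×ˢ (Finset.univ : Finset (Fin 13 × Fin 13))).card < E.card := by
    simp only [Finset.card_product, Finset.card_range, Finset.card_univ, Fintype.card_prod,
      Fintype.card_fin]
    omega
  obtain ⟨p, hp, q, hq, hne, heq⟩ := Finset.exists_ne_map_eq_of_card_lt_of_maps_to hc
    (f := fun p : Fin 13 × Fin 13 × Fin 13 => ((p.1 : ℕ) % 10, p.2))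
    (by
      intro p _
      simp only [Finset.coe_product, Set.mem_prod, Finset.mem_coe, Finset.mem_range,
        Finset.mem_univ, and_true]
      omega)
  refine ⟨p, hp, q, hq, ?_⟩
  obtain ⟨a, b⟩ := p
  obtain ⟨c, d⟩ := q
  simp only [Prod.mk.injEq] at heq
  obtain ⟨h1, rfl⟩ := heq
  have hac : (a : ℕ) ≠ c := fun h => hne (by rw [Fin.ext h])
  have h2 : (a : ℕ) = c + 10 ∨ (c : ℕ) = a + 10 := by omega
  have h3 : (100 : ℝ) / 169 =
      ((2 * ((a : ℕ) : ℝ) + 1) / 26 - (2 * ((c : ℕ) : ℝ) + 1) / 26) ^ 2 := by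
    rcases h2 with h | h <;> rw [h] <;> push_cast <;> ring
  rw [EuclideanSpace.dist_eq]
  apply Real.le_sqrt_of_sq_le
  simp only [Fin.sum_univ_three, Real.dist_eq, sq_abs]
  simp [cubeCenter]
  linarith
end
end

section
/- Let a ∈ ℝ³ with a ≠ 0, and let r ≥ 0 satisfy r ≤ |a|/4. Then there exists a Borel set C_{a,r} ⊂ ℝ³ such that: (i) every nonzero x ∈ ℝ³ for which the plane {y ∈ ℝ³ : y·x = 0} intersects the closed ball {y ∈ ℝ³ : |a+y| ≤ r} belongs to C_{a,r}; and (ii) for every nonnegative measurable radial function f on ℝ³ (i.e., f(x) depends only on |x|) and every R > 0, ∫_{{|x| ≤ R} ∩ C_{a,r}} f(x) dx ≤ (5π/2)·(r/|a|)·∫_{{|x| ≤ R}} f(x) dx. -/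
noncomputable section

open MeasureTheory Real Set
open scoped RealInnerProductSpace

open scoped Pointwise in
lemma toSphere_cone_le (a : R3) (ha : a ≠ 0) (r : ℝ) (hr₀ : 0 ≤ r) :
    (volume : Measure R3).toSphere ((↑) ⁻¹' {x : R3 | |⟪a, x⟫| ≤ r * ‖x‖} : Set S2) ≤
      3 * ENNReal.ofReal (8 * (r / ‖a‖)) := by
  have hna : 0 < ‖a‖ := norm_pos_iff.mpr ha
  have hmC : MeasurableSet {x : R3 | |⟪a, x⟫| ≤ r * ‖x‖} :=
    (isClosed_le (by fun_prop) (by fun_prop)).measurableSet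
  rw [Measure.toSphere_apply' _ (measurable_subtype_coe hmC)]
  have hd : Module.finrank ℝ R3 = 3 := by simp
  rw [hd]
  refine mul_le_mul_right ?_ _
  -- an orthonormal basis starting at `a / ‖a‖`
  have ho : Orthonormal ℝ (({0} : Set (Fin 3)).domRestrict (fun _ : Fin 3 => ‖a‖⁻¹ • a)) := by
    constructor
    · intro i
      simp [norm_smul, hna.ne']
    · intro i j hij
      exact absurd (Subsingleton.elim i j) hij
  obtain ⟨b, hb⟩ := ho.exists_orthonormalBasis_extension_of_card_eq (by simp)
  have hb0 : b 0 = ‖a‖⁻¹ • a := hb 0 (by simp)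
  have hmp : MeasurePreserving (fun x : R3 => (WithLp.ofLp (b.repr x) : Fin 3 → ℝ)) :=
    (PiLp.volume_preserving_ofLp (Fin 3)).comp b.measurePreserving_repr
  let w : Fin 3 → ℝ := ![r / ‖a‖, 1, 1]
  have hbox : volume (Icc (-w) w) = ENNReal.ofReal (8 * (r / ‖a‖)) := by
    have h0 : 0 ≤ r / ‖a‖ := by positivity
    rw [Real.volume_Icc_pi, Fin.prod_univ_three, ← ENNReal.ofReal_mul (by simp [w]; linarith),
      ← ENNReal.ofReal_mul (by simp [w]; linarith)]
    congr 1
    simp [w]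
    ring
  rw [← hbox, ← hmp.measure_preimage measurableSet_Icc.nullMeasurableSet]
  refine measure_mono ?_
  rintro _ ⟨t, ht, _, ⟨σ, hσ, rfl⟩, rfl⟩
  have hσ1 : ‖(σ : R3)‖ = 1 := by simp
  have hin : ∀ i, |b.repr (t • (σ : R3)) i| ≤ 1 := by
    intro i
    calc |b.repr (t • (σ : R3)) i| ≤ ‖b.repr (t • (σ : R3))‖ :=
          PiLp.norm_apply_le (b.repr (t • (σ : R3))) i
      _ ≤ 1 := by
          rw [LinearIsometryEquiv.norm_map, norm_smul, hσ1, Real.norm_eq_abs, abs_of_pos ht.1]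
          linarith [ht.2]
  have h0 : |b.repr (t • (σ : R3)) 0| ≤ r / ‖a‖ := by
    have hσ' : |⟪a, (σ : R3)⟫| ≤ r * ‖(σ : R3)‖ := hσ
    rw [hσ1, mul_one] at hσ'
    rw [OrthonormalBasis.repr_apply_apply, hb0, inner_smul_left, inner_smul_right, abs_mul, abs_mul,
      abs_of_pos ht.1]
    simp only [map_inv₀, conj_trivial, abs_inv, abs_norm]
    rw [div_eq_inv_mul]
    refine mul_le_mul_of_nonneg_left ?_ (by positivity)
    nlinarith [ht.1, ht.2, abs_nonneg ⟪a, (σ : R3)⟫]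
  have key : ∀ i, |b.repr (t • (σ : R3)) i| ≤ w i := by
    intro i
    fin_cases i
    · exact h0
    · exact hin 1
    · exact hin 2
  exact ⟨fun i => (abs_le.mp (key i)).1, fun i => (abs_le.mp (key i)).2⟩

lemma polar_cone (C : Set R3) (hC : MeasurableSet C)
    (hcone : ∀ t : ℝ, 0 < t → ∀ x : R3, t • x ∈ C ↔ x ∈ C) (h : ℝ → ENNReal) (hh : Measurable h) :
    ∫⁻ x in C, h ‖x‖ = (volume : Measure R3).toSphere ((↑) ⁻¹' C : Set S2) *
      ∫⁻ ρ : Ioi (0:ℝ), h ρ ∂(Measure.volumeIoiPow (Module.finrank ℝ R3 - 1)) := by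
  have hT : MeasurableSet ((↑) ⁻¹' C : Set S2) := measurable_subtype_coe hC
  rw [← lintegral_indicator hC]
  calc ∫⁻ x, C.indicator (fun x => h ‖x‖) x
      = ∫⁻ x : ({(0:R3)}ᶜ : Set R3), C.indicator (fun x => h ‖x‖) x ∂((volume : Measure R3).comap Subtype.val) := by
        rw [lintegral_subtype_comap (measurableSet_singleton _).compl, restrict_compl_singleton]
    _ = ∫⁻ x : ({(0:R3)}ᶜ : Set R3), (fun p : S2 × Ioi (0:ℝ) =>
          ((↑) ⁻¹' C : Set S2).indicator 1 p.1 * h p.2) (homeomorphUnitSphereProd R3 x)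
            ∂((volume : Measure R3).comap Subtype.val) := by
        refine lintegral_congr fun x => ?_
        have hx : 0 < ‖(x : R3)‖ := norm_pos_iff.mpr x.2
        have h1 : ((homeomorphUnitSphereProd R3 x).1 : R3) ∈ C ↔ (x : R3) ∈ C := by
          rw [homeomorphUnitSphereProd_apply_fst_coe]
          exact hcone _ (inv_pos.mpr hx) _
        rw [homeomorphUnitSphereProd_apply_fst_coe] at h1
        by_cases hxC : (x : R3) ∈ C
        · simp [indicator, h1, hxC]
        · simp [indicator, h1, hxC]
    _ = ∫⁻ p : S2 × Ioi (0:ℝ), ((↑) ⁻¹' C : Set S2).indicator 1 p.1 * h p.2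
          ∂((volume : Measure R3).toSphere.prod
            (Measure.volumeIoiPow (Module.finrank ℝ R3 - 1))) :=
        (volume : Measure R3).measurePreserving_homeomorphUnitSphereProd.lintegral_comp_emb
          (Homeomorph.measurableEmbedding _) (fun p : S2 × Ioi (0:ℝ) =>
            ((↑) ⁻¹' C : Set S2).indicator 1 p.1 * h p.2)
    _ = _ := by
        rw [lintegral_prod_mul (f := ((↑) ⁻¹' C : Set S2).indicator 1)
          (g := fun ρ : Ioi (0:ℝ) => h ρ)
          (measurable_one.indicator hT).aemeasurable
          (hh.comp measurable_subtype_coe).aemeasurable, lintegral_indicator_one hT]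

/-- A conical set capturing the directions `x` whose orthogonal plane
meets the ball of radius `r` around `-a`, with a quantitative measure bound for radial
functions. -/
theorem plane_ball_intersection_cone
    (a : R3) (ha : a ≠ 0) (r : ℝ) (hr₀ : 0 ≤ r) (hr : r ≤ ‖a‖ / 4) :
    ∃ C : Set R3, MeasurableSet C ∧
      (∀ x : R3, x ≠ 0 → (∃ y : R3, ⟪y, x⟫ = (0:ℝ) ∧ ‖a + y‖ ≤ r) → x ∈ C) ∧
      (∀ f : R3 → ℝ, Measurable f → (∀ x : R3, 0 ≤ f x) →
        (∀ x y : R3, ‖x‖ = ‖y‖ → f x = f y) →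
        ∀ R : ℝ, 0 < R →
          (∫ x in Metric.closedBall (0:R3) R ∩ C, f x) ≤
            5 * π / 2 * (r / ‖a‖) * ∫ x in Metric.closedBall (0:R3) R, f x) := by
  have hna : 0 < ‖a‖ := norm_pos_iff.mpr ha
  let C : Set R3 := {x : R3 | |⟪a, x⟫| ≤ r * ‖x‖}
  have hmC : MeasurableSet C :=
    (isClosed_le (by fun_prop) (by fun_prop)).measurableSet
  refine ⟨C, hmC, ?_, ?_⟩
  · rintro x - ⟨y, hy, hay⟩
    change |⟪a, x⟫| ≤ r * ‖x‖
    have h1 : ⟪a, x⟫ = ⟪a + y, x⟫ := by rw [inner_add_left, hy, add_zero]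
    rw [h1]
    exact (abs_real_inner_le_norm _ _).trans (by gcongr)
  intro f hf hf0 hrad R hR
  let e : R3 := ‖a‖⁻¹ • a
  have he : ‖e‖ = 1 := by simp [e, norm_smul, hna.ne']
  let h : ℝ → ENNReal := (Iic R).indicator fun ρ => ENNReal.ofReal (f (ρ • e))
  have hh : Measurable h :=
    (Measurable.ennreal_ofReal (hf.comp (by fun_prop))).indicator measurableSet_Iic
  have hfe : ∀ x : R3, f (‖x‖ • e) = f x := fun x => hrad _ _ (by simp [norm_smul, he])
  have hcone : ∀ t : ℝ, 0 < t → ∀ x : R3, t • x ∈ C ↔ x ∈ C := by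
    intro t ht x
    change |⟪a, t • x⟫| ≤ r * ‖t • x‖ ↔ |⟪a, x⟫| ≤ r * ‖x‖
    rw [inner_smul_right, norm_smul, abs_mul, Real.norm_eq_abs, mul_left_comm]
    exact mul_le_mul_iff_right₀ (abs_pos.mpr ht.ne')
  have hmB : MeasurableSet (Metric.closedBall (0:R3) R) := Metric.isClosed_closedBall.measurableSet
  have hhx : (fun x : R3 => h ‖x‖) =
      (Metric.closedBall (0:R3) R).indicator fun x => ENNReal.ofReal (f x) := by
    funext x
    by_cases hx : ‖x‖ ≤ R
    · simp [h, indicator, hx, hfe]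
    · simp [h, indicator, hx]
  have conv : ∀ D : Set R3, MeasurableSet D →
      (∀ t : ℝ, 0 < t → ∀ x : R3, t • x ∈ D ↔ x ∈ D) →
      ∫ x in Metric.closedBall (0:R3) R ∩ D, f x =
        ((volume : Measure R3).toSphere ((↑) ⁻¹' D : Set S2)).toReal *
        (∫⁻ ρ : Ioi (0:ℝ), h ρ ∂(Measure.volumeIoiPow (Module.finrank ℝ R3 - 1))).toReal := by
    intro D hD hDc
    rw [integral_eq_lintegral_of_nonneg_ae (Filter.Eventually.of_forall hf0)
      hf.aestronglyMeasurable, ← ENNReal.toReal_mul, ← polar_cone D hD hDc h hh, hhx,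
      setLIntegral_indicator hmB]
  have hu := conv univ MeasurableSet.univ (by simp)
  rw [inter_univ] at hu
  rw [hu, conv C hmC hcone, ← mul_assoc]
  refine mul_le_mul_of_nonneg_right ?_ ENNReal.toReal_nonneg
  have h8 : 0 ≤ r / ‖a‖ := by positivity
  have hle := ENNReal.toReal_mono (by finiteness) (toSphere_cone_le a ha r hr₀)
  rw [ENNReal.toReal_mul, ENNReal.toReal_ofReal (by positivity)] at hle
  refine hle.trans ?_
  rw [preimage_univ, Measure.toSphere_apply_univ, EuclideanSpace.volume_ball_fin_three]
  have hd : Module.finrank ℝ R3 = 3 := by simp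
  rw [hd]
  simp only [ENNReal.ofReal_one, one_pow, one_mul, ENNReal.toReal_mul]
  rw [ENNReal.toReal_ofReal (by positivity)]
  simp
  have hp : 3 < π := Real.pi_gt_three
  have : (24:ℝ) ≤ 10 * π ^ 2 := by nlinarith
  nlinarith
end
end
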